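/- arXiv:1902.03822 — 4 statements merged into one kernel-verified Lean document; each statement's English description precedes it below -/
import Mathlib

section
/- The right-angled Artin group A(P₄) = Gp⟨a, b, c, d | ab = ba, bc = cb, cd = dc⟩ embeds into the one-relator group G = Gp⟨a, t | a(tat⁻¹) = (tat⁻¹)a⟩: there is an injective group homomorphism A(P₄) →* G sending a ↦ a, b ↦ tat⁻¹, c ↦ t²at⁻², d ↦ t³at⁻³ (where a, t denote the images in G of the two free generators). -/
/-- The set of commutator relators of the right-angled Artin group of a simple graph `Γ`. -/
def raagRels {V : Type} (Γ : SimpleGraph V) : Set (FreeGroup V) :=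
  {x | ∃ u v : V, Γ.Adj u v ∧
    x = FreeGroup.of u * FreeGroup.of v * (FreeGroup.of u)⁻¹ * (FreeGroup.of v)⁻¹}

/-- The path graph on four vertices `0 — 1 — 2 — 3`. -/
def P4 : SimpleGraph (Fin 4) := SimpleGraph.fromEdgeSet {s(0, 1), s(1, 2), s(2, 3)}

/-- The relator `a t a t⁻¹ a⁻¹ t a⁻¹ t⁻¹` (i.e. `a(tat⁻¹)=(tat⁻¹)a`), with `a = of 0`, `t = of 1`. -/
def oneRel : FreeGroup (Fin 2) :=
  FreeGroup.of 0 * FreeGroup.of 1 * FreeGroup.of 0 * (FreeGroup.of 1)⁻¹ *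
    (FreeGroup.of 0)⁻¹ * FreeGroup.of 1 * (FreeGroup.of 0)⁻¹ * (FreeGroup.of 1)⁻¹

/-- Homomorphisms out of a right-angled Artin group. -/
def raagLift {V : Type} {H : Type*} [Group H] (Γ : SimpleGraph V) (f : V → H)
    (h : ∀ u v, Γ.Adj u v → f u * f v = f v * f u) : PresentedGroup (raagRels Γ) →* H :=
  PresentedGroup.toGroup (f := f) (by
    rintro r ⟨u, v, huv, rfl⟩
    simp only [map_mul, map_inv, FreeGroup.lift_apply_of]
    rw [h u v huv]
    group)

theorem raagLift_of {V : Type} {H : Type*} [Group H] (Γ : SimpleGraph V) (f : V → H)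
    (h : ∀ u v, Γ.Adj u v → f u * f v = f v * f u) (v : V) :
    raagLift Γ f h (PresentedGroup.of v) = f v :=
  PresentedGroup.toGroup.of _

theorem raag_comm {V : Type} (Γ : SimpleGraph V) (u v : V) (huv : Γ.Adj u v) :
    (PresentedGroup.of u * PresentedGroup.of v : PresentedGroup (raagRels Γ)) =
      PresentedGroup.of v * PresentedGroup.of u := by
  have h : PresentedGroup.mk (raagRels Γ) (FreeGroup.of u * FreeGroup.of v *
      (FreeGroup.of u)⁻¹ * (FreeGroup.of v)⁻¹) = 1 :=
    PresentedGroup.one_of_mem ⟨u, v, huv, rfl⟩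
  simp only [map_mul, map_inv] at h
  rw [mul_inv_eq_one, mul_inv_eq_iff_eq_mul] at h
  exact h

/-- The path graph on three vertices. -/
def P3 : SimpleGraph (Fin 3) := SimpleGraph.fromEdgeSet {s(0, 1), s(1, 2)}

abbrev K4 := PresentedGroup (raagRels P4)
abbrev K3 := PresentedGroup (raagRels P3)

theorem P4_comm {H : Type*} [Group H] (f : Fin 4 → H) (h0 : f 0 * f 1 = f 1 * f 0)
    (h1 : f 1 * f 2 = f 2 * f 1) (h2 : f 2 * f 3 = f 3 * f 2) :
    ∀ u v, P4.Adj u v → f u * f v = f v * f u := by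
  intro u v huv
  simp only [P4, SimpleGraph.fromEdgeSet_adj, Set.mem_insert_iff, Set.mem_singleton_iff,
    Sym2.eq_iff] at huv
  rcases huv.1 with (⟨rfl, rfl⟩ | ⟨rfl, rfl⟩) | (⟨rfl, rfl⟩ | ⟨rfl, rfl⟩) |
    (⟨rfl, rfl⟩ | ⟨rfl, rfl⟩)
  all_goals first | assumption | (symm; assumption)

theorem P3_comm {H : Type*} [Group H] (f : Fin 3 → H) (h0 : f 0 * f 1 = f 1 * f 0)
    (h1 : f 1 * f 2 = f 2 * f 1) :
    ∀ u v, P3.Adj u v → f u * f v = f v * f u := by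
  intro u v huv
  simp only [P3, SimpleGraph.fromEdgeSet_adj, Set.mem_insert_iff, Set.mem_singleton_iff,
    Sym2.eq_iff] at huv
  rcases huv.1 with (⟨rfl, rfl⟩ | ⟨rfl, rfl⟩) | (⟨rfl, rfl⟩ | ⟨rfl, rfl⟩)
  all_goals first | assumption | (symm; assumption)

theorem K4_01 : (PresentedGroup.of 0 * PresentedGroup.of 1 : K4) =
    PresentedGroup.of 1 * PresentedGroup.of 0 := raag_comm _ _ _ (by simp [P4])
theorem K4_12 : (PresentedGroup.of 1 * PresentedGroup.of 2 : K4) =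
    PresentedGroup.of 2 * PresentedGroup.of 1 := raag_comm _ _ _ (by simp [P4])
theorem K4_23 : (PresentedGroup.of 2 * PresentedGroup.of 3 : K4) =
    PresentedGroup.of 3 * PresentedGroup.of 2 := raag_comm _ _ _ (by simp [P4])
theorem K3_01 : (PresentedGroup.of 0 * PresentedGroup.of 1 : K3) =
    PresentedGroup.of 1 * PresentedGroup.of 0 := raag_comm _ _ _ (by simp [P3])
theorem K3_12 : (PresentedGroup.of 1 * PresentedGroup.of 2 : K3) =
    PresentedGroup.of 2 * PresentedGroup.of 1 := raag_comm _ _ _ (by simp [P3])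

/-- The inclusion on the first three vertices. -/
def incl : K3 →* K4 :=
  raagLift P3 ![PresentedGroup.of 0, PresentedGroup.of 1, PresentedGroup.of 2]
    (P3_comm _ K4_01 K4_12)

/-- The inclusion on the last three vertices. -/
def shft : K3 →* K4 :=
  raagLift P3 ![PresentedGroup.of 1, PresentedGroup.of 2, PresentedGroup.of 3]
    (P3_comm _ K4_12 K4_23)

/-- Kill the last vertex. -/
def retrIncl : K4 →* K3 :=
  raagLift P4 ![PresentedGroup.of 0, PresentedGroup.of 1, PresentedGroup.of 2, 1]
    (P4_comm _ K3_01 K3_12 (by simp))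

/-- Kill the first vertex. -/
def retrShft : K4 →* K3 :=
  raagLift P4 ![1, PresentedGroup.of 0, PresentedGroup.of 1, PresentedGroup.of 2]
    (P4_comm _ (by simp) K3_01 K3_12)

theorem incl_injective : Function.Injective incl := by
  have h : retrIncl.comp incl = MonoidHom.id _ := by
    ext v
    fin_cases v <;> simp [incl, retrIncl, raagLift_of]
  exact Function.LeftInverse.injective (g := retrIncl) (fun x => DFunLike.congr_fun h x)

theorem shft_injective : Function.Injective shft := by
  have h : retrShft.comp shft = MonoidHom.id _ := by
    ext v
    fin_cases v <;> simp [shft, retrShft, raagLift_of]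
  exact Function.LeftInverse.injective (g := retrShft) (fun x => DFunLike.congr_fun h x)

/-- The isomorphism between the two associated subgroups. -/
noncomputable def assoc : incl.range ≃* shft.range :=
  (MonoidHom.ofInjective incl_injective).symm.trans (MonoidHom.ofInjective shft_injective)

abbrev E4 := HNNExtension K4 incl.range shft.range assoc

theorem E4_conj (x : K3) : (HNNExtension.t * HNNExtension.of (incl x) : E4) =
    HNNExtension.of (shft x) * HNNExtension.t := by
  have h := HNNExtension.t_mul_of (φ := assoc) (MonoidHom.ofInjective incl_injective x)
  have h2 : assoc (MonoidHom.ofInjective incl_injective x) =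
      MonoidHom.ofInjective shft_injective x := by
    simp only [assoc, MulEquiv.trans_apply, MulEquiv.symm_apply_apply]
  rw [h2] at h
  exact h

theorem E4_conj0 : (HNNExtension.t * HNNExtension.of (PresentedGroup.of 0) *
    (HNNExtension.t)⁻¹ : E4) = HNNExtension.of (PresentedGroup.of 1) := by
  rw [mul_inv_eq_iff_eq_mul]
  have h1 : incl (PresentedGroup.of 0) = PresentedGroup.of 0 := raagLift_of _ _ _ _
  have h2 : shft (PresentedGroup.of 0) = PresentedGroup.of 1 := raagLift_of _ _ _ _
  rw [← h1, ← h2]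
  exact E4_conj (PresentedGroup.of 0)
theorem E4_conj1 : (HNNExtension.t * HNNExtension.of (PresentedGroup.of 1) *
    (HNNExtension.t)⁻¹ : E4) = HNNExtension.of (PresentedGroup.of 2) := by
  rw [mul_inv_eq_iff_eq_mul]
  have h1 : incl (PresentedGroup.of 1) = PresentedGroup.of 1 := raagLift_of _ _ _ _
  have h2 : shft (PresentedGroup.of 1) = PresentedGroup.of 2 := raagLift_of _ _ _ _
  rw [← h1, ← h2]
  exact E4_conj (PresentedGroup.of 1)
theorem E4_conj2 : (HNNExtension.t * HNNExtension.of (PresentedGroup.of 2) *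
    (HNNExtension.t)⁻¹ : E4) = HNNExtension.of (PresentedGroup.of 3) := by
  rw [mul_inv_eq_iff_eq_mul]
  have h1 : incl (PresentedGroup.of 2) = PresentedGroup.of 2 := raagLift_of _ _ _ _
  have h2 : shft (PresentedGroup.of 2) = PresentedGroup.of 3 := raagLift_of _ _ _ _
  rw [← h1, ← h2]
  exact E4_conj (PresentedGroup.of 2)

abbrev G1 := PresentedGroup ({oneRel} : Set (FreeGroup (Fin 2)))

/-- The homomorphism from the one-relator group to the HNN extension. -/
noncomputable def toE4 : G1 →* E4 :=
  PresentedGroup.toGroup (f := ![HNNExtension.of (PresentedGroup.of 0), HNNExtension.t]) (by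
    rintro r rfl
    simp only [oneRel, map_mul, map_inv, FreeGroup.lift_apply_of, Matrix.cons_val_zero,
      Matrix.cons_val_one]
    have h := congrArg (HNNExtension.of (φ := assoc)) K4_01
    rw [map_mul, map_mul, ← E4_conj0] at h
    generalize (HNNExtension.of (PresentedGroup.of 0) : E4) = a at h
    generalize (HNNExtension.t : E4) = t at h
    calc a * t * a * t⁻¹ * a⁻¹ * t * a⁻¹ * t⁻¹
        = (a * (t * a * t⁻¹)) * (t * a * t⁻¹ * a)⁻¹ := by group
      _ = 1 := by rw [h]; group)

theorem toE4_0 : toE4 (PresentedGroup.of 0) = HNNExtension.of (PresentedGroup.of 0) :=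
  PresentedGroup.toGroup.of _
theorem toE4_1 : toE4 (PresentedGroup.of 1) = HNNExtension.t :=
  PresentedGroup.toGroup.of _

theorem G1_comm (n : ℕ) : ((PresentedGroup.of 1) ^ n * PresentedGroup.of 0 *
      ((PresentedGroup.of 1) ^ n)⁻¹ * ((PresentedGroup.of 1) ^ (n + 1) * PresentedGroup.of 0 *
      ((PresentedGroup.of 1) ^ (n + 1))⁻¹) : G1) =
    (PresentedGroup.of 1) ^ (n + 1) * PresentedGroup.of 0 * ((PresentedGroup.of 1) ^ (n + 1))⁻¹ *
      ((PresentedGroup.of 1) ^ n * PresentedGroup.of 0 * ((PresentedGroup.of 1) ^ n)⁻¹) := by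
  have h : PresentedGroup.mk {oneRel} oneRel = 1 := PresentedGroup.one_of_mem rfl
  simp only [oneRel] at h
  change (PresentedGroup.of 0 * PresentedGroup.of 1 * PresentedGroup.of 0 *
    (PresentedGroup.of 1)⁻¹ * (PresentedGroup.of 0)⁻¹ * PresentedGroup.of 1 *
    (PresentedGroup.of 0)⁻¹ * (PresentedGroup.of 1)⁻¹ : G1) = 1 at h
  generalize (PresentedGroup.of 0 : G1) = a at h ⊢
  generalize (PresentedGroup.of 1 : G1) = t at h ⊢
  have h' : a * (t * a * t⁻¹) = (t * a * t⁻¹) * a := by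
    rw [← mul_inv_eq_one, ← h]
    group
  calc t ^ n * a * (t ^ n)⁻¹ * (t ^ (n + 1) * a * (t ^ (n + 1))⁻¹)
      = t ^ n * (a * (t * a * t⁻¹)) * (t ^ n)⁻¹ := by rw [pow_succ]; group
    _ = _ := by rw [h', pow_succ]; group

/-- The embedding. -/
noncomputable def emb : K4 →* G1 :=
  raagLift P4 (fun i => (PresentedGroup.of 1) ^ (i : ℕ) * PresentedGroup.of 0 *
      ((PresentedGroup.of 1) ^ (i : ℕ))⁻¹)
    (P4_comm _ (G1_comm 0) (G1_comm 1) (G1_comm 2))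

theorem toE4_emb : toE4.comp emb = HNNExtension.of := by
  have key : ∀ a t : E4, ∀ n : ℕ, t ^ (n + 1) * a * (t ^ (n + 1))⁻¹ =
      t * (t ^ n * a * (t ^ n)⁻¹) * t⁻¹ := by
    intro a t n
    rw [pow_succ']
    group
  ext v
  fin_cases v
  · simp [emb, raagLift_of, toE4_0]
  · simp [emb, raagLift_of, toE4_0, toE4_1, E4_conj0]
  · simp only [emb, MonoidHom.comp_apply, Fin.reduceFinMk, raagLift_of, map_mul, map_pow, map_inv,
      toE4_0, toE4_1]
    change _ ^ (0 + 1 + 1) * _ * (_ ^ (0 + 1 + 1))⁻¹ = _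
    rw [key, key, pow_zero, one_mul, inv_one, mul_one, E4_conj0, E4_conj1]
  · simp only [emb, MonoidHom.comp_apply, Fin.reduceFinMk, raagLift_of, map_mul, map_pow, map_inv,
      toE4_0, toE4_1]
    change _ ^ (0 + 1 + 1 + 1) * _ * (_ ^ (0 + 1 + 1 + 1))⁻¹ = _
    rw [key, key, key, pow_zero, one_mul, inv_one, mul_one, E4_conj0, E4_conj1, E4_conj2]

theorem emb_injective : Function.Injective emb := by
  have h : Function.Injective (toE4.comp emb) := by
    rw [toE4_emb]
    exact HNNExtension.of_injective _
  rw [MonoidHom.coe_comp] at h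
  exact h.of_comp

/-- `A(P₄)` embeds into the one-relator group `Gp⟨a,t | a(tat⁻¹)=(tat⁻¹)a⟩` via
`a ↦ a`, `b ↦ tat⁻¹`, `c ↦ t²at⁻²`, `d ↦ t³at⁻³`. -/
theorem raag_P4_embeds_oneRelator :
    ∃ φ : PresentedGroup (raagRels P4) →* PresentedGroup {oneRel},
      Function.Injective φ ∧
      φ (PresentedGroup.of 0) = PresentedGroup.of 0 ∧
      φ (PresentedGroup.of 1) =
        PresentedGroup.of 1 * PresentedGroup.of 0 * (PresentedGroup.of 1)⁻¹ ∧
      φ (PresentedGroup.of 2) =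
        (PresentedGroup.of 1) ^ 2 * PresentedGroup.of 0 * ((PresentedGroup.of 1) ^ 2)⁻¹ ∧
      φ (PresentedGroup.of 3) =
        (PresentedGroup.of 1) ^ 3 * PresentedGroup.of 0 * ((PresentedGroup.of 1) ^ 3)⁻¹ := by
  refine ⟨emb, emb_injective, ?_, ?_, ?_, ?_⟩
  · simp [emb, raagLift_of]
  · simp [emb, raagLift_of]
  · exact raagLift_of _ _ _ _
  · exact raagLift_of _ _ _ _
end

section
/- Let a, b, c, d denote the images in A(P₄) of the four generators, let H = Subgroup.closure {a, b, c} and K = Subgroup.closure {b, c, d} be subgroups of A(P₄), and let φ : H ≃* K be a group isomorphism with φ(a) = b, φ(b) = c and φ(c) = d. Then the HNN extension HNNExtension A(P₄) H K φ is isomorphic (as a group) to the one-relator group G = Gp⟨a, t | a(tat⁻¹) = (tat⁻¹)a⟩. -/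
/-- The right-angled Artin group `A(P₄)`. -/
abbrev AP4 : Type := PresentedGroup (raagRels P4)

/-- The images in `A(P₄)` of the four generators. -/
def a : AP4 := PresentedGroup.of 0
def b : AP4 := PresentedGroup.of 1
def c : AP4 := PresentedGroup.of 2
def d : AP4 := PresentedGroup.of 3

/-- `H = ⟨a, b, c⟩ ≤ A(P₄)`. -/
def H : Subgroup AP4 := Subgroup.closure {a, b, c}

/-- `K = ⟨b, c, d⟩ ≤ A(P₄)`. -/
def K : Subgroup AP4 := Subgroup.closure {b, c, d}

theorem ha_mem : a ∈ H := Subgroup.subset_closure (by simp)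
theorem hb_memH : b ∈ H := Subgroup.subset_closure (by simp)
theorem hc_memH : c ∈ H := Subgroup.subset_closure (by simp)

/-- The one-relator group. -/
abbrev OneRelGroup : Type := PresentedGroup {oneRel}

/-- The generators of the one-relator group. -/
def gA : OneRelGroup := PresentedGroup.of 0
def gT : OneRelGroup := PresentedGroup.of 1

theorem gA_comm : gA * (gT * gA * gT⁻¹) = (gT * gA * gT⁻¹) * gA := by
  have h : gA * gT * gA * gT⁻¹ * gA⁻¹ * gT * gA⁻¹ * gT⁻¹ = 1 :=
    PresentedGroup.one_of_mem (rels := {oneRel}) (x := oneRel) rfl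
  have h2 : gA * (gT * gA * gT⁻¹) * ((gT * gA * gT⁻¹) * gA)⁻¹ = 1 := by
    rw [← h]; group
  exact mul_inv_eq_one.mp h2

/-- The images of the four generators in the one-relator group. -/
def gF : Fin 4 → OneRelGroup :=
  ![gA, gT * gA * gT⁻¹, gT * (gT * gA * gT⁻¹) * gT⁻¹, gT * (gT * (gT * gA * gT⁻¹) * gT⁻¹) * gT⁻¹]

theorem comm_conj {G : Type*} [Group G] {x y : G} (t : G) (h : x * y = y * x) :
    (t * x * t⁻¹) * (t * y * t⁻¹) = (t * y * t⁻¹) * (t * x * t⁻¹) := by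
  have h1 : (t * x * t⁻¹) * (t * y * t⁻¹) = t * (x * y) * t⁻¹ := by group
  have h2 : (t * y * t⁻¹) * (t * x * t⁻¹) = t * (y * x) * t⁻¹ := by group
  rw [h1, h2, h]

theorem gF_comm (u v : Fin 4) (h : P4.Adj u v) : gF u * gF v = gF v * gF u := by
  have h0 : gF 0 * gF 1 = gF 1 * gF 0 := gA_comm
  have h1 : gF 1 * gF 2 = gF 2 * gF 1 := comm_conj gT h0
  have h2 : gF 2 * gF 3 = gF 3 * gF 2 := comm_conj gT h1
  simp only [P4, SimpleGraph.fromEdgeSet_adj, Set.mem_insert_iff, Set.mem_singleton_iff,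
    Sym2.eq_iff] at h
  rcases h.1 with (⟨rfl, rfl⟩ | ⟨rfl, rfl⟩) | (⟨rfl, rfl⟩ | ⟨rfl, rfl⟩) |
    (⟨rfl, rfl⟩ | ⟨rfl, rfl⟩)
  exacts [h0, h0.symm, h1, h1.symm, h2, h2.symm]

/-- The homomorphism from `A(P₄)` to the one-relator group. -/
def fwdBase : AP4 →* OneRelGroup :=
  PresentedGroup.toGroup (f := gF) (by
    rintro r ⟨u, v, h, rfl⟩
    simp only [map_mul, map_inv, FreeGroup.lift_apply_of]
    rw [gF_comm u v h]; group)

theorem fwdBase_of (i : Fin 4) : fwdBase (PresentedGroup.of i) = gF i :=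
  PresentedGroup.toGroup.of _

theorem ab_comm : a * b = b * a := by
  have h : a * b * a⁻¹ * b⁻¹ = 1 :=
    PresentedGroup.one_of_mem (rels := raagRels P4)
      (x := FreeGroup.of 0 * FreeGroup.of 1 * (FreeGroup.of 0)⁻¹ * (FreeGroup.of 1)⁻¹)
      ⟨0, 1, by simp [P4], rfl⟩
  exact mul_inv_eq_iff_eq_mul.mp (mul_inv_eq_one.mp h)

/-- The HNN extension of `A(P₄)` along any isomorphism `φ : H ≃* K` with `φ(a) = b`, `φ(b) = c`,
`φ(c) = d` is isomorphic to the one-relator group `Gp⟨a,t | a(tat⁻¹)=(tat⁻¹)a⟩`. -/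
theorem hnn_AP4_iso_oneRelator (φ : H ≃* K)
    (hφa : (φ ⟨a, ha_mem⟩ : AP4) = b)
    (hφb : (φ ⟨b, hb_memH⟩ : AP4) = c)
    (hφc : (φ ⟨c, hc_memH⟩ : AP4) = d) :
    Nonempty (HNNExtension AP4 H K φ ≃* PresentedGroup {oneRel}) := by
  have hconj : ∀ h : H, gT * fwdBase (h : AP4) = fwdBase (φ h : AP4) * gT := by
    rintro ⟨x, hx⟩
    induction hx using Subgroup.closure_induction with
    | mem x hx =>
      rcases hx with rfl | rfl | rfl
      · refine Eq.trans ?_ (congrArg (fun z => fwdBase z * gT) hφa.symm)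
        change gT * fwdBase (PresentedGroup.of 0) = fwdBase (PresentedGroup.of 1) * gT
        rw [fwdBase_of, fwdBase_of]; simp [gF]
      · refine Eq.trans ?_ (congrArg (fun z => fwdBase z * gT) hφb.symm)
        change gT * fwdBase (PresentedGroup.of 1) = fwdBase (PresentedGroup.of 2) * gT
        rw [fwdBase_of, fwdBase_of]; simp [gF]
      · refine Eq.trans ?_ (congrArg (fun z => fwdBase z * gT) hφc.symm)
        change gT * fwdBase (PresentedGroup.of 2) = fwdBase (PresentedGroup.of 3) * gT
        rw [fwdBase_of, fwdBase_of]; simp [gF]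
    | one =>
      have : φ ⟨1, one_mem H⟩ = 1 := map_one φ
      refine Eq.trans ?_ (congrArg (fun z : K => fwdBase z * gT) this.symm)
      simp
    | mul x y hx hy ihx ihy =>
      have : φ ⟨x * y, mul_mem hx hy⟩ = φ ⟨x, hx⟩ * φ ⟨y, hy⟩ := map_mul φ ⟨x, hx⟩ ⟨y, hy⟩
      refine Eq.trans ?_ (congrArg (fun z : K => fwdBase z * gT) this.symm)
      simp only [map_mul, Subgroup.coe_mul] at ihx ihy ⊢
      rw [← mul_assoc, ihx, mul_assoc, ihy, mul_assoc]
    | inv x hx ih =>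
      have : φ ⟨x⁻¹, inv_mem hx⟩ = (φ ⟨x, hx⟩)⁻¹ := map_inv φ ⟨x, hx⟩
      refine Eq.trans ?_ (congrArg (fun z : K => fwdBase z * gT) this.symm)
      simp only [map_inv, Subgroup.coe_inv] at ih ⊢
      rw [eq_inv_mul_iff_mul_eq, ← mul_assoc, ← ih]; simp
  let F : HNNExtension AP4 H K φ →* OneRelGroup := HNNExtension.lift fwdBase gT hconj
  have eb : (HNNExtension.of b : HNNExtension AP4 H K φ) =
      HNNExtension.t * HNNExtension.of a * HNNExtension.t⁻¹ := by
    rw [← hφa]; exact HNNExtension.equiv_eq_conj _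
  have ec : (HNNExtension.of c : HNNExtension AP4 H K φ) =
      HNNExtension.t * HNNExtension.of b * HNNExtension.t⁻¹ := by
    rw [← hφb]; exact HNNExtension.equiv_eq_conj _
  have ed : (HNNExtension.of d : HNNExtension AP4 H K φ) =
      HNNExtension.t * HNNExtension.of c * HNNExtension.t⁻¹ := by
    rw [← hφc]; exact HNNExtension.equiv_eq_conj _
  have hrel : ∀ r ∈ ({oneRel} : Set (FreeGroup (Fin 2))), FreeGroup.lift
      (![HNNExtension.of a, HNNExtension.t] : Fin 2 → HNNExtension AP4 H K φ) r = 1 := by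
    rintro r rfl
    have hab := congrArg (HNNExtension.of : AP4 →* HNNExtension AP4 H K φ) ab_comm
    rw [map_mul, map_mul, eb, ← mul_inv_eq_one] at hab
    simp only [oneRel, map_mul, map_inv, FreeGroup.lift_apply_of, Matrix.cons_val_zero,
      Matrix.cons_val_one]
    rw [← hab]; group
  let B : OneRelGroup →* HNNExtension AP4 H K φ := PresentedGroup.toGroup hrel
  have hBA : B gA = HNNExtension.of a := PresentedGroup.toGroup.of hrel
  have hBT : B gT = HNNExtension.t := PresentedGroup.toGroup.of hrel
  have hFt : F HNNExtension.t = gT := HNNExtension.lift_t _ _ _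
  have hFof : ∀ g, F (HNNExtension.of g) = fwdBase g := HNNExtension.lift_of _ _ _
  refine ⟨MonoidHom.toMulEquiv F B ?_ ?_⟩
  · refine HNNExtension.hom_ext (PresentedGroup.ext fun i => ?_) ?_
    · change B (F (HNNExtension.of (PresentedGroup.of i))) = HNNExtension.of (PresentedGroup.of i)
      rw [hFof, fwdBase_of]
      fin_cases i
      · exact hBA
      · refine Eq.trans ?_ eb.symm
        simp [gF, hBA, hBT]
      · refine Eq.trans ?_ ec.symm
        rw [eb]
        simp [gF, hBA, hBT]
      · refine Eq.trans ?_ ed.symm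
        rw [ec, eb]
        simp [gF, hBA, hBT]
    · change B (F HNNExtension.t) = HNNExtension.t
      rw [hFt, hBT]
  · refine PresentedGroup.ext fun i => ?_
    fin_cases i
    · change F (B gA) = gA
      rw [hBA, hFof]
      exact fwdBase_of 0
    · change F (B gT) = gT
      rw [hBT, hFt]
end

section
/- For every finite forest F (a simple graph on a finite vertex type that is acyclic), the right-angled Artin group A(F) embeds into the one-relator group G = Gp⟨a, t | a(tat⁻¹) = (tat⁻¹)a⟩: there is an injective group homomorphism A(F) →* G. In particular, the right-angled Artin group of any finite forest embeds into a one-relator group. -/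
namespace RaagForest

/-! ### Right-angled Artin groups: basic functoriality -/

abbrev Raag {V : Type} (Γ : SimpleGraph V) := PresentedGroup (raagRels Γ)

def gen {V : Type} (Γ : SimpleGraph V) (v : V) : Raag Γ := PresentedGroup.of v

/-- The universal property of a right-angled Artin group. -/
def lift {V : Type} {Γ : SimpleGraph V} {H : Type*} [Group H] (f : V → H)
    (hf : ∀ u v, Γ.Adj u v → Commute (f u) (f v)) : Raag Γ →* H :=
  PresentedGroup.toGroup (f := f) (by
    rintro r ⟨u, v, huv, rfl⟩
    have := (hf u v huv).eq
    simp only [map_mul, map_inv, FreeGroup.lift_apply_of]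
    rw [this]; group)

@[simp] lemma lift_gen {V : Type} {Γ : SimpleGraph V} {H : Type*} [Group H] (f : V → H)
    (hf : ∀ u v, Γ.Adj u v → Commute (f u) (f v)) (v : V) : lift f hf (gen Γ v) = f v := by
  unfold lift gen
  exact PresentedGroup.toGroup.of _

lemma gen_commute {V : Type} {Γ : SimpleGraph V} {u v : V} (h : Γ.Adj u v) :
    Commute (gen Γ u) (gen Γ v) := by
  have h1 : (PresentedGroup.mk (raagRels Γ)) (FreeGroup.of u * FreeGroup.of v *
      (FreeGroup.of u)⁻¹ * (FreeGroup.of v)⁻¹) = 1 :=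
    PresentedGroup.one_of_mem ⟨u, v, h, rfl⟩
  simp only [map_mul, map_inv] at h1
  have h2 : gen Γ u * gen Γ v * (gen Γ u)⁻¹ * (gen Γ v)⁻¹ = 1 := h1
  rw [mul_inv_eq_one, mul_inv_eq_iff_eq_mul] at h2
  exact h2

lemma hom_ext {V : Type} {Γ : SimpleGraph V} {H : Type*} [Group H] {f g : Raag Γ →* H}
    (h : ∀ v, f (gen Γ v) = g (gen Γ v)) : f = g :=
  PresentedGroup.ext h

/-! ### The point-line incidence graph on the integer plane -/

abbrev T := (ℤ × ℤ) ⊕ (ℤ × ℤ)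

/-- Incidence of the point `(p, q)` with the line `q = m p + b`. -/
def inc : T → T → Prop
  | .inl P, .inr L => P.2 = L.1 * P.1 + L.2
  | .inr L, .inl P => P.2 = L.1 * P.1 + L.2
  | _, _ => False

def TG : SimpleGraph T where
  Adj := inc
  symm := by
    constructor
    rintro (P | P) (L | L) h <;> simpa [inc] using h
  loopless := by
    constructor
    rintro (P | P) h <;> simp [inc] at h

lemma no_square {x z w w' : T} (hxz : x ≠ z) (h1 : TG.Adj x w) (h2 : TG.Adj x w')
    (h3 : TG.Adj z w) (h4 : TG.Adj z w') : w = w' := by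
  rcases x with ⟨p, q⟩ | ⟨p, q⟩ <;> rcases z with ⟨p', q'⟩ | ⟨p', q'⟩ <;>
  rcases w with ⟨m, b⟩ | ⟨m, b⟩ <;> rcases w' with ⟨m', b'⟩ | ⟨m', b'⟩ <;>
  simp only [TG, inc] at h1 h2 h3 h4
  · have h : (m - m') * (p - p') = 0 := by linear_combination -h1 + h2 + h3 - h4
    rcases mul_eq_zero.1 h with h | h
    · have : m = m' := by linarith
      subst this
      have : b = b' := by linarith
      subst this; rfl
    · have : p = p' := by linarith
      subst this
      exact absurd (by rw [h1, h3]) hxz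
  · have h : (p - p') * (m - m') = 0 := by linear_combination -h1 + h2 + h3 - h4
    rcases mul_eq_zero.1 h with h | h
    · have : p = p' := by linarith
      subst this
      have : q = q' := by linarith
      subst this; exact absurd rfl hxz
    · have : m = m' := by linarith
      subst this
      rw [h1, h2]

/-- Shear: fixes the point `(0,0)` and moves the line `(m,b)` to `(m+1,b)`. -/
def X : TG ≃g TG where
  toFun := Sum.map (fun P => (P.1, P.2 + P.1)) (fun L => (L.1 + 1, L.2))
  invFun := Sum.map (fun P => (P.1, P.2 - P.1)) (fun L => (L.1 - 1, L.2))
  left_inv := by rintro (P | P) <;> simp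
  right_inv := by rintro (P | P) <;> simp
  map_rel_iff' := by
    rintro (P | P) (L | L) <;> simp [TG, inc] <;> constructor <;> intro h <;> linarith

/-- Translation: fixes the line `(0,0)` and moves the point `(p,q)` to `(p+1,q)`. -/
def Y : TG ≃g TG where
  toFun := Sum.map (fun P => (P.1 + 1, P.2)) (fun L => (L.1, L.2 - L.1))
  invFun := Sum.map (fun P => (P.1 - 1, P.2)) (fun L => (L.1, L.2 + L.1))
  left_inv := by rintro (P | P) <;> simp
  right_inv := by rintro (P | P) <;> simp
  map_rel_iff' := by
    rintro (P | P) (L | L) <;> simp [TG, inc] <;> constructor <;> intro h <;> linarith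

lemma zpow_step {α : Type*} (σ : Equiv.Perm α) (f : ℤ → α) (h : ∀ n, σ (f n) = f (n + 1))
    (n : ℤ) : (σ ^ n) (f 0) = f n := by
  induction n using Int.induction_on with
  | zero => simp
  | succ n ih => rw [add_comm, zpow_add, Equiv.Perm.mul_apply, ih, zpow_one, h, add_comm]
  | pred n ih =>
    have : (-(n : ℤ) - 1) = -1 + -n := by ring
    rw [this, zpow_add, Equiv.Perm.mul_apply, ih, zpow_neg_one, Equiv.Perm.inv_eq_iff_eq, h]
    congr 1; ring

lemma zpow_step' (σ : TG ≃g TG) (f : ℤ → T) (h : ∀ n, σ (f n) = f (n + 1))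
    (n : ℤ) : (σ ^ n) (f 0) = f n := by
  induction n using Int.induction_on with
  | zero => simp
  | succ n ih => rw [add_comm, zpow_add, RelIso.mul_apply, ih, zpow_one, h, add_comm]
  | pred n ih =>
    have : (-(n : ℤ) - 1) = -1 + -n := by ring
    rw [this, zpow_add, RelIso.mul_apply, ih, zpow_neg_one]
    apply σ.injective
    rw [RelIso.apply_inv_self, h]
    congr 1; ring

abbrev pt0 : T := .inl (0, 0)
abbrev ln0 : T := .inr (0, 0)

lemma X_zpow_ln (n : ℤ) : (X ^ n) ln0 = .inr (n, 0) :=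
  zpow_step' X (fun n => .inr (n, 0)) (fun n => rfl) n

lemma Y_zpow_pt (n : ℤ) : (Y ^ n) pt0 = .inl (n, 0) :=
  zpow_step' Y (fun n => .inl (n, 0)) (fun n => rfl) n

lemma X_zpow_pt1 (n : ℤ) : (X ^ n) (.inl (1, 0)) = .inl (1, n) :=
  zpow_step' X (fun n => .inl (1, n)) (fun n => rfl) n

lemma X_zpow_pt (n : ℤ) : (X ^ n) pt0 = pt0 :=
  zpow_step' X (fun _ => pt0) (fun n => rfl) n

lemma Y_zpow_ln (n : ℤ) : (Y ^ n) ln0 = ln0 :=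
  zpow_step' Y (fun _ => ln0) (fun n => rfl) n

/-! ### Automorphisms of `A(T)` -/

abbrev AT := Raag TG

def aut (σ : TG ≃g TG) : AT →* AT :=
  lift (fun v => gen TG (σ v)) (fun _ _ h => gen_commute (σ.map_rel_iff.2 h))

@[simp] lemma aut_gen (σ : TG ≃g TG) (v : T) : aut σ (gen TG v) = gen TG (σ v) := by
  simp [aut]

lemma aut_mul (σ τ : TG ≃g TG) (s : AT) : aut (σ * τ) s = aut σ (aut τ s) := by
  have : aut (σ * τ) = (aut σ).comp (aut τ) := hom_ext (fun v => by simp)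
  rw [this]; rfl

lemma aut_one (s : AT) : aut 1 s = s := by
  have : aut 1 = MonoidHom.id _ := hom_ext (fun v => by simp)
  rw [this]; rfl

def autP (σ : TG ≃g TG) : Equiv.Perm AT where
  toFun := aut σ
  invFun := aut σ⁻¹
  left_inv s := by rw [← aut_mul, inv_mul_cancel, aut_one]
  right_inv s := by rw [← aut_mul, mul_inv_cancel, aut_one]

/-- The sequence of permutations of `A(T)` defining the representation of `G`. -/
def b (i : ℤ) : Equiv.Perm AT :=
  if i = 0 then autP X else if i = 1 then Equiv.mulLeft (gen TG pt0)
  else if i = 2 then Equiv.mulLeft (gen TG ln0) else if i = 3 then autP Y else 1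

lemma b_comm (i : ℤ) : Commute (b i) (b (i + 1)) := by
  by_cases h0 : i = 0
  · subst h0
    ext s
    simp [b, autP]
    rfl
  by_cases h1 : i = 1
  · subst h1
    ext s
    have : Commute (gen TG pt0) (gen TG ln0) := gen_commute (by simp [TG, inc])
    simp [b, ← mul_assoc, this.eq]
  by_cases h2 : i = 2
  · subst h2
    ext s
    simp [b, autP]
    rfl
  by_cases h3 : i = 3
  · subst h3
    simp [b]
  · simp [b, h0, h1, h2, h3]

/-! ### The one-relator group and its representation -/

abbrev G := PresentedGroup ({oneRel} : Set (FreeGroup (Fin 2)))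

def ga : G := PresentedGroup.of 0
def gt : G := PresentedGroup.of 1

def pa : Equiv.Perm (AT × ℤ) where
  toFun s := (b s.2 s.1, s.2)
  invFun s := ((b s.2)⁻¹ s.1, s.2)
  left_inv s := by simp
  right_inv s := by simp

def pt : Equiv.Perm (AT × ℤ) where
  toFun s := (s.1, s.2 - 1)
  invFun s := (s.1, s.2 + 1)
  left_inv s := by simp
  right_inv s := by simp

lemma pt_inv (s : AT) (i : ℤ) : pt⁻¹ (s, i) = (s, i + 1) := rfl
lemma pt_symm (s : AT) (i : ℤ) : (Equiv.symm pt) (s, i) = (s, i + 1) := rfl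
lemma pt_apply (s : AT) (i : ℤ) : pt (s, i) = (s, i - 1) := rfl
lemma pa_apply (s : AT) (i : ℤ) : pa (s, i) = (b i s, i) := rfl

lemma p_comm : Commute pa (pt * pa * pt⁻¹) := by
  apply Equiv.ext
  rintro ⟨s, i⟩
  have := congrArg (fun f : Equiv.Perm AT => f s) (b_comm i).eq
  simp only [Equiv.Perm.mul_apply] at this
  simp only [Equiv.Perm.mul_apply, pt_inv, pt_apply, pa_apply, add_sub_cancel_right, this]

def rho : G →* Equiv.Perm (AT × ℤ) :=
  PresentedGroup.toGroup (f := ![pa, pt]) (by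
    rintro r hr
    rw [Set.mem_singleton_iff] at hr
    subst hr
    have h := p_comm.eq
    simp only [oneRel, map_mul, map_inv, FreeGroup.lift_apply_of, Matrix.cons_val_zero,
      Matrix.cons_val_one]
    calc pa * pt * pa * pt⁻¹ * pa⁻¹ * pt * pa⁻¹ * pt⁻¹
        = (pa * (pt * pa * pt⁻¹)) * pa⁻¹ * (pt * pa * pt⁻¹)⁻¹ := by group
      _ = 1 := by rw [h]; group)

lemma rho_a : rho ga = pa := PresentedGroup.toGroup.of _
lemma rho_t : rho gt = pt := PresentedGroup.toGroup.of _

lemma g_comm : Commute ga (gt * ga * gt⁻¹) := by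
  have h1 : (PresentedGroup.mk {oneRel}) oneRel = 1 :=
    PresentedGroup.one_of_mem rfl
  simp only [oneRel, map_mul, map_inv] at h1
  have h2 : ga * gt * ga * gt⁻¹ * ga⁻¹ * gt * ga⁻¹ * gt⁻¹ = 1 := h1
  have h3 : (ga * (gt * ga * gt⁻¹)) * ((gt * ga * gt⁻¹) * ga)⁻¹ = 1 := by
    rw [← h2]; group
  exact mul_inv_eq_one.1 h3

def a1 : G := gt * ga * gt⁻¹
def a2 : G := gt * a1 * gt⁻¹
def a3 : G := gt * a2 * gt⁻¹

lemma comm01 : Commute ga a1 := g_comm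
lemma comm12 : Commute a1 a2 := (Commute.conj_iff gt).2 comm01
lemma comm23 : Commute a2 a3 := (Commute.conj_iff gt).2 comm12

lemma rho_a0 (s : AT) : rho ga (s, 0) = (aut X s, 0) := by
  rw [rho_a]; simp [pa_apply, b]; rfl
lemma rho_a1 (s : AT) : rho a1 (s, 0) = (gen TG pt0 * s, 0) := by
  simp [a1, rho_a, rho_t, pa_apply, b, pt_symm, pt_apply]
lemma rho_a2 (s : AT) : rho a2 (s, 0) = (gen TG ln0 * s, 0) := by
  simp [a2, a1, rho_a, rho_t, pa_apply, b, pt_symm, pt_apply]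
lemma rho_a3 (s : AT) : rho a3 (s, 0) = (aut Y s, 0) := by
  simp [a3, a2, a1, rho_a, rho_t, pa_apply, b, pt_symm, pt_apply]; rfl

/-- Pairs of an element of `G` and an automorphism of the incidence graph acting compatibly. -/
def good : Subgroup (G × (TG ≃g TG)) where
  carrier := {x | ∀ s : AT, rho x.1 (s, 0) = (aut x.2 s, 0)}
  one_mem' s := by simp [aut_one]
  mul_mem' {x y} hx hy s := by
    simp only [Prod.fst_mul, Prod.snd_mul, map_mul, Equiv.Perm.mul_apply, aut_mul]
    rw [hy, hx]
  inv_mem' {x} hx s := by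
    simp only [Prod.fst_inv, Prod.snd_inv, map_inv, Equiv.Perm.inv_eq_iff_eq]
    rw [hx, ← aut_mul, mul_inv_cancel, aut_one]

lemma good_X : (ga, X) ∈ good := rho_a0
lemma good_Y : (a3, Y) ∈ good := rho_a3

/-- `e` is an admissible lift in `G` of the vertex `x` of the incidence graph. -/
def Adm (e : G) (x : T) : Prop :=
  ∃ y ∈ good, (e = y.1 * a1 * y.1⁻¹ ∧ x = y.2 pt0) ∨ (e = y.1 * a2 * y.1⁻¹ ∧ x = y.2 ln0)

lemma Adm.rho_apply {e : G} {x : T} (h : Adm e x) (s : AT) :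
    rho e (s, 0) = (gen TG x * s, 0) := by
  obtain ⟨y, hy, ⟨rfl, rfl⟩ | ⟨rfl, rfl⟩⟩ := h
  · have h1 := good.inv_mem hy s
    simp only [Prod.fst_inv, Prod.snd_inv] at h1
    rw [map_mul, map_mul, Equiv.Perm.mul_apply, Equiv.Perm.mul_apply, h1, rho_a1, hy,
      map_mul, ← aut_mul, mul_inv_cancel, aut_one, aut_gen]
  · have h1 := good.inv_mem hy s
    simp only [Prod.fst_inv, Prod.snd_inv] at h1
    rw [map_mul, map_mul, Equiv.Perm.mul_apply, Equiv.Perm.mul_apply, h1, rho_a2, hy,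
      map_mul, ← aut_mul, mul_inv_cancel, aut_one, aut_gen]

lemma Adm.neighbours {e : G} {x : T} (h : Adm e x) :
    ∃ (e' : ℤ → G) (x' : ℤ → T), Function.Injective x' ∧
      ∀ n, Adm (e' n) (x' n) ∧ Commute e (e' n) ∧ TG.Adj x (x' n) := by
  obtain ⟨y, hy, ⟨rfl, rfl⟩ | ⟨rfl, rfl⟩⟩ := h
  · refine ⟨fun n => (y.1 * ga ^ n) * a2 * (y.1 * ga ^ n)⁻¹, fun n => y.2 ((X ^ n) ln0), ?_, ?_⟩
    · intro m n hmn
      have := y.2.injective hmn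
      simpa [X_zpow_ln] using this
    · intro n
      refine ⟨⟨y * (ga, X) ^ n, good.mul_mem hy (good.zpow_mem good_X n), Or.inr ⟨rfl, rfl⟩⟩,
        ?_, ?_⟩
      · have h1 : Commute a1 (ga ^ n * a2 * (ga ^ n)⁻¹) :=
          ((comm01.symm.zpow_right n).mul_right comm12).mul_right
            (comm01.symm.zpow_right n).inv_right
        have h2 := (Commute.conj_iff y.1).2 h1
        convert h2 using 1
        group
      · rw [y.2.map_rel_iff, X_zpow_ln]
        simp [TG, inc]
  · refine ⟨fun n => (y.1 * a3 ^ n) * a1 * (y.1 * a3 ^ n)⁻¹, fun n => y.2 ((Y ^ n) pt0), ?_, ?_⟩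
    · intro m n hmn
      have := y.2.injective hmn
      simpa [Y_zpow_pt] using this
    · intro n
      refine ⟨⟨y * (a3, Y) ^ n, good.mul_mem hy (good.zpow_mem good_Y n), Or.inl ⟨rfl, rfl⟩⟩,
        ?_, ?_⟩
      · have h1 : Commute a2 (a3 ^ n * a1 * (a3 ^ n)⁻¹) :=
          ((comm23.zpow_right n).mul_right comm12.symm).mul_right
            (comm23.zpow_right n).inv_right
        have h2 := (Commute.conj_iff y.1).2 h1
        convert h2 using 1
        group
      · rw [y.2.map_rel_iff, Y_zpow_pt]
        simp [TG, inc]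

lemma exists_family : ∃ e' : ℤ → G, ∀ n, Adm (e' n) (.inl (0, n)) := by
  refine ⟨fun n => (a3⁻¹ * ga ^ n * a3) * a1 * (a3⁻¹ * ga ^ n * a3)⁻¹, fun n => ?_⟩
  refine ⟨(a3, Y)⁻¹ * (ga, X) ^ n * (a3, Y), good.mul_mem (good.mul_mem (good.inv_mem good_Y)
    (good.zpow_mem good_X n)) good_Y, Or.inl ⟨rfl, ?_⟩⟩
  change _ = Y⁻¹ ((X ^ n) (Y pt0))
  have : Y pt0 = .inl (1, 0) := rfl
  rw [this, X_zpow_pt1]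
  rfl

/-! ### Embedding finite forests -/

lemma exists_avoid (S : Finset T) (x' : ℤ → T) (hx' : Function.Injective x') (Q : T → Prop)
    (hQ : ∀ z, Q z → ∀ m n, TG.Adj z (x' m) → TG.Adj z (x' n) → m = n) :
    ∃ n, x' n ∉ S ∧ ∀ z ∈ S, Q z → ¬ TG.Adj z (x' n) := by
  have h1 : (⋃ z ∈ S, {n | x' n = z} ∪ {n | Q z ∧ TG.Adj z (x' n)} : Set ℤ).Finite := by
    refine Set.Finite.biUnion S.finite_toSet (fun z _ => Set.Finite.union ?_ ?_)
    · apply Set.Subsingleton.finite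
      intro m hm n hn
      exact hx' (hm.trans hn.symm)
    · apply Set.Subsingleton.finite
      rintro m ⟨hq, hm⟩ n ⟨_, hn⟩
      exact hQ z hq m n hm hn
  obtain ⟨n, hn⟩ := h1.exists_notMem
  refine ⟨n, fun h => hn ?_, fun z hz hq h => hn ?_⟩
  · simp only [Set.mem_iUnion]
    exact ⟨_, h, Or.inl rfl⟩
  · simp only [Set.mem_iUnion]
    exact ⟨_, hz, Or.inr ⟨hq, h⟩⟩

lemma exists_leaf {V : Type} [Finite V] [Nonempty V] (F : SimpleGraph V) (hF : F.IsAcyclic) :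
    ∃ v, ∀ u w, F.Adj v u → F.Adj v w → u = w := by
  classical
  have := Fintype.ofFinite V
  rcases subsingleton_or_nontrivial V with h | h
  · obtain ⟨v⟩ := ‹Nonempty V›
    exact ⟨v, fun u w _ _ => Subsingleton.elim _ _⟩
  obtain ⟨F', hle, hmax⟩ := SimpleGraph.exists_maximal_isAcyclic_of_le_isAcyclic
    (G := (⊤ : SimpleGraph V)) (H := F) le_top hF
  have ht : F'.IsTree := by
    refine SimpleGraph.isTree_iff_maximal_isAcyclic.2 ⟨inferInstance, ?_⟩
    simpa using hmax
  obtain ⟨v, hv⟩ := ht.exists_vert_degree_one_of_nontrivial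
  obtain ⟨w, hw, hu⟩ := SimpleGraph.degree_eq_one_iff_existsUnique_adj.1 hv
  exact ⟨v, fun u w h1 h2 => (hu u (hle h1)).trans (hu w (hle h2)).symm⟩

lemma exists_embedding {V : Type} (F : SimpleGraph V) (hF : F.IsAcyclic) (n : ℕ) :
    ∀ s : Finset V, s.card = n →
    ∃ (e : V → G) (x : V → T), (∀ v ∈ s, Adm (e v) (x v)) ∧ Set.InjOn x s ∧
      (∀ u ∈ s, ∀ v ∈ s, F.Adj u v ↔ TG.Adj (x u) (x v)) ∧
      (∀ u ∈ s, ∀ v ∈ s, F.Adj u v → Commute (e u) (e v)) := by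
  classical
  induction n with
  | zero =>
    intro s hs
    rw [Finset.card_eq_zero] at hs
    subst hs
    exact ⟨fun _ => 1, fun _ => pt0, by simp⟩
  | succ n ih =>
    intro s hs
    have hne : Nonempty (s : Set V) := by
      have : s.Nonempty := Finset.card_pos.1 (by omega)
      exact this.to_subtype
    obtain ⟨⟨v, hv⟩, hleaf⟩ := exists_leaf (F.induce (s : Set V)) (hF.induce _)
    have hleaf' : ∀ u ∈ s, ∀ w ∈ s, F.Adj v u → F.Adj v w → u = w := by
      intro u hu w hw h1 h2
      have := hleaf ⟨u, hu⟩ ⟨w, hw⟩ h1 h2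
      simpa using this
    have hvs : v ∈ s := hv
    obtain ⟨e, x, hA, hinj, hadj, hcomm⟩ := ih (s.erase v) (by
      rw [Finset.card_erase_of_mem hvs]; omega)
    -- the new vertex
    have key : ∃ (e0 : G) (x0 : T), Adm e0 x0 ∧ (∀ u ∈ s.erase v, x u ≠ x0) ∧
        (∀ u ∈ s.erase v, F.Adj v u ↔ TG.Adj x0 (x u)) ∧
        (∀ u ∈ s.erase v, F.Adj v u → Commute e0 (e u)) := by
      by_cases hex : ∃ u ∈ s.erase v, F.Adj v u
      · obtain ⟨u, hu, huv⟩ := hex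
        obtain ⟨e', x', hx', h'⟩ := (hA u hu).neighbours
        obtain ⟨k, hk1, hk2⟩ := exists_avoid ((s.erase v).image x) x' hx' (fun z => x u ≠ z)
          (fun z hz m n hm hn => hx' (no_square hz (h' m).2.2 (h' n).2.2 hm hn))
        have huniq : ∀ w ∈ s.erase v, F.Adj v w → w = u := fun w hw hvw =>
          hleaf' w (Finset.mem_of_mem_erase hw) u (Finset.mem_of_mem_erase hu) hvw huv
        refine ⟨e' k, x' k, (h' k).1, ?_, ?_, ?_⟩
        · intro w hw hh
          exact hk1 (hh ▸ Finset.mem_image_of_mem x hw)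
        · intro w hw
          constructor
          · intro hvw
            rw [huniq w hw hvw]
            exact (h' k).2.2.symm
          · intro hvw
            by_contra hcon
            refine hk2 (x w) (Finset.mem_image_of_mem x hw) (fun hh => hcon ?_) hvw.symm
            rw [← hinj hu hw hh]; exact huv
        · intro w hw hvw
          rw [huniq w hw hvw]
          exact (h' k).2.1.symm
      · push Not at hex
        obtain ⟨e', h'⟩ := exists_family
        obtain ⟨k, hk1, hk2⟩ := exists_avoid ((s.erase v).image x) (fun n => .inl (0, n))
          (fun m n h => by simpa using h) (fun _ => True) (by
            rintro (⟨p, q⟩ | ⟨p, q⟩) - m n hm hn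
            · simp [TG, inc] at hm
            · simp only [TG, inc] at hm hn
              omega)
        refine ⟨e' k, .inl (0, k), h' k, ?_, ?_, ?_⟩
        · intro w hw hh
          exact hk1 (hh ▸ Finset.mem_image_of_mem x hw)
        · intro w hw
          refine ⟨fun h => absurd h (hex w hw), fun h => ?_⟩
          exact absurd h.symm (hk2 (x w) (Finset.mem_image_of_mem x hw) trivial)
        · intro w hw h
          exact absurd h (hex w hw)
    obtain ⟨e0, x0, k1, k2, k3, k4⟩ := key
    refine ⟨Function.update e v e0, Function.update x v x0, ?_, ?_, ?_, ?_⟩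
    · intro u hu
      by_cases huv : u = v
      · subst huv; simpa using k1
      · simpa [huv] using hA u (Finset.mem_erase.2 ⟨huv, hu⟩)
    · intro u hu w hw h
      by_cases huv : u = v <;> by_cases hwv : w = v
      · rw [huv, hwv]
      · subst huv
        simp only [Function.update_self, Function.update_of_ne hwv] at h
        exact absurd h.symm (k2 w (Finset.mem_erase.2 ⟨hwv, hw⟩))
      · subst hwv
        simp only [Function.update_self, Function.update_of_ne huv] at h
        exact absurd h (k2 u (Finset.mem_erase.2 ⟨huv, hu⟩))
      · simp only [Function.update_of_ne huv, Function.update_of_ne hwv] at h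
        exact hinj (Finset.mem_erase.2 ⟨huv, hu⟩) (Finset.mem_erase.2 ⟨hwv, hw⟩) h
    · intro u hu w hw
      by_cases huv : u = v <;> by_cases hwv : w = v
      · subst huv; subst hwv; simp
      · subst huv
        simp only [Function.update_self, Function.update_of_ne hwv]
        exact k3 w (Finset.mem_erase.2 ⟨hwv, hw⟩)
      · subst hwv
        simp only [Function.update_self, Function.update_of_ne huv]
        rw [F.adj_comm, TG.adj_comm]
        exact k3 u (Finset.mem_erase.2 ⟨huv, hu⟩)
      · simp only [Function.update_of_ne huv, Function.update_of_ne hwv]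
        exact hadj u (Finset.mem_erase.2 ⟨huv, hu⟩) w (Finset.mem_erase.2 ⟨hwv, hw⟩)
    · intro u hu w hw h
      by_cases huv : u = v <;> by_cases hwv : w = v
      · subst huv; subst hwv; exact absurd h (F.irrefl)
      · subst huv
        simp only [Function.update_self, Function.update_of_ne hwv]
        exact k4 w (Finset.mem_erase.2 ⟨hwv, hw⟩) h
      · subst hwv
        simp only [Function.update_self, Function.update_of_ne huv]
        exact (k4 u (Finset.mem_erase.2 ⟨huv, hu⟩) h.symm).symm
      · simp only [Function.update_of_ne huv, Function.update_of_ne hwv]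
        exact hcomm u (Finset.mem_erase.2 ⟨huv, hu⟩) w (Finset.mem_erase.2 ⟨hwv, hw⟩) h

/-- The right-angled Artin group of an induced subgraph embeds. -/
lemma induced_injective {V : Type} (F : SimpleGraph V) (x : V → T) (hx : Function.Injective x)
    (hadj : ∀ u v, F.Adj u v ↔ TG.Adj (x u) (x v)) (κ : Raag F →* AT)
    (hκ : ∀ v, κ (gen F v) = gen TG (x v)) : Function.Injective κ := by
  classical
  let f : T → Raag F := fun z => if h : ∃ v, x v = z then gen F h.choose else 1
  have hf : ∀ v, f (x v) = gen F v := by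
    intro v
    have h : ∃ u, x u = x v := ⟨v, rfl⟩
    simp only [f, dif_pos h]
    rw [hx h.choose_spec]
  have hc : ∀ y z, TG.Adj y z → Commute (f y) (f z) := by
    intro y z hyz
    by_cases h1 : ∃ v, x v = y
    · by_cases h2 : ∃ v, x v = z
      · obtain ⟨u, rfl⟩ := h1
        obtain ⟨v, rfl⟩ := h2
        rw [hf, hf]
        exact gen_commute ((hadj u v).2 hyz)
      · simp [f, h2]
    · simp [f, h1]
  have hcomp : (lift f hc).comp κ = MonoidHom.id _ := hom_ext (fun v => by simp [hκ, hf])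
  intro g h hgh
  have := congrArg (lift f hc) hgh
  rw [← MonoidHom.comp_apply, ← MonoidHom.comp_apply, hcomp] at this
  exact this

/-- Elements of `G` acting on the zero fibre by left multiplications. -/
def leftSub : Subgroup (G × AT) where
  carrier := {y | ∀ s : AT, rho y.1 (s, 0) = (y.2 * s, 0)}
  one_mem' s := by simp
  mul_mem' {x y} hx hy s := by
    simp only [Prod.fst_mul, Prod.snd_mul, map_mul, Equiv.Perm.mul_apply]
    rw [hy, hx, mul_assoc]
  inv_mem' {x} hx s := by
    simp only [Prod.fst_inv, Prod.snd_inv, map_inv, Equiv.Perm.inv_eq_iff_eq]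
    rw [hx, mul_inv_cancel_left]

end RaagForest

open RaagForest in
/-- For every finite forest `F`, the right-angled Artin group `A(F)` embeds into the
one-relator group `Gp⟨a,t | a(tat⁻¹)=(tat⁻¹)a⟩`. -/
theorem raag_forest_embeds_oneRelator (V : Type) [Fintype V] (F : SimpleGraph V)
    (hF : F.IsAcyclic) :
    ∃ φ : PresentedGroup (raagRels F) →* PresentedGroup {oneRel},
      Function.Injective φ := by
  obtain ⟨e, x, hA, hinj, hadj, hcomm⟩ := exists_embedding F hF _ Finset.univ rfl
  have hx : Function.Injective x := fun u v h => hinj (by simp) (by simp) h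
  let φ : Raag F →* G := lift e (fun u v h => hcomm u (by simp) v (by simp) h)
  let κ : Raag F →* AT := lift (fun v => gen TG (x v))
    (fun u v h => gen_commute ((hadj u (by simp) v (by simp)).1 h))
  have hκ : Function.Injective κ := induced_injective F x hx
    (fun u v => hadj u (by simp) v (by simp)) κ (fun v => by simp [κ])
  have hmem : ∀ g : Raag F, (φ g, κ g) ∈ leftSub := by
    have htop : (⊤ : Subgroup (Raag F)) ≤ leftSub.comap (φ.prod κ) := by
      rw [← PresentedGroup.closure_range_of, Subgroup.closure_le]
      rintro _ ⟨v, rfl⟩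
      change (φ (gen F v), κ (gen F v)) ∈ leftSub
      simp only [φ, κ, lift_gen]
      exact (hA v (by simp)).rho_apply
    intro g
    exact htop (Subgroup.mem_top g)
  refine ⟨φ, fun g h hgh => hκ ?_⟩
  have h1 := hmem g 1
  have h2 := hmem h 1
  simp only [hgh] at h1
  rw [h2] at h1
  simpa using h1.symm
end

section
/- Let Γ be a simple graph on a finite vertex type. Then the right-angled Artin group A(Γ) embeds into some one-relator group (i.e., there exist a type B, an element r of FreeGroup B, and an injective group homomorphism A(Γ) →* PresentedGroup {r}) if and only if Γ is acyclic (a forest). -/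
namespace RaagProof

abbrev RAAG {V : Type} (Γ : SimpleGraph V) := PresentedGroup (raagRels Γ)

abbrev gen {V : Type} (Γ : SimpleGraph V) (v : V) : RAAG Γ := PresentedGroup.of v

theorem gen_commute {V : Type} {Γ : SimpleGraph V} {u v : V} (h : Γ.Adj u v) :
    Commute (gen Γ u) (gen Γ v) := by
  have h1 : PresentedGroup.mk (raagRels Γ) (FreeGroup.of u * FreeGroup.of v * (FreeGroup.of u)⁻¹ *
      (FreeGroup.of v)⁻¹) = 1 := PresentedGroup.one_of_mem ⟨u, v, h, rfl⟩
  simp only [map_mul, map_inv] at h1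
  have h2 : gen Γ u * gen Γ v * (gen Γ u)⁻¹ * (gen Γ v)⁻¹ = 1 := h1
  rw [mul_inv_eq_one, mul_inv_eq_iff_eq_mul] at h2
  exact h2

def raagLift {V G : Type} [Group G] {Γ : SimpleGraph V} (f : V → G)
    (h : ∀ u v, Γ.Adj u v → Commute (f u) (f v)) : RAAG Γ →* G :=
  PresentedGroup.toGroup (f := f) (by
    rintro r ⟨u, v, huv, rfl⟩
    simp only [map_mul, map_inv, FreeGroup.lift_apply_of]
    rw [mul_inv_eq_one, mul_inv_eq_iff_eq_mul]
    exact h u v huv)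

@[simp] theorem raagLift_gen {V G : Type} [Group G] {Γ : SimpleGraph V} (f : V → G)
    (h : ∀ u v, Γ.Adj u v → Commute (f u) (f v)) (v : V) :
    raagLift f h (PresentedGroup.of v) = f v :=
  PresentedGroup.toGroup.of _

/-- `A(Γ)` embeds into a one-relator group. -/
def OR {V : Type} (Γ : SimpleGraph V) : Prop :=
  ∃ (B : Type) (r : FreeGroup B) (φ : RAAG Γ →* PresentedGroup {r}), Function.Injective φ

theorem OR.of_inj {V W : Type} {Γ : SimpleGraph V} {Λ : SimpleGraph W} (h : OR Λ)
    (f : RAAG Γ →* RAAG Λ) (hf : Function.Injective f) : OR Γ := by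
  obtain ⟨B, r, φ, hφ⟩ := h
  exact ⟨B, r, φ.comp f, hφ.comp hf⟩

open Classical in
theorem OR.of_embedding {V W : Type} {Γ : SimpleGraph V} {Λ : SimpleGraph W} (h : OR Λ)
    (e : Γ ↪g Λ) : OR Γ := by
  let f : RAAG Γ →* RAAG Λ := raagLift (fun v => gen Λ (e v))
    (fun u v huv => gen_commute (e.map_adj_iff.2 huv))
  let g : RAAG Λ →* RAAG Γ := raagLift
    (fun w => if hw : ∃ v, e v = w then gen Γ hw.choose else 1) (by
      intro u v huv
      by_cases hu : ∃ x, e x = u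
      · by_cases hv : ∃ x, e x = v
        · simp only [hu, hv, dite_true]
          apply gen_commute
          rw [← e.map_adj_iff, hu.choose_spec, hv.choose_spec]
          exact huv
        · simp [hv]
      · simp [hu])
  have hgf : g.comp f = MonoidHom.id _ := by
    apply PresentedGroup.ext
    intro x
    have hx : ∃ v, e v = e x := ⟨x, rfl⟩
    simp only [MonoidHom.comp_apply, f, g, raagLift_gen, MonoidHom.id_apply, gen, hx, dite_true]
    congr 1
    exact e.injective hx.choose_spec
  refine h.of_inj f (Function.LeftInverse.injective (g := g) fun x => ?_)
  exact DFunLike.congr_fun hgf x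

/-! ### The line -/

def lineGraph : SimpleGraph ℤ where
  Adj i j := j = i + 1 ∨ i = j + 1
  symm := ⟨fun i j h => by omega⟩
  loopless := ⟨fun i h => by omega⟩

def shiftHom (k : ℤ) : RAAG lineGraph →* RAAG lineGraph :=
  raagLift (fun i => gen lineGraph (i + k)) (fun u v h => gen_commute (by
    simp only [lineGraph] at h ⊢; omega))

theorem shiftHom_comp (k l : ℤ) : (shiftHom k).comp (shiftHom l) = shiftHom (l + k) := by
  apply PresentedGroup.ext
  intro x
  simp [shiftHom, gen, add_assoc]

theorem shiftHom_zero : shiftHom 0 = MonoidHom.id _ := by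
  apply PresentedGroup.ext
  intro x
  simp [shiftHom, gen]

def shiftAut (k : ℤ) : MulAut (RAAG lineGraph) :=
  MonoidHom.toMulEquiv (shiftHom k) (shiftHom (-k))
    (by rw [shiftHom_comp]; simp [shiftHom_zero]) (by rw [shiftHom_comp]; simp [shiftHom_zero])

def shiftAction : Multiplicative ℤ →* MulAut (RAAG lineGraph) where
  toFun k := shiftAut k.toAdd
  map_one' := by
    ext x; change shiftHom 0 x = x; rw [shiftHom_zero]; rfl
  map_mul' k l := by
    ext x
    change shiftHom (k.toAdd + l.toAdd) x = shiftHom k.toAdd (shiftHom l.toAdd x)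
    rw [← MonoidHom.comp_apply, shiftHom_comp, add_comm]

theorem OR_line : OR lineGraph := by
  let a : FreeGroup Bool := FreeGroup.of false
  let t : FreeGroup Bool := FreeGroup.of true
  let r : FreeGroup Bool := a * (t * a * t⁻¹) * a⁻¹ * (t * a * t⁻¹)⁻¹
  let G := PresentedGroup {r}
  let a' : G := PresentedGroup.of false
  let t' : G := PresentedGroup.of true
  have hrel : Commute a' (t' * a' * t'⁻¹) := by
    have h1 : PresentedGroup.mk {r} r = 1 := PresentedGroup.one_of_mem rfl
    have h2 : a' * (t' * a' * t'⁻¹) * a'⁻¹ * (t' * a' * t'⁻¹)⁻¹ = 1 := by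
      rw [← h1]; simp only [r, map_mul, map_inv]; rfl
    rw [mul_inv_eq_one, mul_inv_eq_iff_eq_mul] at h2
    exact h2
  have hc : ∀ i : ℤ, Commute (t' ^ i * a' * (t' ^ i)⁻¹) (t' ^ (i+1) * a' * (t' ^ (i+1))⁻¹) := by
    intro i
    have := (hrel.map (MulAut.conj (t' ^ i)).toMonoidHom)
    simp only [MulEquiv.toMonoidHom_eq_coe, MonoidHom.coe_coe, MulAut.conj_apply] at this
    convert this using 1
    rw [zpow_add_one]; group
  let Ψ : RAAG lineGraph →* G := raagLift (fun i => t' ^ i * a' * (t' ^ i)⁻¹) (by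
    rintro u v (rfl | rfl)
    · exact hc u
    · exact (hc v).symm)
  let S := RAAG lineGraph ⋊[shiftAction] Multiplicative ℤ
  let A : S := SemidirectProduct.inl (gen lineGraph 0)
  let T : S := SemidirectProduct.inr (Multiplicative.ofAdd 1)
  have hT : ∀ i : ℤ, T ^ i * A * (T ^ i)⁻¹ = SemidirectProduct.inl (gen lineGraph i) := by
    intro i
    simp only [T, A]
    rw [← map_zpow, ← map_inv, ← SemidirectProduct.inl_aut]
    congr 1
    rw [← ofAdd_zsmul]
    change shiftHom (i • 1) (gen lineGraph 0) = _
    simp [shiftHom, gen]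
  let Φ : G →* S := PresentedGroup.toGroup (f := fun b => if b then T else A) (by
    intro x hx
    rw [Set.mem_singleton_iff.1 hx]
    simp only [r, a, t, map_mul, map_inv, FreeGroup.lift_apply_of]
    simp only [Bool.false_eq_true, if_false, if_true]
    have h1 := hT 1
    rw [zpow_one] at h1
    rw [h1, mul_inv_eq_one, mul_inv_eq_iff_eq_mul]
    simp only [A, ← map_mul]
    congr 1
    exact gen_commute (Or.inl (by simp)))
  have hcomp : Φ.comp Ψ = SemidirectProduct.inl := by
    apply PresentedGroup.ext
    intro i
    rw [← hT i]
    have hΦ0 : Φ a' = A := PresentedGroup.toGroup.of _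
    have hΦ1 : Φ t' = T := PresentedGroup.toGroup.of _
    simp only [MonoidHom.comp_apply, Ψ, raagLift_gen, map_mul, map_inv, map_zpow, hΦ0, hΦ1]
  refine ⟨Bool, r, Ψ, ?_⟩
  have : Function.Injective (Φ.comp Ψ) := by
    rw [hcomp]; exact SemidirectProduct.inl_injective
  exact Function.Injective.of_comp (f := Φ) this

/-! ### Star doubles -/

section Double
variable {L : Type} (Λ : SimpleGraph L) (q : L)

def St (y : L) : Prop := y = q ∨ Λ.Adj q y

abbrev DVert := {z : L × Bool // z.2 = false ∨ ¬ St Λ q z.1}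

def double : SimpleGraph (DVert Λ q) where
  Adj z z' := Λ.Adj z.1.1 z'.1.1 ∧ (z.1.2 = z'.1.2 ∨ St Λ q z.1.1 ∨ St Λ q z'.1.1)
  symm := ⟨fun z z' h => ⟨h.1.symm, by tauto⟩⟩
  loopless := ⟨fun z h => Λ.loopless.irrefl _ h.1⟩

open Classical in
noncomputable def cp (b : Bool) (y : L) : DVert Λ q :=
  if h : St Λ q y then ⟨(y, false), Or.inl rfl⟩ else ⟨(y, b), Or.inr h⟩

theorem cp_fst (b : Bool) (y : L) : (cp Λ q b y).1.1 = y := by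
  unfold cp; split_ifs <;> rfl

theorem cp_of_st {b : Bool} {y : L} (h : St Λ q y) : cp Λ q b y = ⟨(y, false), Or.inl rfl⟩ := by
  unfold cp; rw [dif_pos h]

theorem cp_of_not_st {b : Bool} {y : L} (h : ¬ St Λ q y) : cp Λ q b y = ⟨(y, b), Or.inr h⟩ := by
  unfold cp; rw [dif_neg h]

theorem cp_eq (z : DVert Λ q) : cp Λ q z.1.2 z.1.1 = z := by
  obtain ⟨⟨y, b⟩, h⟩ := z
  by_cases hs : St Λ q y
  · have : b = false := by tauto
    subst this
    exact cp_of_st Λ q hs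
  · exact cp_of_not_st Λ q hs

theorem cp_adj {b : Bool} {y y' : L} :
    (double Λ q).Adj (cp Λ q b y) (cp Λ q b y') ↔ Λ.Adj y y' := by
  simp only [double, cp_fst]
  constructor
  · exact fun h => h.1
  · intro h
    refine ⟨h, ?_⟩
    by_cases hs : St Λ q y
    · tauto
    by_cases hs' : St Λ q y'
    · tauto
    left
    rw [cp_of_not_st Λ q hs, cp_of_not_st Λ q hs']

def mulPerm {P : Type} [Group P] (x : Bool → P) : Equiv.Perm (P × Bool) where
  toFun z := (x z.2 * z.1, z.2)
  invFun z := ((x z.2)⁻¹ * z.1, z.2)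
  left_inv z := by simp
  right_inv z := by simp

def twistPerm {P : Type} [Group P] (v : P) : Equiv.Perm (P × Bool) where
  toFun z := if z.2 then (v * z.1, false) else (z.1, true)
  invFun z := if z.2 then (z.1, false) else (v⁻¹ * z.1, true)
  left_inv := by rintro ⟨p, _ | _⟩ <;> simp
  right_inv := by rintro ⟨p, _ | _⟩ <;> simp

open Classical in
noncomputable def dblPerm (y : L) : Equiv.Perm (RAAG (double Λ q) × Bool) :=
  if y = q then twistPerm (gen (double Λ q) (cp Λ q false q))
  else mulPerm (fun b => gen (double Λ q) (cp Λ q b y))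

theorem dblPerm_comm_q {y : L} (h : Λ.Adj q y) :
    Commute (dblPerm Λ q q) (dblPerm Λ q y) := by
  have hyq : y ≠ q := h.ne'
  have hsy : St Λ q y := Or.inr h
  unfold dblPerm
  rw [if_pos rfl, if_neg hyq]
  have hc : gen (double Λ q) (cp Λ q false q) * gen (double Λ q) (cp Λ q false y) =
    gen (double Λ q) (cp Λ q false y) * gen (double Λ q) (cp Λ q false q) :=
    gen_commute ((cp_adj Λ q).2 h)
  have e1 : cp Λ q true y = cp Λ q false y := by rw [cp_of_st Λ q hsy, cp_of_st Λ q hsy]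
  ext1 ⟨p, b⟩
  cases b
  · simp [twistPerm, mulPerm, Equiv.Perm.mul_apply, e1]
  · simp only [twistPerm, mulPerm, Equiv.Perm.mul_apply, Equiv.coe_fn_mk, e1, if_true]
    rw [← mul_assoc, ← mul_assoc, hc]

theorem dblPerm_comm {y y' : L} (h : Λ.Adj y y') :
    Commute (dblPerm Λ q y) (dblPerm Λ q y') := by
  by_cases hy : y = q
  · subst hy; exact dblPerm_comm_q Λ y h
  by_cases hy' : y' = q
  · subst hy'; exact (dblPerm_comm_q Λ y' h.symm).symm
  unfold dblPerm
  rw [if_neg hy, if_neg hy']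
  ext1 ⟨p, b⟩
  have hc : gen (double Λ q) (cp Λ q b y) * gen (double Λ q) (cp Λ q b y') =
    gen (double Λ q) (cp Λ q b y') * gen (double Λ q) (cp Λ q b y) :=
    gen_commute ((cp_adj Λ q).2 h)
  simp only [mulPerm, Equiv.Perm.mul_apply, Equiv.coe_fn_mk]
  rw [← mul_assoc, ← mul_assoc, hc]

open Classical in
noncomputable def dblGen (z : DVert Λ q) : RAAG Λ :=
  if z.1.1 = q then gen Λ q * gen Λ q
  else if z.1.2 then (gen Λ q)⁻¹ * gen Λ z.1.1 * gen Λ q else gen Λ z.1.1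

theorem dblGen_comm_aux {z z' : DVert Λ q} (h : (double Λ q).Adj z z') (hz : z.1.2 = false) :
    Commute (dblGen Λ q z) (dblGen Λ q z') := by
  obtain ⟨⟨y, b⟩, hy⟩ := z
  obtain ⟨⟨y', b'⟩, hy'⟩ := z'
  obtain ⟨h1, h2⟩ := h
  simp only at h1 h2 hz hy hy'
  subst hz
  have hc := gen_commute h1
  unfold dblGen
  simp only
  cases b'
  · simp only [Bool.false_eq_true, if_false]
    split_ifs with e1 e2 e2
    · subst e1; subst e2; exact Commute.refl _
    · subst e1; exact hc.mul_left hc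
    · subst e2; exact hc.mul_right hc
    · exact hc
  · have hs' : ¬ St Λ q y' := by simpa using hy'
    have hs : St Λ q y := by
      rcases h2 with h2 | h2 | h2
      · simp at h2
      · exact h2
      · exact absurd h2 hs'
    have hyq : y ≠ q := by rintro rfl; exact hs' (Or.inr h1)
    have hyq' : y' ≠ q := by rintro rfl; exact hs' (Or.inl rfl)
    have hqy : Λ.Adj q y := by rcases hs with h | h; exacts [absurd h hyq, h]
    have hcq := gen_commute hqy
    simp only [Bool.false_eq_true, if_false, if_true, hyq, hyq']
    exact (hcq.symm.inv_right.mul_right hc).mul_right hcq.symm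

theorem dblGen_comm {z z' : DVert Λ q} (h : (double Λ q).Adj z z') :
    Commute (dblGen Λ q z) (dblGen Λ q z') := by
  by_cases hz : z.1.2 = false
  · exact dblGen_comm_aux Λ q h hz
  by_cases hz' : z'.1.2 = false
  · exact (dblGen_comm_aux Λ q h.symm hz').symm
  obtain ⟨⟨y, b⟩, hy⟩ := z
  obtain ⟨⟨y', b'⟩, hy'⟩ := z'
  simp only [Bool.not_eq_false] at hz hz'
  subst hz; subst hz'
  have hs' : ¬ St Λ q y' := by simpa using hy'
  have hs : ¬ St Λ q y := by simpa using hy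
  have hyq : y ≠ q := by rintro rfl; exact hs (Or.inl rfl)
  have hyq' : y' ≠ q := by rintro rfl; exact hs' (Or.inl rfl)
  have := (gen_commute h.1).map (MulAut.conj (gen Λ q)⁻¹).toMonoidHom
  simpa [dblGen, hyq, hyq'] using this

theorem OR_double (h : OR Λ) : OR (double Λ q) := by
  let ψ : RAAG (double Λ q) →* RAAG Λ := raagLift (dblGen Λ q) (fun _ _ => dblGen_comm Λ q)
  let χ : RAAG Λ →* Equiv.Perm (RAAG (double Λ q) × Bool) :=
    raagLift (dblPerm Λ q) (fun _ _ => dblPerm_comm Λ q)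
  let N : Subgroup (RAAG (double Λ q)) :=
    { carrier := {d | ∀ p, χ (ψ d) (p, false) = (d * p, false)}
      one_mem' := by intro p; simp
      mul_mem' := by
        intro a b ha hb p
        simp only [map_mul, Equiv.Perm.mul_apply]
        rw [hb, ha, mul_assoc]
      inv_mem' := by
        intro a ha p
        rw [map_inv, map_inv, Equiv.Perm.inv_eq_iff_eq, ha]
        simp }
  have hN : N = ⊤ := by
    rw [eq_top_iff, ← PresentedGroup.closure_range_of, Subgroup.closure_le]
    rintro _ ⟨z, rfl⟩ p
    have hz := cp_eq Λ q z
    simp only [ψ, raagLift_gen, dblGen]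
    split_ifs with e1 e2
    · have hzq : z = cp Λ q false q := by
        rw [← hz, e1, cp_of_st Λ q (Or.inl rfl), cp_of_st Λ q (Or.inl rfl)]
      simp [χ, dblPerm, twistPerm, hzq]
    · simp only [gen, χ, map_mul, map_inv, raagLift_gen, dblPerm, if_pos, if_neg e1,
        Equiv.Perm.mul_apply, Equiv.Perm.inv_eq_iff_eq]
      rw [e2] at hz
      simp [twistPerm, mulPerm, hz]
    · simp only [gen, χ, raagLift_gen, dblPerm, if_neg e1]
      rw [Bool.eq_false_iff.2 e2] at hz
      simp [mulPerm, hz]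
  refine h.of_inj ψ ((injective_iff_map_eq_one ψ).2 fun d hd => ?_)
  have hd' : d ∈ N := by rw [hN]; trivial
  have := hd' 1
  rw [hd] at this
  simpa using this.symm

end Double

/-- Invariants of host graphs. -/
structure Good {L : Type} (Λ : SimpleGraph L) : Prop where
  tri : ∀ a b c, Λ.Adj a b → Λ.Adj b c → Λ.Adj c a → False
  sq : ∀ a b c d, a ≠ c → Λ.Adj a b → Λ.Adj b c → Λ.Adj a d → Λ.Adj d c → b = d
  deg : ∀ a, ∃ b c, b ≠ c ∧ Λ.Adj a b ∧ Λ.Adj a c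

theorem good_line : Good lineGraph where
  tri a b c := by simp only [lineGraph]; omega
  sq a b c d := by simp only [lineGraph]; omega
  deg a := ⟨a + 1, a - 1, by omega, by simp [lineGraph], by simp [lineGraph]⟩

theorem good_double {L : Type} {Λ : SimpleGraph L} (h : Good Λ) (q : L) : Good (double Λ q) where
  tri a b c h1 h2 h3 := h.tri _ _ _ h1.1 h2.1 h3.1
  deg a := by
    obtain ⟨b, c, hbc, hb, hc⟩ := h.deg a.1.1
    refine ⟨cp Λ q a.1.2 b, cp Λ q a.1.2 c, ?_, ?_, ?_⟩
    · intro he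
      apply hbc
      rw [← cp_fst Λ q a.1.2 b, he, cp_fst]
    · conv => enter [2]; rw [← cp_eq Λ q a]
      exact (cp_adj Λ q).2 hb
    · conv => enter [2]; rw [← cp_eq Λ q a]
      exact (cp_adj Λ q).2 hc
  sq := by
    have key : ∀ a c b : DVert Λ q, a ≠ c → a.1.1 = c.1.1 → (double Λ q).Adj a b →
        (double Λ q).Adj b c → Λ.Adj q b.1.1 ∧ ¬ St Λ q a.1.1 ∧ b.1.2 = false := by
      rintro ⟨⟨a, i⟩, ha⟩ ⟨⟨c, j⟩, hc⟩ ⟨⟨b, k⟩, hb⟩ hne rfl ⟨h1, h2⟩ ⟨h3, h4⟩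
      simp only at *
      have hij : i ≠ j := by rintro rfl; exact hne rfl
      have hs : ¬ St Λ q a := by
        intro hs; apply hij; rw [show i = false by tauto, show j = false by tauto]
      have hsb : St Λ q b := by
        by_contra hsb
        apply hij
        rw [show i = k by tauto, show k = j by tauto]
      refine ⟨?_, hs, by tauto⟩
      rcases hsb with rfl | h
      · exact absurd (Or.inr h1.symm) hs
      · exact h
    intro a b c d hac hab hbc had hdc
    by_cases e : a.1.1 = c.1.1
    · obtain ⟨h1, h2, h3⟩ := key a c b hac e hab hbc
      obtain ⟨h4, h5, h6⟩ := key a c d hac e had hdc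
      have : b.1.1 = d.1.1 := h.sq a.1.1 b.1.1 q d.1.1 (fun e => h2 (Or.inl e)) hab.1 h1.symm
        had.1 h4.symm
      rw [← cp_eq Λ q b, ← cp_eq Λ q d, h3, h6, this]
    · have e2 : b.1.1 = d.1.1 := h.sq _ _ _ _ e hab.1 hbc.1 had.1 hdc.1
      by_contra hbd
      obtain ⟨h1, h2, h3⟩ := key b d a hbd e2 hab.symm had
      obtain ⟨h4, h5, h6⟩ := key b d c hbd e2 hbc hdc.symm
      exact e (h.sq b.1.1 a.1.1 q c.1.1 (fun e => h2 (Or.inl e)) hab.1.symm h1.symm hbc.1 h4.symm)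

/-- `F` embeds as an induced subgraph in a good host graph. -/
def Host {V : Type} (F : SimpleGraph V) : Prop :=
  ∃ (L : Type) (Λ : SimpleGraph L), Good Λ ∧ OR Λ ∧ Nonempty (F ↪g Λ)

theorem Host.leaf {V W : Type} {F : SimpleGraph V} {F' : SimpleGraph W} (h : Host F)
    (ι : V → W) (hι : Function.Injective ι) (x : W) (hx : ∀ v, ι v ≠ x)
    (hcov : ∀ w, w = x ∨ ∃ v, ι v = w)
    (hadj : ∀ u v, F'.Adj (ι u) (ι v) ↔ F.Adj u v) (p : V)
    (hxp : ∀ v, F'.Adj x (ι v) ↔ v = p) : Host F' := by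
  classical
  obtain ⟨L, Λ, hg, hor, ⟨e⟩⟩ := h
  obtain ⟨q, y, hqy, hq, hy⟩ := hg.deg (e p)
  have hsy : ¬ St Λ q y := by
    rintro (rfl | h)
    · exact hqy rfl
    · exact hg.tri _ _ _ hq h hy.symm
  refine ⟨_, double Λ q, good_double hg q, OR_double Λ q hor, ?_⟩
  choose g hgι using fun w (hw : w ≠ x) => (hcov w).resolve_left hw
  let f : W → DVert Λ q := fun w => if hw : w = x then cp Λ q true y
    else cp Λ q false (e (g w hw))
  have fx : f x = cp Λ q true y := by simp [f]
  have fι : ∀ v, f (ι v) = cp Λ q false (e v) := by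
    intro v
    have : g (ι v) (hx v) = v := hι (hgι _ _)
    simp [f, hx v, this]
  have cp2 : ∀ a, (cp Λ q false a).1.2 = false := by
    intro a; unfold cp; split_ifs <;> rfl
  have hxv : ∀ v, (double Λ q).Adj (f x) (f (ι v)) ↔ F'.Adj x (ι v) := by
    intro v
    rw [hxp, fx, fι]
    constructor
    · rintro ⟨h1, h2⟩
      simp only [cp_fst, cp2] at h1 h2
      rw [cp_of_not_st Λ q hsy] at h2
      simp only [Bool.true_eq_false, false_or] at h2
      have hsv := h2.resolve_left hsy
      rcases hsv with hv | hv
      · rw [hv] at h1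
        exact absurd (Or.inr h1.symm) hsy
      · apply e.injective
        exact hg.sq y (e v) q (e p) (fun e => hsy (Or.inl e)) h1 hv.symm hy.symm hq
    · rintro rfl
      refine ⟨by simpa only [cp_fst] using hy.symm, Or.inr (Or.inr ?_)⟩
      rw [cp_fst]; exact Or.inr hq.symm
  have hadj' : ∀ w w', (double Λ q).Adj (f w) (f w') ↔ F'.Adj w w' := by
    intro w w'
    rcases hcov w with rfl | ⟨v, rfl⟩
    · rcases hcov w' with rfl | ⟨v', rfl⟩
      · simp
      · exact hxv v'
    · rcases hcov w' with rfl | ⟨v', rfl⟩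
      · rw [SimpleGraph.adj_comm, hxv, SimpleGraph.adj_comm]
      · rw [fι, fι, cp_adj, e.map_adj_iff, hadj]
  have hne : ∀ v, f (ι v) ≠ f x := by
    intro v hv
    have := cp2 (e v)
    rw [← fι, hv, fx, cp_of_not_st Λ q hsy] at this
    simp at this
  have hinj : Function.Injective f := by
    intro w w' hw
    rcases hcov w with rfl | ⟨v, rfl⟩
    · rcases hcov w' with rfl | ⟨v', rfl⟩
      · rfl
      · exact absurd hw.symm (hne v')
    · rcases hcov w' with rfl | ⟨v', rfl⟩
      · exact absurd hw (hne v)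
      · rw [fι, fι] at hw
        have := congrArg (fun z => z.1.1) hw
        simp only [cp_fst] at this
        rw [e.injective this]
  exact ⟨⟨⟨f, hinj⟩, fun {a b} => hadj' a b⟩⟩

theorem Host.of_embedding {V W : Type} {F : SimpleGraph V} {F' : SimpleGraph W} (h : Host F')
    (e : F ↪g F') : Host F := by
  obtain ⟨L, Λ, hg, hor, ⟨e'⟩⟩ := h
  exact ⟨L, Λ, hg, hor, ⟨e'.comp e⟩⟩

/-- Attach a pendant vertex. -/
def addLeaf {V : Type} (F : SimpleGraph V) (p : V) : SimpleGraph (Option V) where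
  Adj a b := match a, b with
    | some u, some v => F.Adj u v
    | none, some v => v = p
    | some v, none => v = p
    | none, none => False
  symm := ⟨by rintro (_ | u) (_ | v) h <;> simp_all; exact h.symm⟩
  loopless := ⟨by rintro (_ | u) h <;> simp_all⟩

theorem Host.addLeaf {V : Type} {F : SimpleGraph V} (h : Host F) (p : V) :
    Host (addLeaf F p) := by
  refine h.leaf some (Option.some_injective _) none (by simp) ?_ ?_ p ?_
  · rintro (_ | v)
    · exact Or.inl rfl
    · exact Or.inr ⟨v, rfl⟩
  · intro u v; rfl
  · intro v; rfl

theorem exists_leaf {V : Type} [Fintype V] [Nonempty V] {Γ : SimpleGraph V} (h : Γ.IsAcyclic) :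
    ∃ x, ∀ u v, Γ.Adj x u → Γ.Adj x v → u = v := by
  classical
  have htop : Γ ≤ ⊤ := le_top
  obtain ⟨T, hT, hTm⟩ := SimpleGraph.exists_maximal_isAcyclic_of_le_isAcyclic htop h
  have htree : T.IsTree := by
    rw [← SimpleGraph.maximal_isAcyclic_iff_isTree]
    refine ⟨hTm.1.2, fun T' hT' hle => hTm.2 ⟨le_top, hT'⟩ hle⟩
  rcases subsingleton_or_nontrivial V with hs | hn
  · exact ⟨Classical.arbitrary V, fun u v _ _ => Subsingleton.elim _ _⟩
  · obtain ⟨x, hx⟩ := htree.exists_vert_degree_one_of_nontrivial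
    refine ⟨x, fun u v hu hv => ?_⟩
    rw [SimpleGraph.degree_eq_one_iff_existsUnique_adj] at hx
    exact hx.unique (hT hu) (hT hv)

theorem host_of_acyclic (n : ℕ) : ∀ (V : Type) [Fintype V] (Γ : SimpleGraph V),
    Fintype.card V = n → Γ.IsAcyclic → Host Γ := by
  classical
  induction n with
  | zero =>
    intro V _ Γ hn h
    have : IsEmpty V := Fintype.card_eq_zero_iff.1 hn
    exact ⟨ℤ, lineGraph, good_line, OR_line, ⟨⟨⟨isEmptyElim, fun a => isEmptyElim a⟩,
      fun {a} => isEmptyElim a⟩⟩⟩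
  | succ n ih =>
    intro V _ Γ hn h
    have : Nonempty V := Fintype.card_pos_iff.1 (by omega)
    obtain ⟨x, hx⟩ := exists_leaf h
    let W : Set V := {x}ᶜ
    have hcard : Fintype.card W = n := by
      simp only [W, Fintype.card_compl_set, hn]; simp
    have hW : Host (Γ.induce W) := ih W (Γ.induce W) hcard (h.induce W)
    by_cases hadj : ∃ p, Γ.Adj x p
    · obtain ⟨p, hp⟩ := hadj
      have hpW : p ∈ W := hp.ne'
      refine hW.leaf (fun w => w.1) Subtype.val_injective x (fun v => v.2) ?_ ?_ ⟨p, hpW⟩ ?_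
      · intro w
        by_cases hw : w = x
        · exact Or.inl hw
        · exact Or.inr ⟨⟨w, hw⟩, rfl⟩
      · intro u v; rfl
      · intro v
        constructor
        · intro hv; exact Subtype.ext (hx _ _ hv hp)
        · rintro rfl; exact hp
    · push Not at hadj
      by_cases hWn : Nonempty W
      · obtain ⟨p⟩ := hWn
        have h2 := (hW.addLeaf p).addLeaf none
        let f : V → Option (Option W) := fun w => if hw : w = x then none else some (some ⟨w, hw⟩)
        have hf : Function.Injective f := by
          intro a b hab
          simp only [f] at hab
          split_ifs at hab with h1 h2 h2
          · rw [h1, h2]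
          · exact congrArg Subtype.val (Option.some.inj (Option.some.inj hab))
        refine h2.of_embedding ⟨⟨f, hf⟩, ?_⟩
        intro a b
        simp only [Function.Embedding.coeFn_mk, f]
        by_cases h1 : a = x
        · subst h1
          by_cases h2 : b = a
          · subst h2; simp
          · simp [h2, RaagProof.addLeaf, hadj]
        · by_cases h2 : b = x
          · subst h2
            have : ¬ Γ.Adj a b := fun h => hadj _ h.symm
            simp [h1, RaagProof.addLeaf, this]
          · simp [h1, h2, RaagProof.addLeaf]
      · have hall : ∀ w, w = x := by
          intro w; by_contra hw; exact hWn ⟨⟨w, hw⟩⟩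
        refine ⟨ℤ, lineGraph, good_line, OR_line, ⟨⟨⟨fun _ => 0, ?_⟩, ?_⟩⟩⟩
        · intro a b _; rw [hall a, hall b]
        · intro a b
          rw [hall a, hall b]; simp

theorem OR_of_acyclic {V : Type} [Fintype V] {Γ : SimpleGraph V} (h : Γ.IsAcyclic) : OR Γ := by
  obtain ⟨L, Λ, _, hor, ⟨e⟩⟩ := host_of_acyclic _ V Γ rfl h
  exact hor.of_embedding e

end RaagProof

namespace RaagProof

/-! ### Stackings of cyclic words -/

section Stacking
set_option linter.unusedSectionVars false
variable {B : Type} {l : ℕ} [NeZero l]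

def linv (a : B × Bool) : B × Bool := (a.1, !a.2)

@[simp] theorem linv_linv (a : B × Bool) : linv (linv a) = a := by simp [linv]

theorem linv_inj {a b : B × Bool} : linv a = linv b ↔ a = b :=
  ⟨fun h => by rw [← linv_linv a, h, linv_linv], fun h => by rw [h]⟩

theorem linv_ne (a : B × Bool) : linv a ≠ a := by
  intro h
  have := congrArg Prod.snd h
  simp [linv] at this

def org (d : ZMod l × Bool) : ZMod l := if d.2 then d.1 else d.1 + 1
def ter (d : ZMod l × Bool) : ZMod l := if d.2 then d.1 + 1 else d.1
def lab (w : ZMod l → B × Bool) (d : ZMod l × Bool) : B × Bool :=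
  if d.2 then w d.1 else linv (w d.1)
def rev (d : ZMod l × Bool) : ZMod l × Bool := (d.1, !d.2)

@[simp] theorem org_rev (d : ZMod l × Bool) : org (rev d) = ter d := by
  obtain ⟨i, _ | _⟩ := d <;> simp [org, ter, rev]
@[simp] theorem ter_rev (d : ZMod l × Bool) : ter (rev d) = org d := by
  obtain ⟨i, _ | _⟩ := d <;> simp [org, ter, rev]
@[simp] theorem lab_rev (w : ZMod l → B × Bool) (d : ZMod l × Bool) :
    lab w (rev d) = linv (lab w d) := by
  obtain ⟨i, _ | _⟩ := d <;> simp [lab, rev]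

/-- Compatibility of a height function with the word. -/
def Compat (w : ZMod l → B × Bool) (t : ZMod l → ℝ) : Prop :=
  ∀ d d', lab w d = lab w d' → (t (org d) < t (org d') ↔ t (ter d) < t (ter d'))

theorem Compat.eq_iff {w : ZMod l → B × Bool} {t : ZMod l → ℝ} (h : Compat w t)
    {d d' : ZMod l × Bool} (hl : lab w d = lab w d') :
    t (org d) = t (org d') ↔ t (ter d) = t (ter d') := by
  have h1 := h d d' hl
  have h2 := h d' d hl.symm
  constructor
  · intro e
    apply le_antisymm
    · rw [← not_lt, ← h2]; exact not_lt.2 e.le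
    · rw [← not_lt, ← h1]; exact not_lt.2 e.ge
  · intro e
    apply le_antisymm
    · rw [← not_lt, h2]; exact not_lt.2 e.le
    · rw [← not_lt, h1]; exact not_lt.2 e.ge

open Classical in
/-- The two darts leaving a position determine the class when there are only two dart classes. -/
theorem stack_no_two (w : ZMod l → B × Bool) (hred : ∀ i, w (i + 1) ≠ linv (w i))
    (hprim : ∀ k : ZMod l, (∀ i, w (i + k) = w i) → k = 0)
    (t : ZMod l → ℝ) (ht : Compat w t)
    (h2 : ∀ a b c : ZMod l × Bool, t (org a) = t (org b) → t (org b) = t (org c) →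
      lab w a = lab w b ∨ lab w b = lab w c ∨ lab w a = lab w c) :
    Function.Injective t := by
  intro i j hij
  -- out dart and in dart
  have hA : ∀ i j, t i = t j → w (i - 1) = w (j - 1) → w i = w j := by
    intro i j hij hw
    have := h2 (i, true) (i - 1, false) (j, true) (by simp [org]) (by simpa [org] using hij)
    simp only [lab] at this
    simp only [if_true, Bool.false_eq_true, if_false] at this
    rcases this with h | h | h
    · have := hred (i - 1); rw [sub_add_cancel] at this; exact absurd h this
    · have := hred (j - 1); rw [sub_add_cancel] at this
      rw [hw] at h; exact absurd h.symm this
    · exact h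
  have hB : ∀ i j, t i = t j → linv (w (i - 1)) = w j → w i = linv (w (j - 1)) := by
    intro i j hij hw
    have := h2 (i, true) (i - 1, false) (j - 1, false) (by simp [org]) (by simpa [org] using hij)
    simp only [lab] at this
    simp only [if_true, Bool.false_eq_true, if_false] at this
    rcases this with h | h | h
    · have := hred (i - 1); rw [sub_add_cancel] at this; exact absurd h this
    · rw [hw] at h
      have := hred (j - 1); rw [sub_add_cancel] at this; exact absurd h this
    · exact h
  have hC : w i = w j ∨ w i = linv (w (j - 1)) := by
    have := h2 (i, true) (j, true) (j - 1, false) (by simpa [org] using hij) (by simp [org])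
    simp only [lab] at this
    simp only [if_true, Bool.false_eq_true, if_false] at this
    rcases this with h | h | h
    · exact Or.inl h
    · have := hred (j - 1); rw [sub_add_cancel] at this; exact absurd h this
    · exact Or.inr h
  rcases hC with hC | hC
  · have key : ∀ k : ℕ, t (i + k) = t (j + k) ∧ w (i + k) = w (j + k) := by
      intro k
      induction k with
      | zero => simpa using ⟨hij, hC⟩
      | succ k ih =>
        have h1 : t (i + (k + 1 : ℕ)) = t (j + (k + 1 : ℕ)) := by
          have := (ht.eq_iff (d := (i + k, true)) (d' := (j + k, true))
            (by simpa [lab] using ih.2)).1 (by simpa [org] using ih.1)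
          simpa [ter, add_assoc] using this
        refine ⟨h1, hA _ _ h1 ?_⟩
        have e : ∀ x : ZMod l, x + (k + 1 : ℕ) - 1 = x + k := by intro x; push_cast; ring
        rw [e, e]; exact ih.2
    have : j - i = 0 := by
      apply hprim
      intro x
      have := (key (x - i).val).2
      rw [ZMod.natCast_zmod_val] at this
      rw [show i + (x - i) = x by ring, show j + (x - i) = x + (j - i) by ring] at this
      exact this.symm
    exact (sub_eq_zero.1 this).symm
  · exfalso
    have key : ∀ k : ℕ, t (i + k) = t (j - k) ∧ w (i + k) = linv (w (j - 1 - k)) := by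
      intro k
      induction k with
      | zero => simpa using ⟨hij, hC⟩
      | succ k ih =>
        have h1 : t (i + (k + 1 : ℕ)) = t (j - (k + 1 : ℕ)) := by
          have := (ht.eq_iff (d := (i + k, true)) (d' := (j - 1 - k, false))
            (by simpa [lab] using ih.2)).1 (by
              simp only [org, if_true, Bool.false_eq_true, if_false]
              rw [ih.1]; congr 1; ring)
          simp only [ter, if_true, Bool.false_eq_true, if_false] at this
          rw [show i + ((k + 1 : ℕ) : ZMod l) = i + k + 1 by push_cast; ring,
            show j - ((k + 1 : ℕ) : ZMod l) = j - 1 - k by push_cast; ring, this]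
        refine ⟨h1, ?_⟩
        have := hB _ _ h1 (by
          rw [show i + ((k + 1 : ℕ) : ZMod l) - 1 = i + k by push_cast; ring,
            show j - ((k + 1 : ℕ) : ZMod l) = j - 1 - k by push_cast; ring, ih.2, linv_linv])
        rw [this]; congr 2; ring
    have key2 : ∀ x : ZMod l, w x = linv (w (i + j - 1 - x)) := by
      intro x
      have := (key (x - i).val).2
      rw [ZMod.natCast_zmod_val] at this
      rw [show i + (x - i) = x by ring, show j - 1 - (x - i) = i + j - 1 - x by ring] at this
      exact this
    obtain ⟨y, hy⟩ : ∃ y : ZMod l, i + j = 2 * y ∨ i + j = 2 * y + 1 := by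
      have e : i + j = ((i.val + j.val : ℕ) : ZMod l) := by push_cast; simp
      rcases Nat.even_or_odd' (i.val + j.val) with ⟨y, hy | hy⟩
      · exact ⟨y, Or.inl (by rw [e, hy]; push_cast; ring)⟩
      · exact ⟨y, Or.inr (by rw [e, hy]; push_cast; ring)⟩
    rcases hy with hy | hy
    · have := key2 (y - 1)
      rw [hy, show 2 * y - 1 - (y - 1) = (y - 1) + 1 by ring] at this
      apply hred (y - 1)
      rw [this, linv_linv]
    · have := key2 y
      rw [hy, show 2 * y + 1 - 1 - y = y by ring] at this
      exact linv_ne _ this.symm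

open Classical in
noncomputable def ekey (w : ZMod l → B × Bool) (t : ZMod l → ℝ) (i : ZMod l) : B × ℝ :=
  ((w i).1, if (w i).2 then t i else t (i + 1))

open Classical in
noncomputable def vset (t : ZMod l → ℝ) : Finset ℝ := Finset.univ.image t
open Classical in
noncomputable def eset (w : ZMod l → B × Bool) (t : ZMod l → ℝ) : Finset (B × ℝ) :=
  Finset.univ.image (ekey w t)

open Classical in
theorem stack_card (w : ZMod l → B × Bool) (hred : ∀ i, w (i + 1) ≠ linv (w i))
    (hprim : ∀ k : ZMod l, (∀ i, w (i + k) = w i) → k = 0)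
    (t : ZMod l → ℝ) (ht : Compat w t) (hni : ¬ Function.Injective t) :
    (vset t).card < (eset w t).card := by
  -- dart classes
  let cls : ZMod l × Bool → (B × Bool) × ℝ := fun d => (lab w d, t (org d))
  let D : Finset ((B × Bool) × ℝ) := Finset.univ.image cls
  have hDE : D.card ≤ 2 * (eset w t).card := by
    have hsplit : D.card = (D.filter (fun x => x.1.2 = true)).card +
        (D.filter (fun x => ¬ x.1.2 = true)).card := by
      rw [Finset.card_filter_add_card_filter_not]
    have h1 : (D.filter (fun x => x.1.2 = true)).card ≤ (eset w t).card := by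
      apply Finset.card_le_card_of_injOn (fun x => (x.1.1, x.2))
      · intro x hx
        simp only [Finset.coe_filter, Set.mem_ofPred_eq, D, Finset.mem_image, Finset.mem_univ,
          true_and] at hx
        obtain ⟨⟨⟨i, ε⟩, rfl⟩, hx⟩ := hx
        simp only [eset, Finset.coe_image, Set.mem_image, Finset.coe_univ, Set.mem_univ, true_and]
        refine ⟨i, ?_⟩
        cases ε
        · simp only [cls, lab, linv, org, Bool.false_eq_true, if_false] at hx ⊢
          simp only [Bool.not_eq_true'] at hx
          simp [ekey, hx]
        · simp only [cls, lab, org, if_true] at hx ⊢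
          simp [ekey, hx]
      · rintro ⟨⟨b, e⟩, x⟩ hx ⟨⟨b', e'⟩, x'⟩ hx' h
        simp only [Finset.coe_filter, Set.mem_ofPred_eq] at hx hx'
        simp only [Prod.mk.injEq] at h ⊢
        exact ⟨⟨h.1, by rw [hx.2, hx'.2]⟩, h.2⟩
    have h2 : (D.filter (fun x => ¬ x.1.2 = true)).card ≤ (eset w t).card := by
      have hch : ∀ x : (B × Bool) × ℝ, ∃ d, x ∈ D → cls d = x := by
        intro x
        by_cases hx : x ∈ D
        · obtain ⟨d, -, hd⟩ := Finset.mem_image.1 hx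
          exact ⟨d, fun _ => hd⟩
        · exact ⟨(0, true), fun h => absurd h hx⟩
      choose c hc using hch
      apply Finset.card_le_card_of_injOn (fun x => (x.1.1, t (ter (c x))))
      · intro x hx
        simp only [Finset.coe_filter, Set.mem_ofPred_eq] at hx
        obtain ⟨hxD, hx⟩ := hx
        have hcx := hc x hxD
        simp only
        generalize c x = d at hcx
        obtain ⟨i, ε⟩ := d
        subst hcx
        simp only [eset, Finset.coe_image, Set.mem_image, Finset.coe_univ, Set.mem_univ, true_and]
        refine ⟨i, ?_⟩
        cases ε
        · simp only [cls, lab, linv, ter, Bool.false_eq_true, if_false] at hx ⊢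
          simp only [Bool.not_eq_true', Bool.not_eq_false] at hx
          simp [ekey, hx]
        · simp only [cls, lab, ter, if_true] at hx ⊢
          simp [ekey, hx]
      · intro x hx x' hx' h
        simp only [Finset.coe_filter, Set.mem_ofPred_eq] at hx hx'
        have e1 := hc x hx.1
        have e2 := hc x' hx'.1
        simp only [Prod.mk.injEq] at h
        have hx2 : x.1 = x'.1 := Prod.ext h.1 (by
          rw [Bool.eq_false_iff.2 hx.2, Bool.eq_false_iff.2 hx'.2])
        have hl : lab w (c x) = lab w (c x') := by
          have a1 : lab w (c x) = x.1 := congrArg Prod.fst e1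
          have a2 : lab w (c x') = x'.1 := congrArg Prod.fst e2
          rw [a1, a2, hx2]
        rw [← e1, ← e2]
        exact Prod.ext hl ((ht.eq_iff hl).2 h.2)
    omega
  have hD : 2 * (vset t).card < D.card := by
    have hmap : ∀ x ∈ D, x.2 ∈ vset t := by
      intro x hx
      obtain ⟨d, -, rfl⟩ := Finset.mem_image.1 hx
      exact Finset.mem_image.2 ⟨org d, Finset.mem_univ _, rfl⟩
    rw [Finset.card_eq_sum_card_fiberwise hmap, mul_comm, ← smul_eq_mul, ← Finset.sum_const]
    have hge : ∀ v ∈ vset t, 2 ≤ (D.filter (fun x => x.2 = v)).card := by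
      intro v hv
      obtain ⟨i, -, rfl⟩ := Finset.mem_image.1 hv
      apply Finset.one_lt_card.2
      refine ⟨cls (i, true), ?_, cls (i - 1, false), ?_, ?_⟩
      · exact Finset.mem_filter.2 ⟨Finset.mem_image_of_mem _ (Finset.mem_univ _), by simp [cls, org]⟩
      · simp only [Finset.mem_filter, D]
        exact ⟨Finset.mem_image_of_mem _ (Finset.mem_univ _), by simp [cls, org]⟩
      · intro h
        have := congrArg Prod.fst h
        simp only [cls, lab, if_true, Bool.false_eq_true, if_false] at this
        have h3 := hred (i - 1)
        rw [sub_add_cancel] at h3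
        exact h3 this
    apply Finset.sum_lt_sum hge
    by_contra hcon
    push Not at hcon
    apply hni
    apply stack_no_two w hred hprim t ht
    intro a b c hab hbc
    by_contra hne
    push Not at hne
    have := hcon (t (org b)) (Finset.mem_image_of_mem _ (Finset.mem_univ _))
    have h3 : 2 < (D.filter (fun x => x.2 = t (org b))).card := by
      apply Finset.two_lt_card.2
      refine ⟨cls a, ?_, cls b, ?_, cls c, ?_, ?_, ?_, ?_⟩
      · exact Finset.mem_filter.2 ⟨Finset.mem_image_of_mem _ (Finset.mem_univ _), hab⟩
      · exact Finset.mem_filter.2 ⟨Finset.mem_image_of_mem _ (Finset.mem_univ _), rfl⟩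
      · exact Finset.mem_filter.2 ⟨Finset.mem_image_of_mem _ (Finset.mem_univ _), hbc.symm⟩
      · exact fun h => hne.1 (congrArg Prod.fst h)
      · exact fun h => hne.2.2 (congrArg Prod.fst h)
      · exact fun h => hne.2.1 (congrArg Prod.fst h)
    omega
  omega

def lsgn (a : B × Bool) : ℝ := if a.2 then 1 else -1

open Classical in
theorem stack_refine (w : ZMod l → B × Bool) (t : ZMod l → ℝ) (ht : Compat w t)
    (hcard : (vset t).card < (eset w t).card) :
    ∃ h : ZMod l → ℝ, (∀ d d', lab w d = lab w d' → t (org d) = t (org d') →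
      h (ter d) - h (org d) = h (ter d') - h (org d')) ∧ ∃ i j, t i = t j ∧ h i ≠ h j := by
  have hk : ∀ i, ekey w t i ∈ eset w t := fun i => Finset.mem_image_of_mem _ (Finset.mem_univ _)
  let T : ((ZMod l → ℝ) × (eset w t → ℝ)) →ₗ[ℝ] (ZMod l → ℝ) :=
    { toFun := fun p i => p.1 (i + 1) - p.1 i - lsgn (w i) * p.2 ⟨ekey w t i, hk i⟩
      map_add' := by intro p q; ext i; simp; ring
      map_smul' := by intro c p; ext i; simp; ring }
  have hker : (eset w t).card ≤ Module.finrank ℝ (LinearMap.ker T) := by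
    have h1 := LinearMap.finrank_range_add_finrank_ker T
    have h2 : Module.finrank ℝ (LinearMap.range T) ≤ Module.finrank ℝ (ZMod l → ℝ) :=
      Submodule.finrank_le _
    rw [Module.finrank_prod] at h1
    simp only [Module.finrank_fintype_fun_eq_card, Fintype.card_coe] at h1 h2
    omega
  by_contra hcon
  push Not at hcon
  have hsol : ∀ p ∈ LinearMap.ker T, ∀ i j, t i = t j → p.1 i = p.1 j := by
    intro p hp
    apply hcon
    have hp' : ∀ i, p.1 (i + 1) - p.1 i = lsgn (w i) * p.2 ⟨ekey w t i, hk i⟩ := by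
      intro i
      have : T p i = 0 := by rw [LinearMap.mem_ker.1 hp]; rfl
      simp only [T, LinearMap.coe_mk, AddHom.coe_mk] at this
      linarith
    have hd : ∀ d : ZMod l × Bool, p.1 (ter d) - p.1 (org d) =
        lsgn (lab w d) * p.2 ⟨ekey w t d.1, hk d.1⟩ := by
      rintro ⟨i, ε⟩
      cases ε
      · have := hp' i
        simp only [ter, org, lab, Bool.false_eq_true, if_false]
        have e : lsgn (linv (w i)) = - lsgn (w i) := by
          unfold lsgn linv
          cases (w i).2 <;> simp
        rw [e]; linarith
      · simpa [ter, org, lab] using hp' i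
    have hkey : ∀ d : ZMod l × Bool, ekey w t d.1 = ((lab w d).1,
        if (lab w d).2 then t (org d) else t (ter d)) := by
      rintro ⟨i, ε⟩
      cases ε
      · simp only [ekey, lab, linv, org, ter, Bool.false_eq_true, if_false]
        cases (w i).2 <;> simp
      · simp [ekey, lab, org, ter]
    intro d d' hl ho
    have he : ekey w t d.1 = ekey w t d'.1 := by
      rw [hkey, hkey, hl, ho, (ht.eq_iff hl).1 ho]
    rw [hd, hd, hl]
    have : (⟨ekey w t d.1, hk d.1⟩ : eset w t) = ⟨ekey w t d'.1, hk d'.1⟩ := Subtype.ext he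
    rw [this]
  have hsec : ∀ v : vset t, ∃ i, t i = v.1 := by
    rintro ⟨v, hv⟩
    obtain ⟨i, -, hi⟩ := Finset.mem_image.1 hv
    exact ⟨i, hi⟩
  choose s hs using hsec
  let R : LinearMap.ker T →ₗ[ℝ] (vset t → ℝ) :=
    { toFun := fun p v => p.1.1 (s v)
      map_add' := by intro p q; ext i; simp
      map_smul' := by intro c p; ext i; simp }
  have hR : Function.Injective R := by
    rw [← LinearMap.ker_eq_bot, LinearMap.ker_eq_bot']
    rintro ⟨p, hp⟩ h0
    have h1 : p.1 = 0 := by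
      ext i
      have hi : t i ∈ vset t := Finset.mem_image_of_mem _ (Finset.mem_univ _)
      have h2 : p.1 (s ⟨t i, hi⟩) = 0 := congrFun h0 ⟨t i, hi⟩
      rw [hsol p hp i (s ⟨t i, hi⟩) (hs ⟨t i, hi⟩).symm, h2]; rfl
    have h2 : p.2 = 0 := by
      ext ⟨e, he⟩
      obtain ⟨i, -, rfl⟩ := Finset.mem_image.1 he
      have : T p i = 0 := by rw [LinearMap.mem_ker.1 hp]; rfl
      simp only [T, LinearMap.coe_mk, AddHom.coe_mk, h1] at this
      have hne : lsgn (w i) ≠ 0 := by unfold lsgn; split_ifs <;> norm_num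
      simpa [hne] using this
    ext1
    exact Prod.ext h1 h2
  have := LinearMap.finrank_le_finrank_of_injective hR
  simp only [Module.finrank_fintype_fun_eq_card, Fintype.card_coe] at this
  omega

open Classical in
theorem exists_stacking (w : ZMod l → B × Bool) (hred : ∀ i, w (i + 1) ≠ linv (w i))
    (hprim : ∀ k : ZMod l, (∀ i, w (i + k) = w i) → k = 0) :
    ∃ t : ZMod l → ℝ, Compat w t ∧ Function.Injective t := by
  let bad : (ZMod l → ℝ) → Finset (ZMod l × ZMod l) := fun t =>
    Finset.univ.filter (fun p => t p.1 = t p.2)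
  have hex : ∃ n : ℕ, ∃ t, Compat w t ∧ (bad t).card = n :=
    ⟨_, fun _ => 0, fun d d' _ => by simp, rfl⟩
  obtain ⟨t, ht, hn⟩ := Nat.find_spec hex
  refine ⟨t, ht, ?_⟩
  by_contra hni
  obtain ⟨h, hh, i0, j0, hij, hhij⟩ := stack_refine w t ht (stack_card w hred hprim t ht hni)
  have hev : ∀ᶠ ε : ℝ in nhdsWithin 0 (Set.Ioi 0), ∀ i j, t i < t j →
      t i + ε * h i < t j + ε * h j := by
    rw [Filter.eventually_all]; intro i
    rw [Filter.eventually_all]; intro j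
    rw [Filter.eventually_imp_distrib_left]
    intro hlt
    apply Filter.Eventually.filter_mono nhdsWithin_le_nhds
    have c1 : Continuous fun ε : ℝ => t i + ε * h i := by fun_prop
    have c2 : Continuous fun ε : ℝ => t j + ε * h j := by fun_prop
    exact (c1.tendsto 0).eventually_lt (c2.tendsto 0) (by simpa using hlt)
  obtain ⟨ε, hε, hpos⟩ := (hev.and self_mem_nhdsWithin).exists
  replace hpos : 0 < ε := hpos
  let t' : ZMod l → ℝ := fun i => t i + ε * h i
  have hlt : ∀ i j, t' i < t' j ↔ (t i < t j ∨ (t i = t j ∧ h i < h j)) := by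
    intro i j
    simp only [t']
    rcases lt_trichotomy (t i) (t j) with h1 | h1 | h1
    · simp [hε i j h1, h1]
    · simp [h1, hpos]
    · simp only [h1.not_gt, h1.ne', false_and, or_false, iff_false, not_lt]
      exact (hε j i h1).le
  have hc : Compat w t' := by
    intro d d' hl
    rw [hlt, hlt, ht d d' hl, ht.eq_iff hl]
    constructor
    · rintro (h1 | ⟨h1, h2⟩)
      · exact Or.inl h1
      · have := hh d d' hl ((ht.eq_iff hl).2 h1)
        exact Or.inr ⟨h1, by linarith⟩
    · rintro (h1 | ⟨h1, h2⟩)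
      · exact Or.inl h1
      · have := hh d d' hl ((ht.eq_iff hl).2 h1)
        exact Or.inr ⟨h1, by linarith⟩
  have hss : bad t' ⊂ bad t := by
    rw [Finset.ssubset_iff_of_subset]
    · refine ⟨(i0, j0), by simp [bad, hij], ?_⟩
      simp only [bad, Finset.mem_filter, Finset.mem_univ, true_and, t', hij]
      intro e
      have : ε * h i0 = ε * h j0 := by linarith
      exact hhij (mul_left_cancel₀ hpos.ne' this)
    · rintro ⟨i, j⟩ hp
      simp only [bad, Finset.mem_filter, Finset.mem_univ, true_and] at hp ⊢
      by_contra hne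
      rcases lt_or_gt_of_ne hne with h1 | h1
      · exact ((hlt i j).2 (Or.inl h1)).ne hp
      · exact ((hlt j i).2 (Or.inl h1)).ne hp.symm
  have := Finset.card_lt_card hss
  exact Nat.find_min hex (by omega) ⟨t', hc, rfl⟩

end Stacking
end RaagProof

namespace RaagProof

/-! ### Counting with a stacking -/

section Count
set_option linter.unusedSectionVars false
variable {B X : Type} {l : ℕ} [NeZero l] (act : B → Equiv.Perm X) (w : ZMod l → B × Bool)

def step (a : B × Bool) : Equiv.Perm X := if a.2 then act a.1 else (act a.1)⁻¹

/-- The shift on strands. -/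
def shift : Equiv.Perm (X × ZMod l) where
  toFun p := (step act (w p.2) p.1, p.2 + 1)
  invFun p := ((step act (w (p.2 - 1)))⁻¹ p.1, p.2 - 1)
  left_inv p := by simp
  right_inv p := by simp

theorem shift_snd (p : X × ZMod l) : (shift act w p).2 = p.2 + 1 := rfl
theorem shift_fst (p : X × ZMod l) : (shift act w p).1 = step act (w p.2) p.1 := rfl

theorem shift_pow_snd (k : ℕ) (p : X × ZMod l) : ((shift act w ^ k) p).2 = p.2 + k := by
  induction k with
  | zero => simp
  | succ k ih =>
    rw [pow_succ', Equiv.Perm.mul_apply, shift_snd, ih]; push_cast; ring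

/-- The edge crossed by a strand. -/
def edg (p : X × ZMod l) : X × B :=
  (if (w p.2).2 then p.1 else (shift act w p).1, (w p.2).1)

/-- The strand with the positive direction. -/
def pd (p : X × ZMod l) : ZMod l × Bool := (p.2, (w p.2).2)

/-- strand at the source of the edge -/
def sst (p : X × ZMod l) : X × ZMod l := if (w p.2).2 then p else shift act w p
def tst (p : X × ZMod l) : X × ZMod l := if (w p.2).2 then shift act w p else p

theorem sst_eq (p : X × ZMod l) : sst act w p = ((edg act w p).1, org (pd w p)) := by
  unfold sst edg pd org
  cases h : (w p.2).2 <;> simp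
  exact Prod.ext rfl (shift_snd act w p)

theorem tst_eq (p : X × ZMod l) :
    tst act w p = (act (edg act w p).2 (edg act w p).1, ter (pd w p)) := by
  unfold tst edg pd ter
  cases h : (w p.2).2 <;> simp [shift, step, h]

theorem lab_pd (p : X × ZMod l) : lab w (pd w p) = ((edg act w p).2, true) := by
  unfold lab pd edg linv
  cases h : (w p.2).2 <;> simp [h]
  exact Prod.ext rfl h

variable (t : ZMod l → ℝ)

def sht (p : X × ZMod l) : ℝ := t (org (pd w p))

theorem sht_inj (hred : ∀ i, w (i + 1) ≠ linv (w i)) (ht : Function.Injective t)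
    {p q : X × ZMod l} (he : edg act w p = edg act w q) (hh : sht w t p = sht w t q) : p = q := by
  have ho : org (pd w p) = org (pd w q) := ht hh
  have hs : sst act w p = sst act w q := by rw [sst_eq, sst_eq, he, ho]
  have h1 : (w p.2).1 = (w q.2).1 := congrArg Prod.snd he
  unfold sst at hs
  cases hp : (w p.2).2 <;> cases hq : (w q.2).2 <;>
    simp only [hp, hq, if_true, Bool.false_eq_true, if_false] at hs
  · exact (shift act w).injective hs
  · exfalso
    apply hred p.2
    rw [← shift_snd act w p, hs]
    exact Prod.ext h1.symm (by simp [linv, hp, hq])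
  · exfalso
    apply hred q.2
    rw [← shift_snd act w q, ← hs]
    exact Prod.ext h1 (by simp [linv, hp, hq])
  · exact hs

variable (S : Finset (X × ZMod l))

def TE (p : X × ZMod l) : Prop := p ∈ S ∧ ∀ q ∈ S, edg act w q = edg act w p → sht w t q ≤ sht w t p
def TV (p : X × ZMod l) : Prop := p ∈ S ∧ ∀ q ∈ S, q.1 = p.1 → t q.2 ≤ t p.2

variable {S} {t} {w}

theorem sht_le_iff (hc : Compat w t) {p q : X × ZMod l} (he : edg act w p = edg act w q) :
    sht w t p ≤ sht w t q ↔ t (ter (pd w p)) ≤ t (ter (pd w q)) := by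
  have hl : lab w (pd w q) = lab w (pd w p) := by rw [lab_pd act, lab_pd act, he]
  rw [← not_lt, ← not_lt, sht, sht, hc _ _ hl]

theorem TE_of_sst (hS : ∀ p ∈ S, shift act w p ∈ S) {p : X × ZMod l} (hp : p ∈ S)
    (h : TV t S (sst act w p)) : TE act w t S p := by
  refine ⟨hp, fun q hq he => ?_⟩
  have h2 := h.2 (sst act w q) (by unfold sst; split_ifs; exacts [hq, hS q hq])
    (by rw [sst_eq, sst_eq, he])
  rw [sst_eq, sst_eq] at h2
  exact h2

theorem TE_of_tst (hc : Compat w t) (hS : ∀ p ∈ S, shift act w p ∈ S) {p : X × ZMod l}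
    (hp : p ∈ S) (h : TV t S (tst act w p)) : TE act w t S p := by
  refine ⟨hp, fun q hq he => ?_⟩
  have h2 := h.2 (tst act w q) (by unfold tst; split_ifs; exacts [hS q hq, hq])
    (by rw [tst_eq, tst_eq, he])
  rw [tst_eq, tst_eq] at h2
  rw [sht_le_iff act hc he]
  exact h2

theorem TE_of_TV (hc : Compat w t) (hS : ∀ p ∈ S, shift act w p ∈ S) {p : X × ZMod l}
    (h : TV t S p) : TE act w t S p := by
  cases hp : (w p.2).2
  · exact TE_of_tst act hc hS h.1 (by unfold tst; simpa [hp] using h)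
  · exact TE_of_sst act hS h.1 (by unfold sst; simpa [hp] using h)

theorem TE_of_TV_shift (hc : Compat w t) (hS : ∀ p ∈ S, shift act w p ∈ S) {p : X × ZMod l}
    (hpS : p ∈ S) (h : TV t S (shift act w p)) : TE act w t S p := by
  cases hp : (w p.2).2
  · exact TE_of_sst act hS hpS (by unfold sst; simpa [hp] using h)
  · exact TE_of_tst act hc hS hpS (by unfold tst; simpa [hp] using h)

theorem exists_forward_bad (hred : ∀ i, w (i + 1) ≠ linv (w i)) (hc : Compat w t)
    (ht : Function.Injective t) (hS : ∀ p ∈ S, shift act w p ∈ S)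
    (hdup : ∀ p ∈ S, ∃ q ∈ S, q ≠ p ∧ edg act w q = edg act w p)
    (C : Finset (X × ZMod l)) (hCS : C ⊆ S) (hC : ∀ p ∈ C, shift act w p ∈ C)
    (hne : C.Nonempty) : ∃ p ∈ C, TE act w t S p ∧ ¬ TV t S (shift act w p) := by
  by_contra hcon
  push Not at hcon
  have hpow : ∀ k : ℕ, ∀ p ∈ C, (shift act w ^ k) p ∈ C := by
    intro k
    induction k with
    | zero => intro p hp; simpa using hp
    | succ k ih => intro p hp; rw [pow_succ', Equiv.Perm.mul_apply]; exact hC _ (ih p hp)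
  have hidx : ∀ p : X × ZMod l, ∀ i, ((shift act w ^ (i - p.2).val) p).2 = i := by
    intro p i
    rw [shift_pow_snd, ZMod.natCast_zmod_val]; ring
  obtain ⟨imax, hmax⟩ := Finite.exists_max t
  obtain ⟨imin, hmin⟩ := Finite.exists_min t
  obtain ⟨p, hp⟩ := hne
  have h0 := hpow (imax - p.2).val p hp
  have h0i := hidx p imax
  set p0 := (shift act w ^ (imax - p.2).val) p
  have hTE : ∀ k : ℕ, TE act w t S ((shift act w ^ k) p0) := by
    intro k
    induction k with
    | zero =>
      apply TE_of_TV act hc hS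
      refine ⟨hCS (by simpa using h0), fun q _ _ => ?_⟩
      simp only [pow_zero, Equiv.Perm.one_apply, h0i]
      exact hmax _
    | succ k ih =>
      rw [pow_succ', Equiv.Perm.mul_apply]
      exact TE_of_TV act hc hS (hcon _ (hpow k p0 h0) ih)
  have h1 := hTE (imin - p0.2).val
  have h1i := hidx p0 imin
  set p1 := (shift act w ^ (imin - p0.2).val) p0
  obtain ⟨q, hq, hqp, hqe⟩ := hdup p1 h1.1
  apply hqp
  apply sht_inj act w t hred ht hqe
  apply le_antisymm (h1.2 q hq hqe)
  cases hw : (w p1.2).2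
  · rw [sht_le_iff act hc hqe.symm]
    have : ter (pd w p1) = imin := by simp only [ter, pd, hw]; simpa using h1i
    rw [this]; exact hmin _
  · have : org (pd w p1) = imin := by simp only [org, pd, hw]; simpa using h1i
    unfold sht
    rw [this]; exact hmin _

open Classical in
theorem count_main (hred : ∀ i, w (i + 1) ≠ linv (w i)) (hc : Compat w t)
    (ht : Function.Injective t) {ι : Type} (cell : ι → Finset (X × ZMod l))
    (hinv : ∀ c, ∀ p ∈ cell c, shift act w p ∈ cell c) (hne : ∀ c, (cell c).Nonempty)
    (hdisj : ∀ c c' p, p ∈ cell c → p ∈ cell c' → c = c') (C : Finset ι)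
    (hdup : ∀ p ∈ C.biUnion cell, ∃ q ∈ C.biUnion cell, q ≠ p ∧ edg act w q = edg act w p) :
    ((C.biUnion cell).image Prod.fst).card + C.card ≤
      ((C.biUnion cell).image (edg act w)).card := by
  set S := C.biUnion cell with hSdef
  have hS : ∀ p ∈ S, shift act w p ∈ S := by
    intro p hp
    obtain ⟨c, hc, hp⟩ := Finset.mem_biUnion.1 hp
    exact Finset.mem_biUnion.2 ⟨c, hc, hinv c p hp⟩
  have hS' : ∀ p ∈ S, (shift act w).symm p ∈ S := by
    intro p hp
    obtain ⟨c, hc, hp⟩ := Finset.mem_biUnion.1 hp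
    refine Finset.mem_biUnion.2 ⟨c, hc, ?_⟩
    have himg : (cell c).image (shift act w) = cell c := by
      apply Finset.eq_of_subset_of_card_le
      · intro q hq
        obtain ⟨r, hr, rfl⟩ := Finset.mem_image.1 hq
        exact hinv c r hr
      · rw [Finset.card_image_of_injective _ (shift act w).injective]
    rw [← himg] at hp
    obtain ⟨r, hr, rfl⟩ := Finset.mem_image.1 hp
    simpa using hr
  have hv : ∀ v : X, ∃ p, v ∈ S.image Prod.fst → TV t S p ∧ p.1 = v := by
    intro v
    by_cases hv : v ∈ S.image Prod.fst
    · obtain ⟨p, hp, hpv⟩ := Finset.mem_image.1 hv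
      obtain ⟨m, hm, hmax⟩ := Finset.exists_max_image (S.filter (fun q => q.1 = v))
        (fun q => t q.2) ⟨p, Finset.mem_filter.2 ⟨hp, hpv⟩⟩
      rw [Finset.mem_filter] at hm
      refine ⟨m, fun _ => ⟨⟨hm.1, fun q hq hqm => hmax q (Finset.mem_filter.2 ⟨hq, ?_⟩)⟩, hm.2⟩⟩
      rw [hqm, hm.2]
    · obtain ⟨c⟩ : Nonempty (X × ZMod l) := ⟨(v, 0)⟩
      exact ⟨c, fun h => absurd h hv⟩
  choose pv hpv using hv
  have hcc : ∀ c : ι, ∃ p, c ∈ C → p ∈ cell c ∧ TE act w t S p ∧ ¬ TV t S (shift act w p) := by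
    intro c
    by_cases hcC : c ∈ C
    · obtain ⟨p, hp1, hp2⟩ := exists_forward_bad act hred hc ht hS hdup (cell c)
        (Finset.subset_biUnion_of_mem cell hcC) (hinv c) (hne c)
      exact ⟨p, fun _ => ⟨hp1, hp2⟩⟩
    · obtain ⟨p, hp⟩ := hne c
      exact ⟨p, fun h => absurd h hcC⟩
  choose pc hpc using hcc
  rw [← Finset.card_disjSum]
  let g : X ⊕ ι → X × ZMod l := Sum.elim (fun v => (shift act w).symm (pv v)) pc
  have hg : ∀ a ∈ (S.image Prod.fst).disjSum C, TE act w t S (g a) := by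
    rintro (v | c) ha
    · have hv := hpv v (Finset.inl_mem_disjSum.1 ha)
      apply TE_of_TV_shift act hc hS (hS' _ hv.1.1)
      simpa [g] using hv.1
    · exact (hpc c (Finset.inr_mem_disjSum.1 ha)).2.1
  apply Finset.card_le_card_of_injOn (fun a => edg act w (g a))
  · intro a ha
    exact Finset.mem_coe.2 (Finset.mem_image_of_mem _ (hg a ha).1)
  · intro a ha b hb hab
    have ha' := hg a ha
    have hb' := hg b hb
    have hgab : g a = g b := sht_inj act w t hred ht hab
      (le_antisymm (hb'.2 _ ha'.1 hab) (ha'.2 _ hb'.1 hab.symm))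
    rcases a with v | c <;> rcases b with v' | c'
    · have h1 := hpv v (Finset.inl_mem_disjSum.1 ha)
      have h2 := hpv v' (Finset.inl_mem_disjSum.1 hb)
      have : pv v = pv v' := (shift act w).symm.injective hgab
      rw [← h1.2, ← h2.2, this]
    · exfalso
      have h1 := hpv v (Finset.inl_mem_disjSum.1 ha)
      have h2 := hpc c' (Finset.inr_mem_disjSum.1 hb)
      apply h2.2.2
      have : pc c' = (shift act w).symm (pv v) := hgab.symm
      rw [this]; simpa using h1.1
    · exfalso
      have h1 := hpv v' (Finset.inl_mem_disjSum.1 hb)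
      have h2 := hpc c (Finset.inr_mem_disjSum.1 ha)
      apply h2.2.2
      have : pc c = (shift act w).symm (pv v') := hgab
      rw [this]; simpa using h1.1
    · have h1 := hpc c (Finset.inr_mem_disjSum.1 ha)
      have h2 := hpc c' (Finset.inr_mem_disjSum.1 hb)
      have : pc c = pc c' := hgab
      rw [hdisj c c' (pc c) h1.1 (this ▸ h2.1)]

/-! ### Chains -/

noncomputable def bd1 : (X × B →₀ ℝ) →ₗ[ℝ] (X →₀ ℝ) :=
  Finsupp.linearCombination ℝ
    (fun e : X × B => Finsupp.single (act e.2 e.1) (1 : ℝ) - Finsupp.single e.1 1)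

variable (w) in
noncomputable def strandChain (p : X × ZMod l) : X × B →₀ ℝ :=
  Finsupp.single (edg act w p) (lsgn (w p.2))

variable (w) in
noncomputable def cellChain (c : Finset (X × ZMod l)) : X × B →₀ ℝ :=
  ∑ p ∈ c, strandChain act w p

theorem bd1_strand (p : X × ZMod l) : bd1 act (strandChain act w p) =
    Finsupp.single (shift act w p).1 1 - Finsupp.single p.1 1 := by
  unfold bd1 strandChain
  rw [Finsupp.linearCombination_single]
  unfold edg lsgn
  cases h : (w p.2).2 <;> simp [shift, step, h]

open Classical in
theorem bd1_cell (c : Finset (X × ZMod l)) (hinv : ∀ p ∈ c, shift act w p ∈ c) :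
    bd1 act (cellChain act w c) = 0 := by
  unfold cellChain
  rw [map_sum]
  simp only [bd1_strand, Finset.sum_sub_distrib]
  rw [sub_eq_zero]
  have himg : c.image (shift act w) = c := by
    apply Finset.eq_of_subset_of_card_le
    · intro q hq
      obtain ⟨r, hr, rfl⟩ := Finset.mem_image.1 hq
      exact hinv r hr
    · rw [Finset.card_image_of_injective _ (shift act w).injective]
  conv_rhs => rw [← himg]
  rw [Finset.sum_image (fun a _ b _ h => (shift act w).injective h)]

theorem cellChain_apply_of_forall_ne (c : Finset (X × ZMod l)) (e : X × B)
    (h : ∀ p ∈ c, edg act w p ≠ e) : cellChain act w c e = 0 := by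
  unfold cellChain strandChain
  rw [Finsupp.finsetSum_apply]
  exact Finset.sum_eq_zero fun p hp => Finsupp.single_eq_of_ne (h p hp).symm

theorem cellChain_apply_of_unique (c : Finset (X × ZMod l)) (p : X × ZMod l) (hp : p ∈ c)
    (h : ∀ q ∈ c, q ≠ p → edg act w q ≠ edg act w p) :
    cellChain act w c (edg act w p) ≠ 0 := by
  unfold cellChain strandChain
  rw [Finsupp.finsetSum_apply, Finset.sum_eq_single p]
  · rw [Finsupp.single_eq_same]; unfold lsgn; split_ifs <;> norm_num
  · intro q hq hqp; exact Finsupp.single_eq_of_ne (h q hq hqp).symm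
  · exact fun h => absurd hp h

open Classical in
theorem graph_rank (V : Finset X) (E : Finset (X × B)) (hV : V.Nonempty)
    (hE : ∀ e ∈ E, e.1 ∈ V ∧ act e.2 e.1 ∈ V) :
    ∃ Z : Submodule ℝ (X × B →₀ ℝ), Module.Finite ℝ Z ∧ Z ≤ LinearMap.ker (bd1 act) ∧
      (∀ z ∈ Z, ∀ e, e ∉ E → z e = 0) ∧ E.card + 1 ≤ V.card + Module.finrank ℝ Z := by
  obtain ⟨v0, hv0⟩ := hV
  let J : (E → ℝ) →ₗ[ℝ] (X × B →₀ ℝ) :=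
    (Finsupp.lmapDomain ℝ ℝ (Subtype.val : E → X × B)) ∘ₗ
      (Finsupp.linearEquivFunOnFinite ℝ ℝ E).symm.toLinearMap
  have hJ : Function.Injective J := by
    apply (Finsupp.mapDomain_injective Subtype.val_injective).comp
    exact (Finsupp.linearEquivFunOnFinite ℝ ℝ E).symm.injective
  have hJs : ∀ f e, e ∉ E → J f e = 0 := by
    intro f e he
    simp only [J, LinearMap.comp_apply, Finsupp.lmapDomain_apply]
    apply Finsupp.mapDomain_of_notMem_range
    rintro ⟨x, rfl⟩
    exact he x.2
  let T : (E → ℝ) →ₗ[ℝ] (↥(V.erase v0) → ℝ) :=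
    { toFun := fun f v => bd1 act (J f) v.1
      map_add' := by intro f g; ext v; simp
      map_smul' := by intro c f; ext v; simp }
  have hT : E.card + 1 ≤ V.card + Module.finrank ℝ (LinearMap.ker T) := by
    have h1 := LinearMap.finrank_range_add_finrank_ker T
    have h2 : Module.finrank ℝ (LinearMap.range T) ≤
      Module.finrank ℝ (↥(V.erase v0) → ℝ) := Submodule.finrank_le _
    simp only [Module.finrank_fintype_fun_eq_card, Fintype.card_coe] at h1 h2
    have := Finset.card_erase_add_one hv0
    omega
  have hout : ∀ f x, x ∉ V → bd1 act (J f) x = 0 := by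
    intro f x hx
    unfold bd1
    rw [Finsupp.linearCombination_apply, Finsupp.sum, Finsupp.finsetSum_apply]
    apply Finset.sum_eq_zero
    intro e he
    have heE : e ∈ E := by
      by_contra hn
      exact (Finsupp.mem_support_iff.1 he) (hJs f e hn)
    have := hE e heE
    have h1 : act e.2 e.1 ≠ x := fun h => hx (h ▸ this.2)
    have h2 : e.1 ≠ x := fun h => hx (h ▸ this.1)
    simp [Finsupp.single_apply, h1, h2]
  have haug : ∀ z, Finsupp.linearCombination ℝ (fun _ : X => (1 : ℝ)) (bd1 act z) = 0 := by
    intro z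
    have : (Finsupp.linearCombination ℝ (fun _ : X => (1 : ℝ))) ∘ₗ bd1 act = 0 := by
      apply Finsupp.lhom_ext
      intro e b
      simp [bd1, Finsupp.linearCombination_single]
    exact DFunLike.congr_fun this z
  refine ⟨(LinearMap.ker T).map J, inferInstance, ?_, ?_, ?_⟩
  · rintro _ ⟨f, hf, rfl⟩
    rw [LinearMap.mem_ker]
    have h1 : ∀ x, x ≠ v0 → bd1 act (J f) x = 0 := by
      intro x hx
      by_cases hxV : x ∈ V
      · have : T f = 0 := hf
        exact congrFun this ⟨x, Finset.mem_erase.2 ⟨hx, hxV⟩⟩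
      · exact hout f x hxV
    have h2 : bd1 act (J f) = Finsupp.single v0 (bd1 act (J f) v0) := by
      ext x
      by_cases hx : x = v0
      · subst hx; simp
      · rw [h1 x hx, Finsupp.single_eq_of_ne hx]
    have h3 := haug (J f)
    rw [h2, Finsupp.linearCombination_single] at h3
    rw [h2]
    simpa using h3
  · rintro _ ⟨f, hf, rfl⟩ e he
    exact hJs f e he
  · rw [LinearEquiv.finrank_eq (Submodule.equivMapOfInjective J hJ _).symm]
    exact hT

open Classical in
theorem rank_main (hred : ∀ i, w (i + 1) ≠ linv (w i)) (hc : Compat w t)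
    (ht : Function.Injective t) {ι : Type} (cell : ι → Finset (X × ZMod l))
    (hinv : ∀ c, ∀ p ∈ cell c, shift act w p ∈ cell c) (hne : ∀ c, (cell c).Nonempty)
    (hdisj : ∀ c c' p, p ∈ cell c → p ∈ cell c' → c = c') (n : ℕ) : ∀ (C : Finset ι),
    C.card = n →
    (∀ f : ι → ℝ, ∑ c ∈ C, f c • cellChain act w (cell c) = 0 → ∀ c ∈ C, f c = 0) ∨
    ∃ Z : Submodule ℝ (X × B →₀ ℝ), Module.Finite ℝ Z ∧ Z ≤ LinearMap.ker (bd1 act) ∧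
      (∀ z ∈ Z, ∀ e, e ∉ (C.biUnion cell).image (edg act w) → z e = 0) ∧
      C.card + 1 ≤ Module.finrank ℝ Z := by
  induction n with
  | zero =>
    intro C hC
    left
    rw [Finset.card_eq_zero.1 hC]
    simp
  | succ n ih =>
    intro C hC
    by_cases hdup : ∀ p ∈ C.biUnion cell, ∃ q ∈ C.biUnion cell, q ≠ p ∧ edg act w q = edg act w p
    · right
      have h1 := count_main act hred hc ht cell hinv hne hdisj C hdup
      obtain ⟨c, hcC⟩ : C.Nonempty := Finset.card_pos.1 (by omega)
      obtain ⟨p, hp⟩ := hne c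
      obtain ⟨Z, hZ1, hZ2, hZ3, hZ4⟩ := graph_rank act ((C.biUnion cell).image Prod.fst)
        ((C.biUnion cell).image (edg act w))
        ⟨p.1, Finset.mem_image_of_mem _ (Finset.mem_biUnion.2 ⟨c, hcC, hp⟩)⟩ (by
          intro e he
          obtain ⟨q, hq, rfl⟩ := Finset.mem_image.1 he
          have hsq : shift act w q ∈ C.biUnion cell := by
            obtain ⟨c, hc, hq⟩ := Finset.mem_biUnion.1 hq
            exact Finset.mem_biUnion.2 ⟨c, hc, hinv c q hq⟩
          have e1 := congrArg Prod.fst (sst_eq act w q)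
          have e2 := congrArg Prod.fst (tst_eq act w q)
          simp only at e1 e2
          rw [← e2, ← e1]
          refine ⟨Finset.mem_image_of_mem _ ?_, Finset.mem_image_of_mem _ ?_⟩
          · unfold sst; split_ifs; exacts [hq, hsq]
          · unfold tst; split_ifs; exacts [hsq, hq])
      exact ⟨Z, hZ1, hZ2, hZ3, by omega⟩
    · push Not at hdup
      obtain ⟨p, hp, huniq⟩ := hdup
      obtain ⟨c, hcC, hpc⟩ := Finset.mem_biUnion.1 hp
      have hne0 : cellChain act w (cell c) (edg act w p) ≠ 0 :=
        cellChain_apply_of_unique act _ p hpc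
          (fun q hq => huniq q (Finset.mem_biUnion.2 ⟨c, hcC, hq⟩))
      have hz : ∀ c' ∈ C, c' ≠ c → ∀ q ∈ cell c', edg act w q ≠ edg act w p := by
        intro c' hc' hcc q hq
        apply huniq q (Finset.mem_biUnion.2 ⟨c', hc', hq⟩)
        rintro rfl
        exact hcc (hdisj _ _ _ hq hpc)
      have hcard : (C.erase c).card = n := by rw [Finset.card_erase_of_mem hcC, hC]; rfl
      rcases ih (C.erase c) hcard with h | ⟨Z, hZ1, hZ2, hZ3, hZ4⟩
      · left
        intro f hf
        rw [← Finset.add_sum_erase _ _ hcC] at hf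
        have h0 : f c = 0 := by
          have := DFunLike.congr_fun hf (edg act w p)
          rw [Finsupp.add_apply, Finsupp.finsetSum_apply, Finset.sum_eq_zero] at this
          · simpa [hne0] using this
          · intro c' hc'
            rw [Finset.mem_erase] at hc'
            rw [Finsupp.smul_apply, cellChain_apply_of_forall_ne act _ _ (hz c' hc'.2 hc'.1)]
            simp
        rw [h0, zero_smul, zero_add] at hf
        intro c' hc'
        by_cases hcc : c' = c
        · rw [hcc, h0]
        · exact h f hf c' (Finset.mem_erase.2 ⟨hcc, hc'⟩)
      · right
        have hnotE : edg act w p ∉ ((C.erase c).biUnion cell).image (edg act w) := by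
          intro h
          obtain ⟨q, hq, hqe⟩ := Finset.mem_image.1 h
          obtain ⟨c', hc', hq⟩ := Finset.mem_biUnion.1 hq
          rw [Finset.mem_erase] at hc'
          exact hz c' hc'.2 hc'.1 q hq hqe
        have hnotZ : cellChain act w (cell c) ∉ Z := fun h => hne0 (hZ3 _ h _ hnotE)
        have hne1 : cellChain act w (cell c) ≠ 0 := fun h => hne0 (by rw [h]; rfl)
        refine ⟨Z ⊔ Submodule.span ℝ {cellChain act w (cell c)}, inferInstance, ?_, ?_, ?_⟩
        · apply sup_le hZ2
          rw [Submodule.span_singleton_le_iff_mem]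
          exact bd1_cell act _ (hinv c)
        · intro z hz e he
          obtain ⟨a, ha, b, hb, rfl⟩ := Submodule.mem_sup.1 hz
          obtain ⟨k, rfl⟩ := Submodule.mem_span_singleton.1 hb
          rw [Finsupp.add_apply, Finsupp.smul_apply, hZ3 a ha e, cellChain_apply_of_forall_ne]
          · simp
          · rintro q hq rfl
            exact he (Finset.mem_image_of_mem _ (Finset.mem_biUnion.2 ⟨c, hcC, hq⟩))
          · intro h
            apply he
            obtain ⟨q, hq, rfl⟩ := Finset.mem_image.1 h
            obtain ⟨c', hc', hq⟩ := Finset.mem_biUnion.1 hq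
            exact Finset.mem_image_of_mem _
              (Finset.mem_biUnion.2 ⟨c', Finset.mem_of_mem_erase hc', hq⟩)
        · have h1 := Submodule.finrank_sup_add_finrank_inf_eq Z
            (Submodule.span ℝ {cellChain act w (cell c)})
          have h2 : Z ⊓ Submodule.span ℝ {cellChain act w (cell c)} = ⊥ := by
            rw [← disjoint_iff]
            exact (Submodule.disjoint_span_singleton' hne1).2 hnotZ
          rw [h2, finrank_bot, finrank_span_singleton hne1] at h1
          omega

end Count
end RaagProof

namespace RaagProof

/-! ### A Heisenberg lift -/

/-- The real Heisenberg group. -/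
@[ext] structure Heis where
  a : ℝ
  b : ℝ
  c : ℝ

namespace Heis
instance : Mul Heis := ⟨fun x y => ⟨x.a + y.a, x.b + y.b, x.c + y.c + x.a * y.b⟩⟩
instance : One Heis := ⟨⟨0, 0, 0⟩⟩
instance : Inv Heis := ⟨fun x => ⟨-x.a, -x.b, -x.c + x.a * x.b⟩⟩
@[simp] theorem mul_a (x y : Heis) : (x * y).a = x.a + y.a := rfl
@[simp] theorem mul_b (x y : Heis) : (x * y).b = x.b + y.b := rfl
@[simp] theorem mul_c (x y : Heis) : (x * y).c = x.c + y.c + x.a * y.b := rfl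
@[simp] theorem one_a : (1 : Heis).a = 0 := rfl
@[simp] theorem one_b : (1 : Heis).b = 0 := rfl
@[simp] theorem one_c : (1 : Heis).c = 0 := rfl
@[simp] theorem inv_a (x : Heis) : (x⁻¹).a = -x.a := rfl
@[simp] theorem inv_b (x : Heis) : (x⁻¹).b = -x.b := rfl
@[simp] theorem inv_c (x : Heis) : (x⁻¹).c = -x.c + x.a * x.b := rfl

instance : Group Heis :=
  Group.ofLeftAxioms
    (by intro x y z; ext <;> simp <;> ring)
    (by intro x; ext <;> simp)
    (by intro x; ext <;> simp)

def homA : Heis →* Multiplicative ℝ where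
  toFun x := Multiplicative.ofAdd x.a
  map_one' := rfl
  map_mul' _ _ := rfl
def homB : Heis →* Multiplicative ℝ where
  toFun x := Multiplicative.ofAdd x.b
  map_one' := rfl
  map_mul' _ _ := rfl
end Heis

theorem heis_lift_free {K : Type} [Group K] [IsFreeGroup K] (a b : K →* Multiplicative ℝ) :
    ∃ h : K → ℝ, ∀ x y, h (x * y) = h x + h y + (a x).toAdd * (b y).toAdd := by
  let Φ : K →* Heis := IsFreeGroup.lift
    (fun k => ⟨(a (IsFreeGroup.of k)).toAdd, (b (IsFreeGroup.of k)).toAdd, 0⟩)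
  have hA : Heis.homA.comp Φ = a := by
    apply IsFreeGroup.ext_hom
    intro k
    simp [Φ, Heis.homA]
  have hB : Heis.homB.comp Φ = b := by
    apply IsFreeGroup.ext_hom
    intro k
    simp [Φ, Heis.homB]
  refine ⟨fun x => (Φ x).c, fun x y => ?_⟩
  change (Φ (x * y)).c = _
  rw [map_mul, Heis.mul_c, ← hA, ← hB]
  rfl

open Classical in
theorem heis_lift {B : Type} (K : Subgroup (FreeGroup B)) (a b : FreeGroup B → ℝ)
    (ha : ∀ x ∈ K, ∀ y ∈ K, a (x * y) = a x + a y) (hb : ∀ x ∈ K, ∀ y ∈ K, b (x * y) = b x + b y) :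
    ∃ h : FreeGroup B → ℝ, ∀ x ∈ K, ∀ y ∈ K, h (x * y) = h x + h y + a x * b y := by
  have key : ∀ a : FreeGroup B → ℝ, (∀ x ∈ K, ∀ y ∈ K, a (x * y) = a x + a y) →
      ∃ a' : K →* Multiplicative ℝ, ∀ x : K, (a' x).toAdd = a x := by
    intro a ha
    refine ⟨MonoidHom.mk' (fun x => Multiplicative.ofAdd (a x)) ?_, fun x => rfl⟩
    intro x y
    rw [← ofAdd_add, ← ha x x.2 y y.2]; rfl
  obtain ⟨a', ha'⟩ := key a ha
  obtain ⟨b', hb'⟩ := key b hb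
  obtain ⟨h, hh⟩ := heis_lift_free a' b'
  refine ⟨fun x => if hx : x ∈ K then h ⟨x, hx⟩ else 0, fun x hx y hy => ?_⟩
  simp only [hx, hy, K.mul_mem hx hy, dif_pos]
  have := hh ⟨x, hx⟩ ⟨y, hy⟩
  rw [ha', hb'] at this
  exact this

section HeisProps
variable {G : Type} [Group G] {K : Subgroup G} {a b h : G → ℝ}

theorem add_one_eq (ha : ∀ x ∈ K, ∀ y ∈ K, a (x * y) = a x + a y) : a 1 = 0 := by
  have := ha 1 K.one_mem 1 K.one_mem
  rw [one_mul] at this; linarith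

theorem heis_one (ha : ∀ x ∈ K, ∀ y ∈ K, a (x * y) = a x + a y)
    (hh : ∀ x ∈ K, ∀ y ∈ K, h (x * y) = h x + h y + a x * b y) : h 1 = 0 := by
  have := hh 1 K.one_mem 1 K.one_mem
  rw [one_mul, add_one_eq ha] at this; linarith

theorem heis_conj (ha : ∀ x ∈ K, ∀ y ∈ K, a (x * y) = a x + a y)
    (hh : ∀ x ∈ K, ∀ y ∈ K, h (x * y) = h x + h y + a x * b y)
    {k ρ : G} (hk : k ∈ K) (hρ : ρ ∈ K) (h1 : a ρ = 0) (h2 : b ρ = 0) :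
    h (k * ρ * k⁻¹) = h ρ := by
  have e1 := hh (k * ρ) (K.mul_mem hk hρ) k⁻¹ (K.inv_mem hk)
  have e2 := hh k hk ρ hρ
  have e3 := hh k hk k⁻¹ (K.inv_mem hk)
  rw [mul_inv_cancel, heis_one ha hh] at e3
  rw [ha k hk ρ hρ] at e1
  rw [h1] at e1; rw [h2] at e2
  linarith

theorem heis_comm (ha : ∀ x ∈ K, ∀ y ∈ K, a (x * y) = a x + a y)
    (hh : ∀ x ∈ K, ∀ y ∈ K, h (x * y) = h x + h y + a x * b y)
    {x y : G} (hx : x ∈ K) (hy : y ∈ K) :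
    h (x * y * x⁻¹ * y⁻¹) = a x * b y - a y * b x := by
  have hc : x * y * x⁻¹ * y⁻¹ ∈ K :=
    K.mul_mem (K.mul_mem (K.mul_mem hx hy) (K.inv_mem hx)) (K.inv_mem hy)
  have e0 : x * y * x⁻¹ * y⁻¹ * (y * x) = x * y := by group
  have e1 := hh _ hc _ (K.mul_mem hy hx)
  have e2 := ha _ hc _ (K.mul_mem hy hx)
  rw [e0] at e1 e2
  rw [ha x hx y hy, ha y hy x hx] at e2
  rw [hh x hx y hy, hh y hy x hx] at e1
  have : a (x * y * x⁻¹ * y⁻¹) = 0 := by linarith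
  rw [this] at e1
  linarith
end HeisProps

/-! ### Chains of paths -/
section Chain
set_option linter.unusedSectionVars false
variable {B X : Type} [MulAction (FreeGroup B) X]

def fact (b : B) : Equiv.Perm X := (MulAction.toPerm (FreeGroup.of b : FreeGroup B)⁻¹)

theorem fact_apply (b : B) (x : X) : fact b x = (FreeGroup.of b)⁻¹ • x := rfl

noncomputable def Ehom : FreeGroup B →* Equiv.Perm (X × (X × B →₀ ℝ)) :=
  FreeGroup.lift (fun b =>
    { toFun := fun p => (FreeGroup.of b • p.1, p.2 - Finsupp.single (FreeGroup.of b • p.1, b) 1)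
      invFun := fun p => ((FreeGroup.of b)⁻¹ • p.1, p.2 + Finsupp.single (p.1, b) 1)
      left_inv := by intro p; simp
      right_inv := by intro p; simp })

noncomputable def q (g : FreeGroup B) (x : X) : X × B →₀ ℝ := (Ehom g (x, 0)).2

theorem Ehom_apply (g : FreeGroup B) : ∀ (x : X) (m : X × B →₀ ℝ),
    Ehom g (x, m) = (g • x, m + q g x) := by
  unfold q
  induction g using FreeGroup.induction_on with
  | C1 => simp
  | of b => intro x m; simp [Ehom, sub_eq_add_neg]
  | inv_of b _ => intro x m; simp [Ehom, Equiv.Perm.inv_def, Equiv.symm]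
  | mul g h ihg ihh =>
    intro x m
    rw [map_mul, Equiv.Perm.mul_apply, Equiv.Perm.mul_apply, ihh x m, ihh x 0, ihg, ihg _ (0 + _)]
    simp [mul_smul, add_assoc]

theorem q_mul (g h : FreeGroup B) (x : X) : q (g * h) x = q h x + q g (h • x) := by
  conv_lhs => unfold q
  rw [map_mul, Equiv.Perm.mul_apply, Ehom_apply, Ehom_apply]; simp

theorem q_one (x : X) : q (1 : FreeGroup B) x = 0 := by simp [q]

theorem q_of (b : B) (x : X) :
    q (FreeGroup.of b) x = - Finsupp.single (FreeGroup.of b • x, b) 1 := by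
  simp [q, Ehom]

theorem q_of_inv (b : B) (x : X) :
    q (FreeGroup.of b)⁻¹ x = Finsupp.single (x, b) 1 := by
  simp [q, Ehom, Equiv.Perm.inv_def, Equiv.symm]

theorem q_inv (g : FreeGroup B) (x : X) : q g⁻¹ (g • x) = - q g x := by
  have := q_mul g⁻¹ g x
  rw [inv_mul_cancel, q_one] at this
  rw [eq_neg_iff_add_eq_zero, this, add_comm]

theorem q_inv_fix (g : FreeGroup B) (x : X) (h : g • x = x) : q g⁻¹ x = - q g x := by
  have := q_inv g x
  rwa [h] at this

theorem q_conj_fix (k ρ : FreeGroup B) (x : X) (hk : k • x = x) (hρ : ρ • x = x) :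
    q (k * ρ * k⁻¹) x = q ρ x := by
  have hk' : k⁻¹ • x = x := by rw [inv_smul_eq_iff, hk]
  rw [q_mul, q_mul, hk', hρ, q_inv_fix k x hk]; abel

theorem q_conj (g ρ : FreeGroup B) (x : X) (hρ : ρ • g⁻¹ • x = g⁻¹ • x) :
    q (g * ρ * g⁻¹) x = q ρ (g⁻¹ • x) := by
  rw [q_mul, q_mul, hρ]
  have := q_inv g (g⁻¹ • x)
  rw [smul_inv_smul] at this
  rw [this]; abel

/-- loops span the cycles -/
theorem cycles_span (x0 : X) (htr : ∀ x : X, ∃ g : FreeGroup B, g • x0 = x)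
    (z : X × B →₀ ℝ) (hz : bd1 fact z = 0) :
    z ∈ Submodule.span ℝ ((fun k : FreeGroup B => q k x0) '' {k | k • x0 = x0}) := by
  choose γ hγ using htr
  let el : X × B → FreeGroup B := fun e => (γ (fact e.2 e.1))⁻¹ * ((FreeGroup.of e.2)⁻¹ * γ e.1)
  let L := Finsupp.linearCombination ℝ (fun e : X × B => q (el e) x0)
  let T := Finsupp.linearCombination ℝ (fun x : X => q (γ x) x0)
  have hel : ∀ e, el e • x0 = x0 := by
    intro e
    simp only [el, mul_smul, hγ]
    rw [inv_smul_eq_iff, hγ, fact_apply]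
  have hLT : L = LinearMap.id - T ∘ₗ bd1 fact := by
    apply Finsupp.lhom_ext
    intro e c
    simp only [L, T, bd1, LinearMap.sub_apply, LinearMap.comp_apply, LinearMap.id_apply,
      Finsupp.linearCombination_single, map_smul, map_sub]
    simp only [el, q_mul, hγ, q_of_inv, mul_smul]
    have := q_inv (γ (fact e.2 e.1)) x0
    rw [hγ] at this
    rw [← fact_apply, this]
    have h1 : Finsupp.single e c = c • Finsupp.single (e.1, e.2) (1 : ℝ) := by simp
    rw [h1]
    simp only [one_smul, smul_add, smul_sub, smul_neg]
    abel
  have : z = L z := by rw [hLT]; simp [hz]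
  rw [this]
  simp only [L, Finsupp.linearCombination_apply, Finsupp.sum]
  apply Submodule.sum_mem
  intro e _
  apply Submodule.smul_mem
  exact Submodule.subset_span ⟨el e, hel e, rfl⟩

theorem q_mem_cycles (g : FreeGroup B) : ∀ x : X,
    bd1 fact (q g x) = Finsupp.single (g • x) 1 - Finsupp.single x 1 := by
  induction g using FreeGroup.induction_on with
  | C1 => intro x; simp [q_one]
  | of b => intro x; rw [q_of]; simp [bd1, fact_apply, Finsupp.linearCombination_single]
  | inv_of b _ => intro x; rw [q_of_inv]; simp [bd1, fact_apply, Finsupp.linearCombination_single]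
  | mul g h ihg ihh => intro x; rw [q_mul, map_add, ihg, ihh, mul_smul]; abel

end Chain
end RaagProof

namespace RaagProof

/-! ### Orbits of a permutation -/
section Orb
variable {Y : Type} (σ : Equiv.Perm Y) (M : ℕ) (p : Y)

open Classical in
noncomputable def orb : Finset Y := (Finset.range M).image (fun i => (σ ^ i) p)

variable {σ M p}

theorem pow_mul_fix (hp : (σ ^ M) p = p) (j : ℕ) : (σ ^ (M * j)) p = p := by
  induction j with
  | zero => simp
  | succ j ih => rw [Nat.mul_succ, pow_add, Equiv.Perm.mul_apply, hp, ih]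

theorem mem_orb (hM : 0 < M) (hp : (σ ^ M) p = p) {x : Y} :
    x ∈ orb σ M p ↔ ∃ i : ℕ, (σ ^ i) p = x := by
  unfold orb
  simp only [Finset.mem_image, Finset.mem_range]
  constructor
  · rintro ⟨i, _, h⟩; exact ⟨i, h⟩
  · rintro ⟨i, h⟩
    refine ⟨i % M, Nat.mod_lt _ hM, ?_⟩
    rw [← h]
    conv_rhs => rw [← Nat.mod_add_div i M]
    rw [pow_add, Equiv.Perm.mul_apply, pow_mul_fix hp]

theorem orb_inv (hM : 0 < M) (hp : (σ ^ M) p = p) {x : Y} (hx : x ∈ orb σ M p) :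
    σ x ∈ orb σ M p := by
  obtain ⟨i, rfl⟩ := (mem_orb hM hp).1 hx
  exact (mem_orb hM hp).2 ⟨i + 1, by rw [pow_succ', Equiv.Perm.mul_apply]⟩

theorem orb_self (hM : 0 < M) (hp : (σ ^ M) p = p) : p ∈ orb σ M p :=
  (mem_orb hM hp).2 ⟨0, by simp⟩

theorem orb_back (hM : 0 < M) (hp : (σ ^ M) p = p) {x : Y} (hx : x ∈ orb σ M p) :
    ∃ i : ℕ, (σ ^ i) x = p := by
  obtain ⟨i, rfl⟩ := (mem_orb hM hp).1 hx
  refine ⟨M * i - i, ?_⟩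
  rw [← Equiv.Perm.mul_apply, ← pow_add, Nat.sub_add_cancel (Nat.le_mul_of_pos_left i hM),
    pow_mul_fix hp]

theorem orb_disj (hM : 0 < M) {p p' : Y} (hp : (σ ^ M) p = p) (hp' : (σ ^ M) p' = p') {x : Y}
    (hx : x ∈ orb σ M p) (hx' : x ∈ orb σ M p') : orb σ M p = orb σ M p' := by
  have key : ∀ {p p' : Y}, (σ ^ M) p = p → (σ ^ M) p' = p' → x ∈ orb σ M p → x ∈ orb σ M p' →
      orb σ M p ⊆ orb σ M p' := by
    intro p p' hp hp' hx hx' y hy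
    obtain ⟨i, hi⟩ := orb_back hM hp hx
    obtain ⟨j, hj⟩ := (mem_orb hM hp').1 hx'
    obtain ⟨k, hk⟩ := (mem_orb hM hp).1 hy
    refine (mem_orb hM hp').2 ⟨k + (i + j), ?_⟩
    rw [pow_add, pow_add, Equiv.Perm.mul_apply, Equiv.Perm.mul_apply, hj, hi, hk]
  exact Finset.Subset.antisymm (key hp hp' hx hx') (key hp' hp hx' hx)

theorem orb_sum (hM : 0 < M) (hp : (σ ^ M) p = p) {A : Type} [AddCommMonoid A] :
    ∃ m : ℕ, 0 < m ∧ ∀ f : Y → A, ∑ i ∈ Finset.range M, f ((σ ^ i) p) = m • ∑ x ∈ orb σ M p, f x := by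
  classical
  have hex : ∃ d, 0 < d ∧ (σ ^ d) p = p := ⟨M, hM, hp⟩
  set d := Nat.find hex with hd
  obtain ⟨hd0, hdp⟩ := Nat.find_spec hex
  have hmin : ∀ k, 0 < k → (σ ^ k) p = p → d ≤ k := fun k h1 h2 => Nat.find_min' hex ⟨h1, h2⟩
  have hdvd : M % d = 0 := by
    by_contra hne
    have h1 : (σ ^ (M % d)) p = p := by
      have h2 := hp
      rw [← Nat.mod_add_div M d, pow_add, Equiv.Perm.mul_apply, pow_mul_fix hdp] at h2
      exact h2
    exact absurd (hmin _ (Nat.pos_of_ne_zero hne) h1) (not_le.2 (Nat.mod_lt _ hd0))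
  obtain ⟨m, hm⟩ := Nat.dvd_of_mod_eq_zero hdvd
  have horb : orb σ M p = orb σ d p := by
    ext x; rw [mem_orb hM hp, mem_orb hd0 hdp]
  have hinj : Set.InjOn (fun i => (σ ^ i) p) (Finset.range d : Set ℕ) := by
    have key : ∀ i j, i ≤ j → j < d → (σ ^ i) p = (σ ^ j) p → i = j := by
      intro i j hij hj h
      obtain ⟨k, rfl⟩ := Nat.exists_eq_add_of_le hij
      rw [pow_add, Equiv.Perm.mul_apply] at h
      have h1 := (σ ^ i).injective h
      rcases Nat.eq_zero_or_pos k with h2 | h2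
      · omega
      · have := hmin k h2 h1.symm; omega
    intro i hi j hj h
    simp only [Finset.coe_range, Set.mem_Iio] at hi hj
    rcases le_total i j with h1 | h1
    · exact key i j h1 hj h
    · exact (key j i h1 hi h.symm).symm
  refine ⟨m, Nat.pos_of_ne_zero (by rintro rfl; omega), fun f => ?_⟩
  rw [horb]
  have h1 : ∑ x ∈ orb σ d p, f x = ∑ i ∈ Finset.range d, f ((σ ^ i) p) := by
    unfold orb
    rw [Finset.sum_image hinj]
  rw [h1, hm]
  clear hm h1
  induction m with
  | zero => simp
  | succ m ih =>
    rw [Nat.mul_succ, Finset.sum_range_add, ih, succ_nsmul]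
    congr 1
    apply Finset.sum_congr rfl
    intro i _
    rw [add_comm, pow_add, Equiv.Perm.mul_apply, pow_mul_fix hdp]
end Orb

/-! ### words -/
section Word
variable {B : Type}

def pprod (W : ℕ → B × Bool) : ℕ → FreeGroup B
  | 0 => 1
  | k + 1 => pprod W k * FreeGroup.mk [W k]

theorem pprod_add (W : ℕ → B × Bool) (a b : ℕ) :
    pprod W (a + b) = pprod W a * pprod (fun i => W (a + i)) b := by
  induction b with
  | zero => simp [pprod]
  | succ b ih => rw [← add_assoc, pprod, ih, pprod, mul_assoc]

theorem pprod_period (W : ℕ → B × Bool) (l : ℕ) (h : ∀ i, W (i + l) = W i) (m : ℕ) :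
    pprod W (l * m) = pprod W l ^ m := by
  induction m with
  | zero => simp [pprod]
  | succ m ih =>
    rw [Nat.mul_succ, add_comm, pprod_add, pow_succ', ← ih]
    congr 2
    funext i
    rw [add_comm, h]

theorem pprod_list (L : List (B × Bool)) (W : ℕ → B × Bool)
    (h : ∀ i (hi : i < L.length), W i = L[i]) : pprod W L.length = FreeGroup.mk L := by
  induction L using List.reverseRecOn with
  | nil => rfl
  | append_singleton L a ih =>
    rw [List.length_append, List.length_singleton, pprod, ih, ← FreeGroup.mul_mk]
    · congr 2
      have := h L.length (by simp)
      rw [this]; simp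
    · intro i hi
      rw [h i (by simp; omega), List.getElem_append_left hi]

/-- Every nontrivial element is conjugate to a power of a cyclically reduced primitive word. -/
theorem exists_word (r : FreeGroup B) (hr : r ≠ 1) :
    ∃ (l : ℕ) (_ : NeZero l) (w : ZMod l → B × Bool) (N : ℕ) (c : FreeGroup B),
      (∀ i, w (i + 1) ≠ linv (w i)) ∧ (∀ k : ZMod l, (∀ i, w (i + k) = w i) → k = 0) ∧ 0 < N ∧
      r = c * (pprod (fun i => w i) l) ^ N * c⁻¹ := by
  classical
  set L := FreeGroup.reduceCyclically r.toWord with hL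
  set c : FreeGroup B := FreeGroup.mk (FreeGroup.reduceCyclically.conjugator r.toWord)
  have hrc : r = c * FreeGroup.mk L * c⁻¹ := by
    rw [FreeGroup.inv_mk, FreeGroup.mul_mk, FreeGroup.mul_mk,
      FreeGroup.reduceCyclically.conj_conjugator_reduceCyclically, FreeGroup.mk_toWord]
  have hcr : FreeGroup.IsCyclicallyReduced L :=
    FreeGroup.reduceCyclically.isCyclicallyReduced FreeGroup.isReduced_toWord
  have hLne : L ≠ [] := by
    intro h
    rw [h] at hrc
    apply hr
    rw [hrc]
    change c * 1 * c⁻¹ = 1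
    simp
  clear_value L c
  set m := L.length with hm
  have hm0 : 0 < m := List.length_pos_iff.2 hLne
  let W : ℕ → B × Bool := fun i => L[i % m]'(Nat.mod_lt _ hm0)
  have hWm : ∀ i, W (i + m) = W i := by intro i; simp [W]
  have hWred : ∀ i, W (i + 1) ≠ linv (W i) := by
    intro i h
    have h1 : (W i).1 = (W (i + 1)).1 := by rw [h]; simp [linv]
    have h2 : (W i).2 ≠ (W (i + 1)).2 := by rw [h]; simp [linv]
    apply h2
    by_cases hi : i % m + 1 < m
    · have e : (i + 1) % m = i % m + 1 := by
        rw [Nat.add_mod, Nat.mod_eq_of_lt (show 1 < m by omega), Nat.mod_eq_of_lt hi]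
      have e1 : W (i + 1) = L[i % m + 1] := by simp only [W, e]
      rw [e1] at h1 ⊢
      exact List.isChain_iff_getElem.1 hcr.1 (i % m) hi h1
    · have hlt := Nat.mod_lt i hm0
      have hi' : i % m = m - 1 := by omega
      have e : (i + 1) % m = 0 := by
        rw [← Nat.mod_add_mod, hi', Nat.sub_add_cancel hm0, Nat.mod_self]
      have e1 : W (i + 1) = L[0] := by simp only [W, e]
      have e2 : W i = L[m - 1] := by simp only [W, hi']
      rw [e1, e2] at h1 ⊢
      refine hcr.2 _ ?_ _ ?_ h1
      · rw [List.getLast?_eq_getElem?]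
        simp [← hm, hm0]
      · rw [List.head?_eq_getElem?]
        simp [← hm, hm0]
  have hex : ∃ l, 0 < l ∧ ∀ i, W (i + l) = W i := ⟨m, hm0, hWm⟩
  set l := Nat.find hex with hl
  obtain ⟨hl0, hlp⟩ := Nat.find_spec hex
  have hmin : ∀ k, 0 < k → (∀ i, W (i + k) = W i) → l ≤ k :=
    fun k h1 h2 => Nat.find_min' hex ⟨h1, h2⟩
  rw [← hl] at hl0 hlp
  have hlpk : ∀ k i, W (i + l * k) = W i := by
    intro k
    induction k with
    | zero => simp
    | succ k ih => intro i; rw [Nat.mul_succ, ← add_assoc, hlp, ih]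
  have hWmod : ∀ i, W (i % l) = W i := by
    intro i
    conv_rhs => rw [← Nat.mod_add_div i l]
    rw [hlpk]
  have hdvd : m % l = 0 := by
    by_contra hne
    refine absurd (hmin _ (Nat.pos_of_ne_zero hne) ?_) (not_le.2 (Nat.mod_lt _ hl0))
    intro i
    rw [← hWm i, ← hlpk (m / l), add_assoc, Nat.mod_add_div]
  obtain ⟨N, hN⟩ := Nat.dvd_of_mod_eq_zero hdvd
  clear_value l
  have : NeZero l := ⟨hl0.ne'⟩
  let w : ZMod l → B × Bool := fun i => W i.val
  have hw : ∀ i : ℕ, w i = W i := by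
    intro i
    simp only [w, ZMod.val_natCast, hWmod]
  refine ⟨l, inferInstance, w, N, c, ?_, ?_, Nat.pos_of_ne_zero (by rintro rfl; omega), ?_⟩
  · intro i
    obtain ⟨j, rfl⟩ := ZMod.natCast_zmod_surjective i
    have : ((j : ZMod l) + 1) = ((j + 1 : ℕ) : ZMod l) := by push_cast; rfl
    rw [this, hw, hw]
    exact hWred j
  · intro k hk
    by_contra hne
    have hkv : 0 < k.val := Nat.pos_of_ne_zero (by rwa [Ne, ZMod.val_eq_zero])
    refine absurd (hmin _ hkv ?_) (not_le.2 (ZMod.val_lt k))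
    intro i
    have := hk i
    rw [← ZMod.natCast_zmod_val k, ← Nat.cast_add, hw, hw] at this
    exact this
  · have e1 : (fun i : ℕ => w i) = W := funext hw
    rw [e1, ← pprod_period W l hlp, ← hN, pprod_list]
    · exact hrc
    · intro i hi
      simp only [W]
      congr 1
      exact Nat.mod_eq_of_lt hi
end Word

section Cells
set_option linter.unusedSectionVars false
variable {B X : Type} [MulAction (FreeGroup B) X] {l : ℕ} [NeZero l] (w : ZMod l → B × Bool)

theorem step_fact (a : B × Bool) (x : X) : step fact a x = (FreeGroup.mk [a])⁻¹ • x := by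
  obtain ⟨b, e⟩ := a
  cases e
  · have : (FreeGroup.mk [(b, false)])⁻¹ = FreeGroup.of b := by simp [FreeGroup.inv_mk, FreeGroup.of, FreeGroup.invRev]
    rw [this]
    simp [step, Equiv.Perm.inv_def, fact]
  · rfl

theorem shift_pow_fact (k : ℕ) (y : X) :
    (shift fact w ^ k) (y, 0) = ((pprod (fun i => w i) k)⁻¹ • y, (k : ZMod l)) := by
  induction k with
  | zero => simp [pprod]
  | succ k ih =>
    rw [pow_succ', Equiv.Perm.mul_apply, ih]
    refine Prod.ext ?_ ?_
    · rw [shift_fst, step_fact, pprod, mul_inv_rev, mul_smul]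
    · rw [shift_snd]; push_cast; rfl

theorem q_letter (p : X × ZMod l) : q (FreeGroup.mk [w p.2])⁻¹ p.1 = strandChain fact w p := by
  unfold strandChain edg lsgn
  rw [shift_fst, step_fact]
  rcases hw : w p.2 with ⟨b, e⟩
  cases e
  · have : (FreeGroup.mk [(b, false)])⁻¹ = FreeGroup.of b := by simp [FreeGroup.inv_mk, FreeGroup.of, FreeGroup.invRev]
    rw [this, q_of]
    simp
  · have : FreeGroup.mk [(b, true)] = FreeGroup.of b := rfl
    rw [this, q_of_inv]; simp

theorem q_pprod (k : ℕ) (y : X) : q (pprod (fun i => w i) k)⁻¹ y =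
    ∑ i ∈ Finset.range k, strandChain fact w ((shift fact w ^ i) (y, 0)) := by
  induction k with
  | zero => simp [pprod, q_one]
  | succ k ih =>
    rw [Finset.sum_range_succ, ← ih, pprod, mul_inv_rev, q_mul, ← q_letter, shift_pow_fact]

theorem pprod_zmod (m : ℕ) : pprod (fun i => w i) (l * m) = pprod (fun i => w i) l ^ m :=
  pprod_period _ _ (by intro i; simp) m

theorem shift_fix (N : ℕ) (y : X) (hy : (pprod (fun i => w i) l ^ N) • y = y) :
    (shift fact w ^ (l * N)) (y, (0 : ZMod l)) = (y, 0) := by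
  rw [shift_pow_fact, pprod_zmod]
  refine Prod.ext ?_ (by simp)
  simp only
  rw [inv_smul_eq_iff, hy]

theorem q_cell (N : ℕ) (hN : 0 < N) (y : X) (hy : (pprod (fun i => w i) l ^ N) • y = y) :
    ∃ m : ℝ, m ≠ 0 ∧ q (pprod (fun i => w i) l ^ N) y =
      m • cellChain fact w (orb (shift fact w) (l * N) (y, 0)) := by
  have hM : 0 < l * N := Nat.mul_pos (Nat.pos_of_ne_zero (NeZero.ne l)) hN
  obtain ⟨m, hm, hs⟩ := orb_sum (A := X × B →₀ ℝ) hM (shift_fix w N y hy)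
  refine ⟨-m, by simpa using hm.ne', ?_⟩
  have h1 := q_inv_fix _ _ hy
  rw [← pprod_zmod, q_pprod, hs] at h1
  rw [← pprod_zmod, ← neg_eq_iff_eq_neg.2 h1]
  unfold cellChain
  rw [neg_smul, Nat.cast_smul_eq_nsmul]

/-- Two conjugates with the same orbit are conjugate in the stabilizer. -/
theorem same_orb (N : ℕ) (hN : 0 < N) (x0 : X) (g g' : FreeGroup B)
    (hg : (pprod (fun i => w i) l ^ N) • g⁻¹ • x0 = g⁻¹ • x0)
    (hg' : (pprod (fun i => w i) l ^ N) • g'⁻¹ • x0 = g'⁻¹ • x0)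
    (h : orb (shift fact w) (l * N) (g⁻¹ • x0, 0) = orb (shift fact w) (l * N) (g'⁻¹ • x0, 0)) :
    ∃ k : FreeGroup B, k • x0 = x0 ∧
      g' * (pprod (fun i => w i) l ^ N) * g'⁻¹ = k * (g * (pprod (fun i => w i) l ^ N) * g⁻¹) * k⁻¹ := by
  have hM : 0 < l * N := Nat.mul_pos (Nat.pos_of_ne_zero (NeZero.ne l)) hN
  have h1 := orb_self hM (shift_fix w N _ hg')
  rw [← h] at h1
  obtain ⟨i, hi⟩ := (mem_orb hM (shift_fix w N _ hg)).1 h1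
  rw [shift_pow_fact] at hi
  obtain ⟨hi1, hi2⟩ := Prod.ext_iff.1 hi
  simp only at hi1 hi2
  obtain ⟨j, rfl⟩ := (ZMod.natCast_eq_zero_iff _ _).1 hi2
  rw [pprod_zmod] at hi1
  set s := pprod (fun i => w i) l
  refine ⟨g' * (s ^ j)⁻¹ * g⁻¹, ?_, ?_⟩
  · rw [mul_smul, mul_smul, hi1, smul_inv_smul]
  · have : s ^ N = (s ^ j)⁻¹ * s ^ N * s ^ j := by
      rw [mul_assoc, ← pow_add, add_comm, pow_add, inv_mul_cancel_left]
    conv_lhs => rw [this]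
    group
end Cells
end RaagProof

namespace RaagProof

theorem exists_finset_conj {F : Type} [Group F] (R x : F)
    (hx : x ∈ Subgroup.normalClosure {R}) :
    ∃ G : Finset F, x ∈ Subgroup.closure ((fun g => g * R * g⁻¹) '' (G : Set F)) := by
  classical
  have hmono : ∀ {G G' : Finset F}, G ⊆ G' →
      Subgroup.closure ((fun g => g * R * g⁻¹) '' (G : Set F)) ≤
      Subgroup.closure ((fun g => g * R * g⁻¹) '' (G' : Set F)) := fun h =>
    Subgroup.closure_mono (Set.image_mono (by exact_mod_cast h))
  unfold Subgroup.normalClosure at hx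
  induction hx using Subgroup.closure_induction with
  | mem y hy =>
    obtain ⟨_, rfl, hc⟩ := Group.mem_conjugatesOfSet_iff.1 hy
    obtain ⟨c, hc⟩ := isConj_iff.1 hc
    exact ⟨{c}, Subgroup.subset_closure ⟨c, by simp, hc⟩⟩
  | one => exact ⟨∅, Subgroup.one_mem _⟩
  | mul y z _ _ hy hz =>
    obtain ⟨G, hG⟩ := hy
    obtain ⟨G', hG'⟩ := hz
    exact ⟨G ∪ G', Subgroup.mul_mem _ (hmono Finset.subset_union_left hG)
      (hmono Finset.subset_union_right hG')⟩
  | inv y _ hy =>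
    obtain ⟨G, hG⟩ := hy
    exact ⟨G, Subgroup.inv_mem _ hG⟩

theorem q_comm_fix {B X : Type} [MulAction (FreeGroup B) X] (x y : FreeGroup B) (x0 : X)
    (hx : x • x0 = x0) (hy : y • x0 = x0) : q (x * y * x⁻¹ * y⁻¹) x0 = 0 := by
  have hx' : x⁻¹ • x0 = x0 := by rw [inv_smul_eq_iff, hx]
  have hy' : y⁻¹ • x0 = x0 := by rw [inv_smul_eq_iff, hy]
  rw [q_mul, q_mul, q_mul, hy', hx', hy, q_inv_fix x x0 hx, q_inv_fix y x0 hy]; abel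

theorem core {B : Type} {l : ℕ} [NeZero l] (w : ZMod l → B × Bool)
    (hred : ∀ i, w (i + 1) ≠ linv (w i)) (hprim : ∀ k : ZMod l, (∀ i, w (i + k) = w i) → k = 0)
    (N : ℕ) (hN : 0 < N) (n : ℕ) (hn : 3 ≤ n) (x : ZMod n → FreeGroup B)
    (K' : Subgroup (FreeGroup B)) (a : ZMod n → FreeGroup B → ℝ)
    (ha : ∀ i, ∀ g ∈ K', ∀ h ∈ K', a i (g * h) = a i g + a i h) (hx : ∀ i, x i ∈ K')
    (hax : ∀ i j, a i (x j) = if i = j then 1 else 0)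
    (hNK : ∀ ρ ∈ Subgroup.normalClosure {pprod (fun i => w i) l ^ N}, ρ ∈ K' ∧ ∀ i, a i ρ = 0)
    (hcomm : ∀ i, x i * x (i + 1) * (x i)⁻¹ * (x (i + 1))⁻¹ ∈
      Subgroup.normalClosure {pprod (fun i => w i) l ^ N}) : False := by
  classical
  have : NeZero n := ⟨by omega⟩
  obtain ⟨t, htc, hti⟩ := exists_stacking w hred hprim
  set R := pprod (fun i => w i) l ^ N with hR
  choose G0 hG0 using fun i => exists_finset_conj R _ (hcomm i)
  let G : Finset (FreeGroup B) := Finset.univ.biUnion G0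
  let ρ : FreeGroup B → FreeGroup B := fun g => g * R * g⁻¹
  let P : Subgroup (FreeGroup B) := Subgroup.closure (ρ '' (G : Set (FreeGroup B)))
  have hGP : ∀ i, x i * x (i + 1) * (x i)⁻¹ * (x (i + 1))⁻¹ ∈ P := by
    intro i
    refine Subgroup.closure_mono (Set.image_mono ?_) (hG0 i)
    exact_mod_cast Finset.subset_biUnion_of_mem G0 (Finset.mem_univ i)
  have hρN : ∀ g, ρ g ∈ Subgroup.normalClosure {R} := by
    intro g
    exact Subgroup.normalClosure_normal.conj_mem _
      (Subgroup.subset_normalClosure (Set.mem_singleton R)) g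
  have hPN : P ≤ Subgroup.normalClosure {R} := by
    refine (Subgroup.closure_le _).2 ?_
    rintro _ ⟨g, _, rfl⟩
    exact hρN g
  let K : Subgroup (FreeGroup B) :=
    Subgroup.closure (Set.range x ∪ ρ '' (G : Set (FreeGroup B)))
  have hPK : P ≤ K := Subgroup.closure_mono Set.subset_union_right
  have hxK : ∀ i, x i ∈ K := fun i => Subgroup.subset_closure (Or.inl ⟨i, rfl⟩)
  have hρK : ∀ g ∈ G, ρ g ∈ K := fun g hg => Subgroup.subset_closure (Or.inr ⟨g, hg, rfl⟩)
  have hρP : ∀ g ∈ G, ρ g ∈ P := fun g hg => Subgroup.subset_closure ⟨g, hg, rfl⟩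
  have hKK' : K ≤ K' := by
    refine (Subgroup.closure_le _).2 ?_
    rintro _ (⟨i, rfl⟩ | ⟨g, _, rfl⟩)
    · exact hx i
    · exact (hNK _ (hρN g)).1
  have haK : ∀ i, ∀ g ∈ K, ∀ h ∈ K, a i (g * h) = a i g + a i h :=
    fun i g hg h hh => ha i g (hKK' hg) h (hKK' hh)
  choose h hh using fun i => heis_lift K (a i) (a (i + 1)) (haK i) (haK (i + 1))
  have haP : ∀ y ∈ P, ∀ i, a i y = 0 := fun y hy i => (hNK y (hPN hy)).2 i
  -- the covering space
  let X := FreeGroup B ⧸ K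
  let x0 : X := ((1 : FreeGroup B) : FreeGroup B ⧸ K)
  have hst : ∀ k : FreeGroup B, k • x0 = x0 ↔ k ∈ K := by
    intro k
    rw [← MulAction.mem_stabilizer_iff, MulAction.stabilizer_quotient]
  have htr : ∀ y : X, ∃ g : FreeGroup B, g • x0 = y := by
    intro y
    exact MulAction.exists_smul_eq (FreeGroup B) x0 y
  have hfix : ∀ g ∈ G, R • g⁻¹ • x0 = g⁻¹ • x0 := by
    intro g hg
    have := (hst _).2 (hρK g hg)
    simp only [ρ, mul_smul] at this
    rw [← inv_smul_eq_iff.2 this.symm]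
  have hM : 0 < l * N := Nat.mul_pos (Nat.pos_of_ne_zero (NeZero.ne l)) hN
  let ob : FreeGroup B → Finset (X × ZMod l) :=
    fun g => orb (shift fact w) (l * N) (g⁻¹ • x0, 0)
  let ι := {c : Finset (X × ZMod l) // c ∈ G.image ob}
  have hrep : ∀ c : ι, ∃ g ∈ G, ob g = c.1 := fun c => Finset.mem_image.1 c.2
  choose rep hrepG hrepo using hrep
  have hqρ : ∀ g ∈ G, q (ρ g) x0 = q R (g⁻¹ • x0) := fun g hg => q_conj g R x0 (hfix g hg)
  have hcell : ∀ c : ι, ∃ m : ℝ, m ≠ 0 ∧ q (ρ (rep c)) x0 = m • cellChain fact w c.1 := by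
    intro c
    rw [hqρ _ (hrepG c), ← hrepo c]
    exact q_cell w N hN _ (hfix _ (hrepG c))
  choose m hm0 hm using hcell
  -- expansion of elements of `P`
  have hexp : ∀ y ∈ P, ∃ c : ι → ℝ, q y x0 = ∑ i, c i • q (ρ (rep i)) x0 ∧
      ∀ e, h e y = ∑ i, c i * h e (ρ (rep i)) := by
    intro y hy
    induction hy using Subgroup.closure_induction with
    | mem y hy =>
      obtain ⟨g, hg, rfl⟩ := hy
      have hg : g ∈ G := hg
      let c : ι := ⟨ob g, Finset.mem_image_of_mem _ hg⟩
      obtain ⟨k, hk, hkc⟩ := same_orb w N hN x0 (rep c) g (hfix _ (hrepG c)) (hfix g hg) (hrepo c)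
      have hkc : ρ g = k * ρ (rep c) * k⁻¹ := hkc
      have hρc := hρP _ (hrepG c)
      refine ⟨Pi.single c 1, ?_, fun e => ?_⟩
      · rw [Finset.sum_eq_single c]
        · rw [Pi.single_eq_same, one_smul, hkc]
          exact q_conj_fix _ _ _ hk ((hst _).2 (hPK hρc))
        · intro d _ hd; rw [Pi.single_eq_of_ne hd, zero_smul]
        · simp
      · rw [Finset.sum_eq_single c]
        · rw [Pi.single_eq_same, one_mul, hkc]
          exact heis_conj (haK e) (hh e) ((hst _).1 hk) (hPK hρc) (haP _ hρc _) (haP _ hρc _)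
        · intro d _ hd; rw [Pi.single_eq_of_ne hd, zero_mul]
        · simp
    | one =>
      refine ⟨0, by simp [q_one], fun e => ?_⟩
      rw [heis_one (haK e) (hh e)]; simp
    | mul y z hy hz ihy ihz =>
      obtain ⟨c, hc1, hc2⟩ := ihy
      obtain ⟨d, hd1, hd2⟩ := ihz
      refine ⟨c + d, ?_, fun e => ?_⟩
      · rw [q_mul, (hst z).2 (hPK hz), hc1, hd1, add_comm, ← Finset.sum_add_distrib]
        simp only [Pi.add_apply, add_smul]
      · rw [hh e y (hPK hy) z (hPK hz), haP y hy e, hc2, hd2, zero_mul, add_zero,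
          ← Finset.sum_add_distrib]
        simp only [Pi.add_apply, add_mul]
    | inv y hy ihy =>
      obtain ⟨c, hc1, hc2⟩ := ihy
      refine ⟨-c, ?_, fun e => ?_⟩
      · rw [q_inv_fix y x0 ((hst y).2 (hPK hy)), hc1, ← Finset.sum_neg_distrib]
        simp only [Pi.neg_apply, neg_smul]
      · have h1 := hh e y (hPK hy) y⁻¹ (K.inv_mem (hPK hy))
        rw [mul_inv_cancel, heis_one (haK e) (hh e), haP y hy e, zero_mul, add_zero] at h1
        have h2 : h e y⁻¹ = - h e y := by linarith
        rw [h2, hc2, ← Finset.sum_neg_distrib]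
        simp only [Pi.neg_apply, neg_mul]
  let D : (ι → ℝ) →ₗ[ℝ] (X × B →₀ ℝ) := Fintype.linearCombination ℝ (fun i => q (ρ (rep i)) x0)
  have hD : ∀ c, D c = ∑ i, c i • q (ρ (rep i)) x0 := fun c => rfl
  let Λ : (ι → ℝ) →ₗ[ℝ] (ZMod n → ℝ) :=
    LinearMap.pi (fun e => Fintype.linearCombination ℝ (fun i => h e (ρ (rep i))))
  have hΛ : ∀ c e, Λ c e = ∑ i, c i * h e (ρ (rep i)) := fun c e => rfl
  have hval : ∀ e i, h e (x i * x (i + 1) * (x i)⁻¹ * (x (i + 1))⁻¹) = if e = i then 1 else 0 := by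
    intro e i
    rw [heis_comm (haK e) (hh e) (hxK i) (hxK (i + 1)), hax, hax, hax, hax]
    have h11 : (1 : ZMod n) ≠ 0 := by
      intro h
      have := (ZMod.natCast_eq_zero_iff 1 n).1 (by exact_mod_cast h)
      exact absurd (Nat.le_of_dvd one_pos this) (by omega)
    have h22 : (2 : ZMod n) ≠ 0 := by
      intro h
      have := (ZMod.natCast_eq_zero_iff 2 n).1 (by exact_mod_cast h)
      exact absurd (Nat.le_of_dvd two_pos this) (by omega)
    by_cases hei : e = i
    · subst hei
      have : e ≠ e + 1 := by
        intro h; apply h11; exact left_eq_add.1 h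
      simp [this]
    · have : ¬ (e = i + 1 ∧ e + 1 = i) := by
        rintro ⟨h1, h2⟩
        apply h22
        rw [h1] at h2
        have : i + 2 = i := by rw [← one_add_one_eq_two, ← add_assoc, h2]
        exact add_eq_left.1 this
      have hne : e + 1 ≠ i + 1 := fun h => hei (add_right_cancel h)
      by_cases h1 : e = i + 1
      · have h2 : e + 1 ≠ i := fun h => this ⟨h1, h⟩
        simp [hei, h2]
      · simp [hei, h1]
  have hker : n ≤ Module.finrank ℝ (LinearMap.ker D) := by
    have htop : (LinearMap.ker D).map Λ = ⊤ := by
      rw [eq_top_iff, ← (Pi.basisFun ℝ (ZMod n)).span_eq, Submodule.span_le]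
      rintro _ ⟨i, rfl⟩
      obtain ⟨c, hc1, hc2⟩ := hexp _ (hGP i)
      refine ⟨c, ?_, ?_⟩
      · change D c = 0
        rw [hD, ← hc1]
        exact q_comm_fix _ _ _ ((hst _).2 (hxK i)) ((hst _).2 (hxK (i + 1)))
      · funext e
        rw [hΛ, ← hc2, hval, Pi.basisFun_apply, Pi.single_apply]
    have h1 := Submodule.finrank_map_le Λ (LinearMap.ker D)
    rw [htop, finrank_top, Module.finrank_fintype_fun_eq_card, ZMod.card] at h1
    exact h1
  -- the cycle space
  let T : Submodule ℝ (X × B →₀ ℝ) :=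
    LinearMap.range D ⊔ Submodule.span ℝ (Set.range (fun i => q (x i) x0))
  have hKT : ∀ k ∈ K, q k x0 ∈ T := by
    intro k hk
    induction hk using Subgroup.closure_induction with
    | mem k hk =>
      rcases hk with ⟨i, rfl⟩ | ⟨g, hg, rfl⟩
      · exact Submodule.mem_sup_right (Submodule.subset_span ⟨i, rfl⟩)
      · obtain ⟨c, hc, _⟩ := hexp _ (hρP g hg)
        exact Submodule.mem_sup_left ⟨c, by rw [hD, hc]⟩
    | one => rw [q_one]; exact Submodule.zero_mem _
    | mul y z hy hz ihy ihz =>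
      rw [q_mul, (hst z).2 hz]; exact Submodule.add_mem _ ihz ihy
    | inv y hy ihy => rw [q_inv_fix y x0 ((hst y).2 hy)]; exact Submodule.neg_mem _ ihy
  have hZT : LinearMap.ker (bd1 (fact : B → Equiv.Perm X)) ≤ T := by
    intro z hz
    refine (Submodule.span_le.2 ?_) (cycles_span x0 htr z hz)
    rintro _ ⟨k, hk, rfl⟩
    exact hKT k ((hst k).1 hk)
  have hfinS : Module.Finite ℝ (Submodule.span ℝ (Set.range (fun i => q (x i) x0))) :=
    Module.Finite.span_of_finite ℝ (Set.finite_range _)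
  have hTle : Module.finrank ℝ T ≤ Module.finrank ℝ (LinearMap.range D) + n := by
    refine (Submodule.finrank_add_le_finrank_add_finrank _ _).trans ?_
    gcongr
    refine (finrank_range_le_card (R := ℝ) (fun i => q (x i) x0)).trans ?_
    rw [ZMod.card]
  have hrn := LinearMap.finrank_range_add_finrank_ker D
  rw [Module.finrank_fintype_fun_eq_card] at hrn
  rcases rank_main (fact : B → Equiv.Perm X) hred htc hti (fun c : ι => c.1)
    (by
      intro c p hp
      rw [← hrepo c] at hp ⊢
      exact orb_inv hM (shift_fix w N _ (hfix _ (hrepG c))) hp)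
    (by
      intro c
      rw [← hrepo c]
      exact ⟨_, orb_self hM (shift_fix w N _ (hfix _ (hrepG c)))⟩)
    (by
      intro c c' p hp hp'
      apply Subtype.ext
      rw [← hrepo c] at hp ⊢
      rw [← hrepo c'] at hp' ⊢
      exact orb_disj hM (shift_fix w N _ (hfix _ (hrepG c)))
        (shift_fix w N _ (hfix _ (hrepG c'))) hp hp')
    (Fintype.card ι) Finset.univ rfl with hinj | ⟨Z, hZ1, hZ2, _, hZ4⟩
  · have : LinearMap.ker D = ⊥ := by
      rw [LinearMap.ker_eq_bot']
      intro c hc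
      rw [hD] at hc
      have := hinj (fun i => c i * m i) (by
        rw [← hc]
        apply Finset.sum_congr rfl
        intro i _
        rw [hm, smul_smul])
      funext i
      exact (mul_eq_zero.1 (this i (Finset.mem_univ i))).resolve_right (hm0 i)
    rw [this, finrank_bot] at hker
    omega
  · have := Submodule.finrank_mono (hZ2.trans hZT)
    rw [Finset.card_univ] at hZ4
    omega

end RaagProof

namespace RaagProof

theorem mk_eq_one_iff' {B : Type} (rels : Set (FreeGroup B)) (g : FreeGroup B) :
    PresentedGroup.mk rels g = 1 ↔ g ∈ Subgroup.normalClosure rels :=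
  QuotientGroup.eq_one_iff g

theorem not_embeds_of_ne_one {V : Type} {Γ : SimpleGraph V} (hΓ : ¬ Γ.IsAcyclic) {B : Type}
    (r : FreeGroup B) (hr : r ≠ 1) (φ : PresentedGroup (raagRels Γ) →* PresentedGroup {r})
    (hφ : Function.Injective φ) : False := by
  classical
  rw [SimpleGraph.isAcyclic_iff_free_cycleGraph] at hΓ
  push Not at hΓ
  obtain ⟨n, hn, hfree⟩ := hΓ
  obtain ⟨f⟩ := hfree
  obtain ⟨k, rfl⟩ := Nat.exists_eq_add_of_le' hn
  let F : ZMod (k + 3) → V := fun i => f i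
  have hF : Function.Injective F := f.injective
  have hadj : ∀ i, Γ.Adj (F i) (F (i + 1)) := by
    intro i
    apply f.toHom.map_rel
    exact SimpleGraph.cycleGraph_adj.2 (Or.inr (add_sub_cancel_left (G := ZMod (k + 3)) i 1))
  obtain ⟨l, _, w, N, c, hred, hprim, hN, hrc⟩ := exists_word r hr
  set R := pprod (fun i => w i) l ^ N
  have hRr : Subgroup.normalClosure {R} = Subgroup.normalClosure {r} := by
    apply le_antisymm
    · refine Subgroup.normalClosure_le_normal ?_
      rw [Set.singleton_subset_iff]
      have := Subgroup.normalClosure_normal.conj_mem r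
        (Subgroup.subset_normalClosure (Set.mem_singleton r)) c⁻¹
      have e : c⁻¹ * r * c⁻¹⁻¹ = R := by rw [hrc]; group
      rwa [e] at this
    · refine Subgroup.normalClosure_le_normal ?_
      rw [Set.singleton_subset_iff]
      have := Subgroup.normalClosure_normal.conj_mem R
        (Subgroup.subset_normalClosure (Set.mem_singleton R)) c
      rwa [← hrc] at this
  let A : ZMod (k + 3) → RAAG Γ →* Multiplicative ℝ := fun i =>
    raagLift (fun v => if v = F i then Multiplicative.ofAdd 1 else 1)
      (fun u v _ => mul_comm _ _)
  have hA : ∀ i j, A i (PresentedGroup.of (F j)) =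
      if F j = F i then Multiplicative.ofAdd 1 else 1 := by
    intro i j
    exact raagLift_gen _ _ _
  let π := PresentedGroup.mk ({r} : Set (FreeGroup B))
  let K' : Subgroup (FreeGroup B) := φ.range.comap π
  let a : ZMod (k + 3) → FreeGroup B → ℝ := fun i g =>
    if h : ∃ y, φ y = π g then (A i h.choose).toAdd else 0
  have ha : ∀ i g y, φ y = π g → a i g = (A i y).toAdd := by
    intro i g y hy
    have hex : ∃ y, φ y = π g := ⟨y, hy⟩
    have : hex.choose = y := hφ (hex.choose_spec.trans hy.symm)
    simp only [a, dif_pos hex, this]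
  have hlift : ∀ i, ∃ g, π g = φ (PresentedGroup.of (F i)) := fun i =>
    PresentedGroup.mk_surjective _ _
  choose x hx using hlift
  refine core w hred hprim N hN (k + 3) (by omega) x K' a ?_ ?_ ?_ ?_ ?_
  · rintro i g ⟨y, hy⟩ g' ⟨y', hy'⟩
    rw [ha i g y hy, ha i g' y' hy', ha i (g * g') (y * y') (by rw [map_mul, map_mul, hy, hy']),
      map_mul, toAdd_mul]
  · intro i; exact ⟨_, (hx i).symm⟩
  · intro i j
    rw [ha i (x j) _ (hx j).symm, hA]
    by_cases h : i = j
    · subst h; simp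
    · rw [if_neg (fun h' => h (hF h').symm), if_neg h]; rfl
  · intro ρ hρ
    rw [hRr] at hρ
    have h1 : π ρ = 1 := (mk_eq_one_iff' _ _).2 hρ
    refine ⟨⟨1, by rw [h1, map_one]⟩, fun i => ?_⟩
    rw [ha i ρ 1 (by rw [h1, map_one]), map_one]; rfl
  · intro i
    rw [hRr, ← mk_eq_one_iff']
    change π _ = 1
    rw [map_mul, map_mul, map_mul, map_inv, map_inv, hx, hx, ← map_mul, ← map_inv, ← map_inv,
      ← map_mul, ← map_mul, ← map_one φ]
    congr 1
    exact (mk_eq_one_iff' _ _).2 (Subgroup.subset_normalClosure ⟨F i, F (i + 1), hadj i, rfl⟩)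

theorem acyclic_of_OR {V : Type} {Γ : SimpleGraph V} (B : Type) (r : FreeGroup B)
    (φ : PresentedGroup (raagRels Γ) →* PresentedGroup {r}) (hφ : Function.Injective φ) :
    Γ.IsAcyclic := by
  by_contra hΓ
  by_cases hr : r = 1
  · subst hr
    let θ : PresentedGroup ({1} : Set (FreeGroup B)) →*
        PresentedGroup ({FreeGroup.of none} : Set (FreeGroup (Option B))) :=
      PresentedGroup.toGroup (f := fun b => PresentedGroup.of (some b))
        (by rintro _ rfl; exact map_one _)
    let θ' : PresentedGroup ({FreeGroup.of none} : Set (FreeGroup (Option B))) →*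
        PresentedGroup ({1} : Set (FreeGroup B)) :=
      PresentedGroup.toGroup (f := fun b => b.elim 1 PresentedGroup.of)
        (by rintro _ rfl; simp)
    have hθ : θ'.comp θ = MonoidHom.id _ := by
      apply PresentedGroup.ext
      intro b
      simp [θ, θ']
    have hinj : Function.Injective θ := by
      intro y z h
      have := congrArg θ' h
      rw [← MonoidHom.comp_apply, ← MonoidHom.comp_apply, hθ] at this
      exact this
    exact not_embeds_of_ne_one hΓ (FreeGroup.of none) (FreeGroup.of_ne_one _) (θ.comp φ)
      (hinj.comp hφ)
  · exact not_embeds_of_ne_one hΓ r hr φ hφ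

end RaagProof

/-- For a simple graph `Γ` on a finite vertex set, the right-angled Artin group `A(Γ)`
embeds into some one-relator group if and only if `Γ` is acyclic (a forest). -/
theorem raag_embeds_oneRelator_iff_isAcyclic (V : Type) [Fintype V] (Γ : SimpleGraph V) :
    (∃ (B : Type) (r : FreeGroup B) (φ : PresentedGroup (raagRels Γ) →* PresentedGroup {r}),
      Function.Injective φ) ↔ Γ.IsAcyclic := by
  constructor
  · rintro ⟨B, r, φ, hφ⟩
    exact RaagProof.acyclic_of_OR B r φ hφ
  · intro h
    exact RaagProof.OR_of_acyclic h
end
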